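/- Let N ≥ 2, 1 < q ≤ 1* := N/(N-1), α > 0, a, b > 0. If the supremum D_α := sup { ‖u‖_1 + α ‖u‖_q^q : u ∈ BV(ℝ^N), ‖u‖_{TV}^a + ‖u‖_1^b = 1 } is attained by u₀ ∈ BV(ℝ^N), then there exist λ₀ ∈ ℝ\{0}, R > 0, x₀ ∈ ℝ^N with u₀ = λ₀ χ_{B_R(x₀)}, and λ₀ satisfies (|λ₀| R^{N-1} ω_{N-1})^a + (|λ₀| R^N ω_{N-1}/N)^b = 1. -/

import Mathlib

open MeasureTheory Real Filter Topology

noncomputable section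

abbrev Euc (N : ℕ) := EuclideanSpace ℝ (Fin N)

/-- The set of values `∫ u div ψ` over admissible test vector fields. -/
def TVSet (N : ℕ) (u : Euc N → ℝ) : Set ℝ :=
  { r | ∃ ψ : Euc N → Euc N, ContDiff ℝ 1 ψ ∧ HasCompactSupport ψ ∧
      (∀ x, ‖ψ x‖ ≤ 1) ∧
      r = ∫ x, u x * (∑ i, fderiv ℝ (fun y => ψ y i) x (EuclideanSpace.single i 1)) }

/-- Total variation of `u`. -/
def tv (N : ℕ) (u : Euc N → ℝ) : ℝ := sSup (TVSet N u)

/-- `u` is a function of bounded variation on `ℝ^N`. -/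
def MemBV (N : ℕ) (u : Euc N → ℝ) : Prop :=
  Integrable u ∧ BddAbove (TVSet N u)

/-- The `L¹` norm. -/
def nrm1 (N : ℕ) (u : Euc N → ℝ) : ℝ := (eLpNorm u 1 volume).toReal

/-- The `L^q` norm, `q` a real exponent. -/
def nrmq (N : ℕ) (q : ℝ) (u : Euc N → ℝ) : ℝ :=
  (eLpNorm u (ENNReal.ofReal q) volume).toReal

/-- Surface area `ω_{N-1}` of the unit sphere in `ℝ^N`, as `N` times the
volume of the unit ball. -/
def omegaS (N : ℕ) : ℝ := N * (volume (Metric.ball (0 : Euc N) 1)).toReal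

/-- The Gagliardo–Nirenberg ratio `‖u‖_q^q / (‖u‖_1^{q-(q-1)N} ‖u‖_{TV}^{(q-1)N})`. -/
def ratioQ (N : ℕ) (q : ℝ) (u : Euc N → ℝ) : ℝ :=
  nrmq N q u ^ q / (nrm1 N u ^ (q - (q-1)*N) * tv N u ^ ((q-1)*(N:ℝ)))

/-- The best constant `E_q` on `BV(ℝ^N)`. -/
def EqSup (N : ℕ) (q : ℝ) : ℝ :=
  sSup { r | ∃ u : Euc N → ℝ, MemBV N u ∧ u ≠ 0 ∧ r = ratioQ N q u }

/-- divergence -/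
def dv (N : ℕ) (ψ : Euc N → Euc N) (x : Euc N) : ℝ :=
  ∑ i, fderiv ℝ (fun y => ψ y i) x (EuclideanSpace.single i 1)

lemma dv_eq {N : ℕ} {ψ : Euc N → Euc N} {x : Euc N} (h : DifferentiableAt ℝ ψ x) :
    dv N ψ x = ∑ i, (fderiv ℝ ψ x (EuclideanSpace.single i 1)) i := by
  unfold dv
  refine Finset.sum_congr rfl fun i _ => ?_
  have h1 : HasFDerivAt (fun y => ψ y i)
      ((EuclideanSpace.proj i : Euc N →L[ℝ] ℝ).comp (fderiv ℝ ψ x)) x :=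
    (EuclideanSpace.proj i : Euc N →L[ℝ] ℝ).hasFDerivAt.comp x h.hasFDerivAt
  rw [h1.fderiv]; rfl

lemma clm_eq_sum {N : ℕ} (L : Euc N →L[ℝ] ℝ) (v : Euc N) :
    L v = ∑ i, L (EuclideanSpace.single i 1) * v i := by
  conv_lhs => rw [← (EuclideanSpace.basisFun (Fin N) ℝ).sum_repr v]
  rw [map_sum]
  refine Finset.sum_congr rfl fun i _ => ?_
  simp [mul_comm]

lemma dv_smul {N : ℕ} {f : Euc N → ℝ} {ψ : Euc N → Euc N} {x : Euc N}
    (hf : DifferentiableAt ℝ f x) (h : DifferentiableAt ℝ ψ x) :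
    dv N (fun y => f y • ψ y) x = f x * dv N ψ x + fderiv ℝ f x (ψ x) := by
  change dv N (f • ψ) x = _
  rw [dv_eq (hf.smul h), dv_eq h, clm_eq_sum (fderiv ℝ f x) (ψ x), Finset.mul_sum,
    ← Finset.sum_add_distrib]
  refine Finset.sum_congr rfl fun i _ => ?_
  rw [(hf.hasFDerivAt.smul h.hasFDerivAt).fderiv]
  simp

lemma dv_add {N : ℕ} {φ ψ : Euc N → Euc N} {x : Euc N}
    (hf : DifferentiableAt ℝ φ x) (h : DifferentiableAt ℝ ψ x) :
    dv N (fun y => φ y + ψ y) x = dv N φ x + dv N ψ x := by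
  change dv N (φ + ψ) x = _
  rw [dv_eq (hf.add h), dv_eq h, dv_eq hf, ← Finset.sum_add_distrib]
  refine Finset.sum_congr rfl fun i _ => ?_
  rw [(hf.hasFDerivAt.add h.hasFDerivAt).fderiv]
  simp

lemma dv_continuous {N : ℕ} {ψ : Euc N → Euc N} (h : ContDiff ℝ 1 ψ) :
    Continuous (dv N ψ) := by
  have : dv N ψ = fun x => ∑ i, (fderiv ℝ ψ x (EuclideanSpace.single i 1)) i :=
    funext fun x => dv_eq (h.differentiable one_ne_zero x)
  rw [this]
  have h1 : Continuous (fderiv ℝ ψ) := h.continuous_fderiv one_ne_zero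
  refine continuous_finsetSum _ fun i _ => ?_
  exact (EuclideanSpace.proj i : Euc N →L[ℝ] ℝ).continuous.comp (h1.clm_apply continuous_const)

lemma dv_supp {N : ℕ} {ψ : Euc N → Euc N} (h : ContDiff ℝ 1 ψ) (hc : HasCompactSupport ψ) :
    HasCompactSupport (dv N ψ) := by
  have : dv N ψ = fun x => ∑ i, (fderiv ℝ ψ x (EuclideanSpace.single i 1)) i :=
    funext fun x => dv_eq (h.differentiable one_ne_zero x)
  rw [this]
  exact (hc.fderiv (𝕜 := ℝ)).comp_left
    (g := fun L : Euc N →L[ℝ] Euc N => ∑ i, (L (EuclideanSpace.single i 1)) i) (by simp)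

lemma dv_bdd {N : ℕ} {ψ : Euc N → Euc N} (h : ContDiff ℝ 1 ψ) (hc : HasCompactSupport ψ) :
    ∃ C, ∀ x, ‖dv N ψ x‖ ≤ C :=
  (dv_continuous h).bounded_above_of_compact_support (dv_supp h hc)

lemma dv_int {N : ℕ} {ψ : Euc N → Euc N} (h : ContDiff ℝ 1 ψ) (hc : HasCompactSupport ψ) :
    Integrable (dv N ψ) := (dv_continuous h).integrable_of_hasCompactSupport (dv_supp h hc)

lemma mul_dv_int {N : ℕ} {u : Euc N → ℝ} (hu : Integrable u) {ψ : Euc N → Euc N}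
    (h : ContDiff ℝ 1 ψ) (hc : HasCompactSupport ψ) :
    Integrable (fun x => u x * dv N ψ x) := by
  obtain ⟨C, hC⟩ := dv_bdd h hc
  exact hu.mul_bdd (c := C) (dv_continuous h).aestronglyMeasurable (ae_of_all _ hC)

lemma integral_dv {N : ℕ} {ψ : Euc N → Euc N} (h : ContDiff ℝ 1 ψ) (hc : HasCompactSupport ψ) :
    ∫ x, dv N ψ x = 0 := by
  have hi : ∀ i, ContDiff ℝ 1 (fun y => ψ y i) := fun i =>
    (EuclideanSpace.proj i : Euc N →L[ℝ] ℝ).contDiff.comp h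
  have hci : ∀ i, HasCompactSupport (fun y => ψ y i) := fun i =>
    hc.comp_left (g := fun v : Euc N => v i) (by simp)
  have hIntg : ∀ i : Fin N, Integrable (fun x => fderiv ℝ (fun y => ψ y i) x
      (EuclideanSpace.single i 1)) := fun i => by
    refine Continuous.integrable_of_hasCompactSupport
      (((hi i).continuous_fderiv one_ne_zero).clm_apply continuous_const) ?_
    exact ((hci i).fderiv (𝕜 := ℝ)).comp_left
      (g := fun L : Euc N →L[ℝ] ℝ => L (EuclideanSpace.single i 1)) (by simp)
  unfold dv
  rw [integral_finsetSum _ fun i _ => hIntg i]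
  refine Finset.sum_eq_zero fun i _ => ?_
  have := integral_mul_fderiv_eq_neg_fderiv_mul_of_integrable (μ := volume)
    (f := fun _ : Euc N => (1 : ℝ)) (g := fun y => ψ y i) (v := EuclideanSpace.single i 1)
    (by simp) (by simpa using hIntg i)
    (by simpa using (hi i).continuous.integrable_of_hasCompactSupport (hci i))
    (by intro x _; fun_prop) (fun x _ => (hi i).differentiable one_ne_zero x)
  simpa using this

/-- integration by parts -/
lemma integral_mul_dv {N : ℕ} {f : Euc N → ℝ} (hf : ContDiff ℝ 1 f) {ψ : Euc N → Euc N}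
    (h : ContDiff ℝ 1 ψ) (hc : HasCompactSupport ψ) :
    ∫ x, f x * dv N ψ x = - ∫ x, fderiv ℝ f x (ψ x) := by
  have h0 := integral_dv (hf.smul h) (hc.smul_left (f := f))
  have e : (dv N fun y => f y • ψ y) = fun x => f x * dv N ψ x + fderiv ℝ f x (ψ x) :=
    funext fun x => dv_smul (hf.differentiable one_ne_zero x) (h.differentiable one_ne_zero x)
  have i1 : Integrable fun x => f x * dv N ψ x :=
    (hf.continuous.mul (dv_continuous h)).integrable_of_hasCompactSupport (dv_supp h hc).mul_left
  have i2 : Integrable fun x => fderiv ℝ f x (ψ x) := by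
    refine ((hf.continuous_fderiv one_ne_zero).clm_apply
      h.continuous).integrable_of_hasCompactSupport ?_
    refine hc.mono ?_
    intro x hx hx'
    apply hx
    simp [hx']
  have h0' : ∫ x, (f x * dv N ψ x + fderiv ℝ f x (ψ x)) = 0 := by
    rw [← e]; exact h0
  rw [integral_add i1 i2] at h0'
  linarith

lemma mem_TVSet {N : ℕ} {u : Euc N → ℝ} {ψ : Euc N → Euc N} (h : ContDiff ℝ 1 ψ)
    (hc : HasCompactSupport ψ) (hb : ∀ x, ‖ψ x‖ ≤ 1) :
    ∫ x, u x * dv N ψ x ∈ TVSet N u := ⟨ψ, h, hc, hb, rfl⟩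

lemma le_tv {N : ℕ} {u : Euc N → ℝ} (hu : MemBV N u) {ψ : Euc N → Euc N} (h : ContDiff ℝ 1 ψ)
    (hc : HasCompactSupport ψ) (hb : ∀ x, ‖ψ x‖ ≤ 1) :
    ∫ x, u x * dv N ψ x ≤ tv N u := le_csSup hu.2 (mem_TVSet h hc hb)

lemma zero_mem_TVSet {N : ℕ} (u : Euc N → ℝ) : 0 ∈ TVSet N u :=
  ⟨fun _ => 0, contDiff_const, HasCompactSupport.zero, by simp, by simp⟩

lemma tv_nonneg {N : ℕ} {u : Euc N → ℝ} (hu : MemBV N u) : 0 ≤ tv N u :=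
  le_csSup hu.2 (zero_mem_TVSet u)

lemma tv_pair {N : ℕ} {v w : Euc N → ℝ} {C : ℝ}
    (h : ∀ r₁ ∈ TVSet N v, ∀ r₂ ∈ TVSet N w, r₁ + r₂ ≤ C) :
    BddAbove (TVSet N v) ∧ BddAbove (TVSet N w) ∧ tv N v + tv N w ≤ C := by
  refine ⟨⟨C, fun r hr => by simpa using h r hr 0 (zero_mem_TVSet w)⟩,
    ⟨C, fun r hr => by simpa using h 0 (zero_mem_TVSet v) r hr⟩, ?_⟩
  have : tv N v ≤ C - tv N w := by
    refine csSup_le ⟨0, zero_mem_TVSet v⟩ fun r hr => ?_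
    have : tv N w ≤ C - r := csSup_le ⟨0, zero_mem_TVSet w⟩ fun r' hr' => by
      linarith [h r hr r' hr']
    linarith
  linarith

lemma TVSet_congr {N : ℕ} {u v : Euc N → ℝ} (h : u =ᵐ[volume] v) : TVSet N u = TVSet N v := by
  unfold TVSet
  ext r
  have : ∀ ψ : Euc N → Euc N, ∫ x, u x * dv N ψ x = ∫ x, v x * dv N ψ x := fun ψ =>
    integral_congr_ae (h.mono fun x hx => by simp [hx])
  simp only [dv] at this
  simp only [Set.mem_ofPred_eq, this]

lemma tv_congr {N : ℕ} {u v : Euc N → ℝ} (h : u =ᵐ[volume] v) : tv N u = tv N v := by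
  unfold tv; rw [TVSet_congr h]

lemma MemBV.congr {N : ℕ} {u v : Euc N → ℝ} (hu : MemBV N u) (h : u =ᵐ[volume] v) : MemBV N v :=
  ⟨hu.1.congr h, by rw [← TVSet_congr h]; exact hu.2⟩

/-- comparison principle used for all scalings: every test value of `v` is `c` times one of `u`. -/
lemma tv_le_of {N : ℕ} {u v : Euc N → ℝ} {c : ℝ} (hc : 0 ≤ c) (hu : MemBV N u)
    (hv : Integrable v)
    (h : ∀ r ∈ TVSet N v, ∃ r' ∈ TVSet N u, r = c * r') : MemBV N v ∧ tv N v ≤ c * tv N u := by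
  have h1 : ∀ r ∈ TVSet N v, r ≤ c * tv N u := fun r hr => by
    obtain ⟨r', hr', rfl⟩ := h r hr
    exact mul_le_mul_of_nonneg_left (le_csSup hu.2 hr') hc
  exact ⟨⟨hv, ⟨_, h1⟩⟩, csSup_le ⟨0, zero_mem_TVSet v⟩ h1⟩

lemma memBV_const_mul_aux {N : ℕ} {u : Euc N → ℝ} (hu : MemBV N u) (c : ℝ) :
    MemBV N (fun x => c * u x) ∧ tv N (fun x => c * u x) ≤ |c| * tv N u := by
  refine tv_le_of (abs_nonneg c) hu (hu.1.const_mul c) ?_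
  rintro r ⟨ψ, h, hc, hb, rfl⟩
  rcases abs_cases c with ⟨e, _⟩ | ⟨e, _⟩
  · refine ⟨_, mem_TVSet h hc hb, ?_⟩
    rw [e, ← integral_const_mul]
    simp only [dv, mul_assoc]
  · refine ⟨_, mem_TVSet (ψ := fun x => (-1 : ℝ) • ψ x) (by fun_prop)
      (hc.smul_left (f := fun _ => (-1 : ℝ))) (by simpa using hb), ?_⟩
    rw [e, ← integral_const_mul]
    congr 1; ext x
    have := dv_smul (N := N) (f := fun _ => (-1 : ℝ)) (ψ := ψ) (x := x) (by fun_prop)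
      (h.differentiable one_ne_zero x)
    rw [this]
    simp [dv, mul_assoc]

lemma memBV_const_mul {N : ℕ} {u : Euc N → ℝ} (hu : MemBV N u) (c : ℝ) :
    MemBV N (fun x => c * u x) := (memBV_const_mul_aux hu c).1

lemma tv_const_mul {N : ℕ} {u : Euc N → ℝ} (hu : MemBV N u) {c : ℝ} (hc : c ≠ 0) :
    tv N (fun x => c * u x) = |c| * tv N u := by
  refine le_antisymm (memBV_const_mul_aux hu c).2 ?_
  have := (memBV_const_mul_aux (memBV_const_mul hu c) c⁻¹).2
  simp only [inv_mul_cancel_left₀ hc] at this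
  rw [abs_inv] at this
  have hpos := abs_pos.2 hc
  calc |c| * tv N u ≤ |c| * (|c|⁻¹ * tv N fun x => c * u x) := by gcongr
    _ = _ := by field_simp

lemma dv_scale {N : ℕ} {ψ : Euc N → Euc N} (h : ContDiff ℝ 1 ψ) (ρ : ℝ) (y : Euc N) :
    dv N (fun y => ψ (ρ • y)) y = ρ * dv N ψ (ρ • y) := by
  have h1 : HasFDerivAt (fun y => ψ (ρ • y))
      ((fderiv ℝ ψ (ρ • y)).comp (ρ • ContinuousLinearMap.id ℝ (Euc N))) y := by
    refine HasFDerivAt.comp y ((h.differentiable one_ne_zero _).hasFDerivAt) ?_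
    exact (ρ • ContinuousLinearMap.id ℝ (Euc N)).hasFDerivAt
  rw [dv_eq h1.differentiableAt, dv_eq (h.differentiable one_ne_zero _), h1.fderiv, Finset.mul_sum]
  simp

lemma memBV_scale_aux {N : ℕ} {u : Euc N → ℝ} (hu : MemBV N u) {ρ : ℝ} (hρ : 0 < ρ) :
    MemBV N (fun x => u (ρ⁻¹ • x)) ∧
      tv N (fun x => u (ρ⁻¹ • x)) ≤ (ρ ^ N * ρ⁻¹) * tv N u := by
  refine tv_le_of (by positivity) hu (hu.1.comp_smul (inv_ne_zero hρ.ne')) ?_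
  rintro r ⟨ψ, h, hc, hb, rfl⟩
  refine ⟨_, mem_TVSet (ψ := fun y => ψ (ρ • y)) (by fun_prop)
    (hc.comp_homeomorph (Homeomorph.smulOfNeZero ρ hρ.ne')) (fun x => hb _), ?_⟩
  simp only [dv_scale h]
  have := Measure.integral_comp_inv_smul_of_nonneg (volume : Measure (Euc N))
    (fun y => u y * dv N ψ (ρ • y)) hρ.le
  simp only [smul_inv_smul₀ hρ.ne', finrank_euclideanSpace, Fintype.card_fin] at this
  change ∫ x, u (ρ⁻¹ • x) * dv N ψ x = _
  rw [this, smul_eq_mul, mul_assoc]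
  congr 1
  rw [← integral_const_mul]
  congr 1; ext x
  field_simp

lemma memBV_scale {N : ℕ} {u : Euc N → ℝ} (hu : MemBV N u) {ρ : ℝ} (hρ : 0 < ρ) :
    MemBV N (fun x => u (ρ⁻¹ • x)) := (memBV_scale_aux hu hρ).1

lemma tv_scale {N : ℕ} {u : Euc N → ℝ} (hu : MemBV N u) {ρ : ℝ} (hρ : 0 < ρ) :
    tv N (fun x => u (ρ⁻¹ • x)) = (ρ ^ N * ρ⁻¹) * tv N u := by
  refine le_antisymm (memBV_scale_aux hu hρ).2 ?_
  have := (memBV_scale_aux (memBV_scale hu hρ) (inv_pos.2 hρ)).2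
  simp only [inv_inv, inv_smul_smul₀ hρ.ne'] at this
  calc _ ≤ (ρ ^ N * ρ⁻¹) * (ρ⁻¹ ^ N * ρ * tv N fun x => u (ρ⁻¹ • x)) := by gcongr
    _ = _ := by rw [inv_pow]; generalize (tv N fun x => u (ρ⁻¹ • x)) = z; field_simp

lemma dv_isom {N : ℕ} {ψ : Euc N → Euc N} (h : ContDiff ℝ 1 ψ) (L : Euc N ≃ₗᵢ[ℝ] Euc N)
    (y : Euc N) : dv N (fun y => L (ψ (L.symm y))) y = dv N ψ (L.symm y) := by
  have htr : ∀ M : Euc N →L[ℝ] Euc N, ∑ i, (M (EuclideanSpace.single i 1)) i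
      = LinearMap.trace ℝ (Euc N) M.toLinearMap := by
    intro M
    rw [LinearMap.trace_eq_sum_inner _ (EuclideanSpace.basisFun (Fin N) ℝ)]
    simp [EuclideanSpace.inner_single_left]
  have h1 : HasFDerivAt (fun y => L (ψ (L.symm y)))
      (((L : Euc N ≃L[ℝ] Euc N) : Euc N →L[ℝ] Euc N).comp
        ((fderiv ℝ ψ (L.symm y)).comp ((L.symm : Euc N ≃L[ℝ] Euc N) : Euc N →L[ℝ] Euc N))) y := by
    refine HasFDerivAt.comp (g := L) y
      ((L : Euc N ≃L[ℝ] Euc N) : Euc N →L[ℝ] Euc N).hasFDerivAt ?_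
    refine HasFDerivAt.comp (f := L.symm) y ((h.differentiable one_ne_zero _).hasFDerivAt) ?_
    exact ((L.symm : Euc N ≃L[ℝ] Euc N) : Euc N →L[ℝ] Euc N).hasFDerivAt
  rw [dv_eq h1.differentiableAt, dv_eq (h.differentiable one_ne_zero _), h1.fderiv, htr, htr]
  rw [← LinearMap.trace_conj' (fderiv ℝ ψ (L.symm y)).toLinearMap L.toLinearEquiv]
  rfl

lemma memBV_isom_aux {N : ℕ} {u : Euc N → ℝ} (hu : MemBV N u) (L : Euc N ≃ₗᵢ[ℝ] Euc N) :
    MemBV N (fun x => u (L x)) ∧ tv N (fun x => u (L x)) ≤ 1 * tv N u := by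
  have hmp : MeasurePreserving L := L.measurePreserving
  refine tv_le_of (by positivity) hu
    ((hmp.integrable_comp_emb L.toHomeomorph.measurableEmbedding).2 hu.1) ?_
  rintro r ⟨ψ, h, hc, hb, rfl⟩
  refine ⟨_, mem_TVSet (ψ := fun y => L (ψ (L.symm y))) ?_ ?_ (fun x => by simpa using hb _), ?_⟩
  · exact L.contDiff.comp (h.comp L.symm.contDiff)
  · exact (hc.comp_homeomorph L.symm.toHomeomorph).comp_left (g := L) (by simp)
  simp only [dv_isom h]
  have := hmp.integral_comp L.toHomeomorph.measurableEmbedding (fun y => u y * dv N ψ (L.symm y))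
  rw [one_mul, ← this]
  simp [dv]

lemma memBV_isom {N : ℕ} {u : Euc N → ℝ} (hu : MemBV N u) (L : Euc N ≃ₗᵢ[ℝ] Euc N) :
    MemBV N (fun x => u (L x)) := (memBV_isom_aux hu L).1

lemma tv_isom {N : ℕ} {u : Euc N → ℝ} (hu : MemBV N u) (L : Euc N ≃ₗᵢ[ℝ] Euc N) :
    tv N (fun x => u (L x)) = tv N u := by
  refine le_antisymm (by simpa using (memBV_isom_aux hu L).2) ?_
  simpa using (memBV_isom_aux (memBV_isom hu L) L.symm).2

/-- the test inequality extends to bounded non-compactly supported fields -/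
lemma le_tv_of_bdd {N : ℕ} {u : Euc N → ℝ} (hu : MemBV N u) {ψ : Euc N → Euc N}
    (h : ContDiff ℝ 1 ψ) (hb : ∀ x, ‖ψ x‖ ≤ 1) {C : ℝ} (hC : ∀ x, ‖dv N ψ x‖ ≤ C) :
    ∫ x, u x * dv N ψ x ≤ tv N u := by
  let φ : ContDiffBump (0 : Euc N) := ⟨1, 2, one_pos, one_lt_two⟩
  have hφ : ContDiff ℝ 1 φ := φ.contDiff
  obtain ⟨C', hC'⟩ := (hφ.continuous_fderiv one_ne_zero).bounded_above_of_compact_support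
    (φ.hasCompactSupport.fderiv (𝕜 := ℝ))
  let f : ℕ → Euc N → ℝ := fun k x => φ (((k : ℝ) + 1)⁻¹ • x)
  have hk : ∀ k : ℕ, (0 : ℝ) < ((k : ℝ) + 1)⁻¹ := fun k => by positivity
  have hfd : ∀ k, ContDiff ℝ 1 (f k) := fun k => hφ.comp (contDiff_const_smul _)
  have hfc : ∀ k, HasCompactSupport (f k) := fun k =>
    φ.hasCompactSupport.comp_homeomorph (Homeomorph.smulOfNeZero _ (hk k).ne')
  have hf0 : ∀ k x, 0 ≤ f k x := fun k x => φ.nonneg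
  have hf1 : ∀ k x, f k x ≤ 1 := fun k x => φ.le_one
  have hfder : ∀ k x, ‖fderiv ℝ (f k) x‖ ≤ C' * ((k : ℝ) + 1)⁻¹ := by
    intro k x
    have h1 : HasFDerivAt (f k) ((fderiv ℝ φ (((k : ℝ) + 1)⁻¹ • x)).comp
        (((k : ℝ) + 1)⁻¹ • ContinuousLinearMap.id ℝ (Euc N))) x := by
      refine HasFDerivAt.comp (g := φ) (f := fun x => ((k : ℝ) + 1)⁻¹ • x) x ((hφ.differentiable one_ne_zero _).hasFDerivAt) ?_
      exact (((k : ℝ) + 1)⁻¹ • ContinuousLinearMap.id ℝ (Euc N)).hasFDerivAt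
    rw [h1.fderiv]
    rw [ContinuousLinearMap.comp_smul, ContinuousLinearMap.comp_id, norm_smul, mul_comm,
      Real.norm_of_nonneg (hk k).le]
    gcongr
    exact hC' _
  have hle : ∀ k, ∫ x, u x * (f k x * dv N ψ x + fderiv ℝ (f k) x (ψ x)) ≤ tv N u := by
    intro k
    have := le_tv hu ((hfd k).smul h) ((hfc k).smul_right (f' := ψ)) (fun x => by
      simp only [Pi.smul_apply', norm_smul, Real.norm_of_nonneg (hf0 k x)]
      exact mul_le_one₀ (hf1 k x) (norm_nonneg _) (hb x))
    have e : (dv N (f k • ψ)) = fun x => f k x * dv N ψ x + fderiv ℝ (f k) x (ψ x) :=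
      funext fun x => dv_smul ((hfd k).differentiable one_ne_zero x)
        (h.differentiable one_ne_zero x)
    rwa [e] at this
  refine le_of_tendsto' (x := atTop) ?_ hle
  have hC'0 : 0 ≤ C' := (norm_nonneg _).trans (hC' 0)
  refine tendsto_integral_of_dominated_convergence (fun x => ‖u x‖ * (C + C')) ?_ ?_ ?_ ?_
  · intro k
    refine hu.1.aestronglyMeasurable.mul (Continuous.aestronglyMeasurable ?_)
    exact ((hfd k).continuous.mul (dv_continuous h)).add
      (((hfd k).continuous_fderiv one_ne_zero).clm_apply h.continuous)
  · exact hu.1.norm.mul_const _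
  · intro k
    refine ae_of_all _ fun x => ?_
    rw [norm_mul]
    gcongr
    refine (norm_add_le _ _).trans (add_le_add ?_ ?_)
    · rw [norm_mul, Real.norm_of_nonneg (hf0 k x)]
      exact (mul_le_of_le_one_left (norm_nonneg _) (hf1 k x)).trans (hC x)
    · refine ((fderiv ℝ (f k) x).le_opNorm _).trans ?_
      have h3 : ((k : ℝ) + 1)⁻¹ ≤ 1 := inv_le_one_of_one_le₀ (by simp)
      calc _ ≤ (C' * 1) * 1 := by
            gcongr
            · exact (hfder k x).trans (by gcongr)
            · exact hb x
        _ = C' := by ring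
  · refine ae_of_all _ fun x => ?_
    refine Tendsto.const_mul _ ?_
    have t1 : Tendsto (fun k : ℕ => ((k : ℝ) + 1)⁻¹) atTop (𝓝 0) :=
      tendsto_inv_atTop_zero.comp (tendsto_atTop_add_const_right _ _ tendsto_natCast_atTop_atTop)
    have t2 : Tendsto (fun k => f k x) atTop (𝓝 1) := by
      have : Tendsto (fun k : ℕ => φ (((k : ℝ) + 1)⁻¹ • x)) atTop (𝓝 (φ ((0 : ℝ) • x))) :=
        (hφ.continuous.tendsto _).comp (t1.smul_const x)
      rw [zero_smul, φ.one_of_mem_closedBall] at this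
      · exact this
      · rw [Metric.mem_closedBall, dist_self]; exact φ.rIn_pos.le
    have t3 : Tendsto (fun k => fderiv ℝ (f k) x (ψ x)) atTop (𝓝 0) := by
      refine squeeze_zero_norm (a := fun k : ℕ => C' * ((k : ℝ) + 1)⁻¹) (fun k => ?_) ?_
      · refine ((fderiv ℝ (f k) x).le_opNorm _).trans ?_
        exact (mul_le_of_le_one_right (norm_nonneg _) (hb x)).trans (hfder k x)
      · simpa using t1.const_mul C'
    simpa using (t2.mul_const _).add t3

/-- standard mollifier bumps -/
def mbump (N : ℕ) (k : ℕ) : ContDiffBump (0 : Euc N) :=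
  ⟨(2 * ((k : ℝ) + 1))⁻¹, ((k : ℝ) + 1)⁻¹, by positivity, by
    apply inv_strictAnti₀ <;> nlinarith [(Nat.cast_nonneg k : (0:ℝ) ≤ k)]⟩

def rho (N : ℕ) (k : ℕ) : Euc N → ℝ := (mbump N k).normed volume

lemma rho_nonneg {N k : ℕ} (x : Euc N) : 0 ≤ rho N k x := (mbump N k).nonneg_normed x
lemma rho_smooth {N k : ℕ} : ContDiff ℝ 1 (rho N k) := (mbump N k).contDiff_normed (n := 1)
lemma rho_cont {N k : ℕ} : Continuous (rho N k) := rho_smooth.continuous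
lemma rho_supp {N k : ℕ} : HasCompactSupport (rho N k) := (mbump N k).hasCompactSupport_normed
lemma rho_int {N k : ℕ} : ∫ x, rho N k x = 1 := (mbump N k).integral_normed
lemma rho_integrable {N k : ℕ} : Integrable (rho N k) := (mbump N k).integrable_normed
lemma rho_neg {N k : ℕ} (x : Euc N) : rho N k (-x) = rho N k x := (mbump N k).normed_neg x

/-- mollification -/
def moll (N k : ℕ) {F : Type*} [NormedAddCommGroup F] [NormedSpace ℝ F] (u : Euc N → F) :
    Euc N → F :=
  fun x => ∫ y, rho N k (x - y) • u y

lemma moll_eq {N k : ℕ} {F : Type*} [NormedAddCommGroup F] [NormedSpace ℝ F] (u : Euc N → F) :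
    moll N k u = convolution (rho N k) u (ContinuousLinearMap.lsmul ℝ ℝ) volume := by
  ext x
  rw [convolution_lsmul_swap]; rfl

lemma moll_smooth {N k : ℕ} {F : Type*} [NormedAddCommGroup F] [NormedSpace ℝ F] [CompleteSpace F]
    {u : Euc N → F}
    (hu : LocallyIntegrable u) : ContDiff ℝ 1 (moll N k u) := by
  rw [moll_eq]
  exact rho_supp.contDiff_convolution_left (n := 1) _ rho_smooth hu

lemma moll_tendsto {N : ℕ} {u : Euc N → ℝ} (hu : LocallyIntegrable u) :
    ∀ᵐ x, Tendsto (fun k => moll N k u x) atTop (𝓝 (u x)) := by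
  simp only [moll_eq]
  refine ContDiffBump.ae_convolution_tendsto_right_of_locallyIntegrable (φ := mbump N) (K := 2)
    ?_ ?_ hu
  · exact tendsto_inv_atTop_zero.comp
      (tendsto_atTop_add_const_right _ _ tendsto_natCast_atTop_atTop)
  · refine Eventually.of_forall fun k => ?_
    simp only [mbump]
    rw [mul_inv]
    linarith

lemma moll_integrable {N k : ℕ} {u : Euc N → ℝ} (hu : Integrable u) :
    Integrable (moll N k u) := by
  rw [moll_eq]
  exact rho_integrable.integrable_convolution _ hu

lemma rho_int_sub {N k : ℕ} (x : Euc N) : ∫ y, rho N k (x - y) = 1 := by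
  rw [integral_sub_left_eq_self (rho N k) volume x, rho_int]

lemma rho_integrable_sub {N k : ℕ} (x : Euc N) : Integrable fun y => rho N k (x - y) :=
  rho_integrable.comp_sub_left x

lemma moll_bdd {N k : ℕ} {F : Type*} [NormedAddCommGroup F] [NormedSpace ℝ F]
    {u : Euc N → F} {C : ℝ} (hu : ∀ x, ‖u x‖ ≤ C) (x : Euc N) : ‖moll N k u x‖ ≤ C := by
  unfold moll
  calc _ ≤ ∫ y, rho N k (x - y) * C := by
        refine norm_integral_le_of_norm_le ((rho_integrable_sub x).mul_const C) ?_
        refine ae_of_all _ fun y => ?_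
        rw [norm_smul, Real.norm_of_nonneg (rho_nonneg _)]
        exact mul_le_mul_of_nonneg_left (hu y) (rho_nonneg _)
    _ = C := by rw [integral_mul_const, rho_int_sub, one_mul]

lemma conv_prod_integrable {N k : ℕ} {u : Euc N → ℝ} (hu : Integrable u) :
    Integrable (fun p : Euc N × Euc N => rho N k (p.1 - p.2) * u p.2)
      ((volume : Measure (Euc N)).prod volume) := by
  have := hu.convolution_integrand (L := ContinuousLinearMap.mul ℝ ℝ) (rho_integrable (N := N) (k := k))
  refine this.congr (ae_of_all _ fun p => ?_)
  simp [mul_comm]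

lemma moll_symm {N k : ℕ} {u g : Euc N → ℝ} (hu : Integrable u) (hg : Continuous g) {C : ℝ}
    (hC : ∀ x, ‖g x‖ ≤ C) :
    ∫ x, moll N k u x * g x = ∫ x, u x * moll N k g x := by
  have h1 : Integrable (fun p : Euc N × Euc N => (rho N k (p.1 - p.2) * u p.2) * g p.1)
      ((volume : Measure (Euc N)).prod volume) :=
    (conv_prod_integrable hu).mul_bdd (c := C) (hg.comp continuous_fst).aestronglyMeasurable
      (ae_of_all _ fun p => hC _)
  have := integral_integral_swap (f := fun x y => (rho N k (x - y) * u y) * g x) h1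
  simp only [integral_mul_const] at this
  unfold moll
  simp only [smul_eq_mul]
  rw [this]
  congr 1; ext y
  rw [← integral_const_mul]
  congr 1; ext x
  rw [← rho_neg (x - y), neg_sub]; ring

lemma moll_dv {N k : ℕ} {ψ : Euc N → Euc N} (h : ContDiff ℝ 1 ψ) (hc : HasCompactSupport ψ) :
    dv N (moll N k ψ) = moll N k (dv N ψ) := by
  ext x
  rw [dv_eq ((moll_smooth h.continuous.locallyIntegrable).differentiable one_ne_zero x)]
  have hd : HasFDerivAt (moll N k ψ) (convolution (rho N k) (fderiv ℝ ψ)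
      ((ContinuousLinearMap.lsmul ℝ ℝ).precompR (Euc N)) volume x) x := by
    rw [moll_eq]
    exact hc.hasFDerivAt_convolution_right (ContinuousLinearMap.lsmul ℝ ℝ)
      (rho_cont (k := k)).locallyIntegrable h x
  rw [hd.fderiv]
  simp only [convolution_precompR_apply _ (rho_cont (k := k)).locallyIntegrable
    (hc.fderiv (𝕜 := ℝ)) (h.continuous_fderiv one_ne_zero)]
  have e : dv N ψ = fun x => ∑ i, (fderiv ℝ ψ x (EuclideanSpace.single i 1)) i :=
    funext fun x => dv_eq (h.differentiable one_ne_zero x)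
  have hIntg : ∀ i : Fin N, Integrable fun y =>
      rho N k (x - y) • (fderiv ℝ ψ y (EuclideanSpace.single i 1)) := fun i => by
    refine Continuous.integrable_of_hasCompactSupport ?_ ?_
    · exact (rho_cont.comp (continuous_sub_left x)).smul
        ((h.continuous_fderiv one_ne_zero).clm_apply continuous_const)
    · refine HasCompactSupport.smul_left (f := fun y => rho N k (x - y)) ?_
      exact (hc.fderiv (𝕜 := ℝ)).comp_left
        (g := fun L : Euc N →L[ℝ] Euc N => L (EuclideanSpace.single i 1)) (by simp)
  have e2 : ∀ i : Fin N, ((convolution (rho N k) (fun a => fderiv ℝ ψ a (EuclideanSpace.single i 1))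
      (ContinuousLinearMap.lsmul ℝ ℝ) volume) x) i
      = ∫ y, rho N k (x - y) * (fderiv ℝ ψ y (EuclideanSpace.single i 1)) i := by
    intro i
    rw [convolution_lsmul_swap]
    have := (EuclideanSpace.proj i : Euc N →L[ℝ] ℝ).integral_comp_comm (hIntg i)
    simp only [PiLp.proj_apply] at this
    rw [← this]; simp
  simp only [e2]
  rw [e]
  unfold moll
  simp only [smul_eq_mul, Finset.mul_sum]
  rw [integral_finsetSum]
  intro i _
  have := (EuclideanSpace.proj i : Euc N →L[ℝ] ℝ).integrable_comp (hIntg i)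
  refine this.congr (ae_of_all _ fun y => ?_)
  simp

lemma moll_supp {N k : ℕ} {ψ : Euc N → Euc N} (hc : HasCompactSupport ψ) :
    HasCompactSupport (moll N k ψ) := by
  rw [moll_eq]; exact rho_supp.convolution (ContinuousLinearMap.lsmul ℝ ℝ) hc

/-- mollification does not increase test values -/
lemma moll_le_tv {N k : ℕ} {u : Euc N → ℝ} (hu : MemBV N u) {ψ : Euc N → Euc N}
    (h : ContDiff ℝ 1 ψ) (hc : HasCompactSupport ψ) (hb : ∀ x, ‖ψ x‖ ≤ 1) :
    ∫ x, moll N k u x * dv N ψ x ≤ tv N u := by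
  obtain ⟨C, hC⟩ := dv_bdd h hc
  rw [moll_symm hu.1 (dv_continuous h) hC, ← moll_dv h hc]
  exact le_tv hu (moll_smooth h.continuous.locallyIntegrable) (moll_supp hc) (moll_bdd hb)

lemma moll_abs_le {N k : ℕ} {u : Euc N → ℝ} (hu : Integrable u) :
    ∫⁻ x, ‖moll N k u x‖ₑ ≤ ∫⁻ x, ‖u x‖ₑ := by
  calc ∫⁻ x, ‖moll N k u x‖ₑ ≤ ∫⁻ x, ∫⁻ y, ‖rho N k (x - y) * u y‖ₑ := by
        refine lintegral_mono fun x => ?_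
        exact enorm_integral_le_lintegral_enorm _
    _ = ∫⁻ y, ∫⁻ x, ‖rho N k (x - y) * u y‖ₑ := by
        refine lintegral_lintegral_swap ?_
        exact (conv_prod_integrable hu).aestronglyMeasurable.enorm
    _ = ∫⁻ y, ‖u y‖ₑ := by
        refine lintegral_congr fun y => ?_
        simp only [enorm_mul]
        rw [lintegral_mul_const' _ _ (by simp)]
        have : ∫⁻ x, ‖rho N k (x - y)‖ₑ = 1 := by
          have h2 : Integrable fun x => rho N k (x - y) := rho_integrable.comp_sub_right y
          rw [← ofReal_integral_norm_eq_lintegral_enorm h2]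
          simp only [Real.norm_of_nonneg (rho_nonneg _)]
          rw [integral_sub_right_eq_self (rho N k) y, rho_int]; simp
        rw [this, one_mul]

/-- `L¹` convergence of mollifications -/
lemma moll_L1 {N : ℕ} {u : Euc N → ℝ} (hu : Integrable u) :
    Tendsto (fun k => ∫ x, |moll N k u x - u x|) atTop (𝓝 0) := by
  set I := ∫ x, |u x| with hI
  have hIntg : ∀ k, Integrable fun x => |moll N k u x - u x| := fun k =>
    ((moll_integrable hu).sub hu).abs
  have hmI : ∀ k, ∫ x, |moll N k u x| ≤ I := by
    intro k
    have := moll_abs_le (k := k) hu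
    rw [← ofReal_integral_norm_eq_lintegral_enorm hu,
      ← ofReal_integral_norm_eq_lintegral_enorm (moll_integrable hu)] at this
    rwa [ENNReal.ofReal_le_ofReal_iff (integral_nonneg fun x => norm_nonneg _)] at this
  -- the nonnegative functions |m| + |u| - |m - u|
  let F : ℕ → Euc N → ℝ := fun k x => |moll N k u x| + |u x| - |moll N k u x - u x|
  have hF0 : ∀ k x, 0 ≤ F k x := fun k x => by
    have := abs_sub (moll N k u x) (u x)
    simp only [F]; linarith
  have hFle : ∀ k x, F k x ≤ 2 * |u x| := fun k x => by
    have := abs_sub_abs_le_abs_sub (moll N k u x) (u x)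
    simp only [F]; linarith
  have hlim : Tendsto (fun k => ∫ x, F k x) atTop (𝓝 (∫ x, 2 * |u x|)) := by
    refine tendsto_integral_of_dominated_convergence (fun x => 2 * |u x|) ?_ ?_ ?_ ?_
    · intro k
      exact (((moll_integrable hu).abs.add hu.abs).sub (hIntg k)).aestronglyMeasurable
    · exact hu.abs.const_mul 2
    · intro k
      exact ae_of_all _ fun x => by rw [Real.norm_of_nonneg (hF0 k x)]; exact hFle k x
    · filter_upwards [moll_tendsto hu.locallyIntegrable] with x hx
      have : Tendsto (fun k => F k x) atTop (𝓝 (|u x| + |u x| - |u x - u x|)) :=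
        (hx.abs.add_const _).sub (hx.sub_const _).abs
      simpa [two_mul] using this
  rw [integral_const_mul, ← hI] at hlim
  have hup : ∀ k, ∫ x, |moll N k u x - u x| ≤ 2 * I - ∫ x, F k x := by
    intro k
    have i1 : Integrable fun x => |moll N k u x| + |u x| := (moll_integrable hu).abs.add hu.abs
    have h1 : ∫ x, F k x = (∫ x, |moll N k u x|) + I - ∫ x, |moll N k u x - u x| := by
      simp only [F]
      rw [integral_sub i1 (hIntg k), integral_add (moll_integrable hu).abs hu.abs]
    have := hmI k
    linarith
  refine squeeze_zero (fun k => integral_nonneg fun x => abs_nonneg _) hup ?_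
  have h9 := hlim.const_sub (2 * I)
  rwa [sub_self] at h9

lemma lip_of_deriv {G g : ℝ → ℝ} (hG : ∀ s, HasDerivAt G (g s) s) (hg : ∀ s, |g s| ≤ 1) (x y : ℝ) :
    |G x - G y| ≤ |x - y| := by
  have := Convex.norm_image_sub_le_of_norm_hasDerivWithin_le (f := G) (f' := g) (C := 1) (s := Set.univ)
    (x := y) (y := x) (fun s _ => (hG s).hasDerivWithinAt) (fun s _ => hg s) convex_univ trivial trivial
  simpa using this

lemma contDiff_one_of {G g : ℝ → ℝ} (hG : ∀ s, HasDerivAt G (g s) s) (hg : Continuous g) :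
    ContDiff ℝ 1 G := by
  rw [contDiff_one_iff_deriv]
  refine ⟨fun s => (hG s).differentiableAt, ?_⟩
  have : deriv G = g := funext fun s => (hG s).deriv
  rwa [this]

lemma comp_integrable {N : ℕ} {u : Euc N → ℝ} (hu : Integrable u) {G g : ℝ → ℝ}
    (hG : ∀ s, HasDerivAt G (g s) s) (hg : ∀ s, |g s| ≤ 1) (h0 : G 0 = 0) :
    Integrable fun x => G (u x) := by
  refine hu.mono ?_ (ae_of_all _ fun x => ?_)
  · exact (continuous_iff_continuousAt.2 fun s => (hG s).continuousAt).comp_aestronglyMeasurable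
      hu.aestronglyMeasurable
  · have := lip_of_deriv hG hg (u x) 0
    simpa [h0] using this

lemma chain_lim {N : ℕ} {u : Euc N → ℝ} (hu : Integrable u) {G g : ℝ → ℝ}
    (hG : ∀ s, HasDerivAt G (g s) s) (hg : ∀ s, |g s| ≤ 1) (h0 : G 0 = 0)
    {ψ : Euc N → Euc N} (h : ContDiff ℝ 1 ψ) (hc : HasCompactSupport ψ) :
    Tendsto (fun k => ∫ x, G (moll N k u x) * dv N ψ x) atTop (𝓝 (∫ x, G (u x) * dv N ψ x)) := by
  obtain ⟨C, hC⟩ := dv_bdd h hc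
  have hm : ∀ k, Integrable fun x => G (moll N k u x) := fun k =>
    comp_integrable (moll_integrable hu) hG hg h0
  have hl := (moll_L1 hu).const_mul C
  rw [mul_zero] at hl
  rw [tendsto_iff_norm_sub_tendsto_zero]
  refine squeeze_zero (fun k => norm_nonneg _) (fun k => ?_) hl
  rw [← integral_sub (mul_dv_int (hm k) h hc) (mul_dv_int (comp_integrable hu hG hg h0) h hc),
    ← integral_const_mul]
  refine norm_integral_le_of_norm_le (((moll_integrable hu).sub hu).abs.const_mul C)
    (ae_of_all _ fun x => ?_)
  rw [← sub_mul, norm_mul, mul_comm]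
  have h1 := lip_of_deriv hG hg (moll N k u x) (u x)
  exact mul_le_mul (hC x) h1 (norm_nonneg _) ((norm_nonneg _).trans (hC x))

lemma supp_smul {N : ℕ} (f : Euc N → ℝ) {ψ : Euc N → Euc N} (hc : HasCompactSupport ψ) :
    HasCompactSupport (fun x => f x • ψ x) := by
  refine hc.mono fun x hx hx' => hx ?_
  simp [hx']

lemma chain_key {N : ℕ} {m : Euc N → ℝ} (sm : ContDiff ℝ 1 m) {G g : ℝ → ℝ} {ψ : Euc N → Euc N}
    (hG : ∀ s, HasDerivAt G (g s) s) (hg : ContDiff ℝ 1 g)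
    (hs : ContDiff ℝ 1 ψ) (hc : HasCompactSupport ψ) :
    ∫ x, G (m x) * dv N ψ x = ∫ x, m x * dv N (fun x => g (m x) • ψ x) x := by
  have e1 := integral_mul_dv (f := fun x => G (m x)) ((contDiff_one_of hG hg.continuous).comp sm) hs hc
  have e2 := integral_mul_dv (ψ := fun x => g (m x) • ψ x) sm ((hg.comp sm).smul hs) (supp_smul _ hc)
  rw [e1, e2]
  congr 1
  refine integral_congr_ae (ae_of_all _ fun x => ?_)
  have hd : HasFDerivAt (fun x => G (m x)) (g (m x) • fderiv ℝ m x) x :=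
    (hG (m x)).comp_hasFDerivAt x (sm.differentiable one_ne_zero x).hasFDerivAt
  simp [hd.fderiv]

lemma chain_le {N : ℕ} {u : Euc N → ℝ} (hu : MemBV N u) {G₁ g₁ G₂ g₂ : ℝ → ℝ}
    (hG₁ : ∀ s, HasDerivAt G₁ (g₁ s) s) (hG₂ : ∀ s, HasDerivAt G₂ (g₂ s) s)
    (hg₁ : ContDiff ℝ 1 g₁) (hg₂ : ContDiff ℝ 1 g₂) (hg : ∀ s, |g₁ s| + |g₂ s| ≤ 1)
    (h1 : G₁ 0 = 0) (h2 : G₂ 0 = 0) {ψ₁ ψ₂ : Euc N → Euc N}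
    (s1 : ContDiff ℝ 1 ψ₁) (c1 : HasCompactSupport ψ₁) (b1 : ∀ x, ‖ψ₁ x‖ ≤ 1)
    (s2 : ContDiff ℝ 1 ψ₂) (c2 : HasCompactSupport ψ₂) (b2 : ∀ x, ‖ψ₂ x‖ ≤ 1) :
    (∫ x, G₁ (u x) * dv N ψ₁ x) + (∫ x, G₂ (u x) * dv N ψ₂ x) ≤ tv N u := by
  have l1 : ∀ s, |g₁ s| ≤ 1 := fun s => by linarith [hg s, abs_nonneg (g₂ s)]
  have l2 : ∀ s, |g₂ s| ≤ 1 := fun s => by linarith [hg s, abs_nonneg (g₁ s)]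
  refine le_of_tendsto ((chain_lim hu.1 hG₁ l1 h1 s1 c1).add (chain_lim hu.1 hG₂ l2 h2 s2 c2))
    (Eventually.of_forall fun k => ?_)
  obtain ⟨m, hm⟩ : ∃ m, m = moll N k u := ⟨_, rfl⟩
  have im : Integrable m := hm ▸ moll_integrable hu.1
  have hml : ∀ {ψ : Euc N → Euc N}, ContDiff ℝ 1 ψ → HasCompactSupport ψ → (∀ x, ‖ψ x‖ ≤ 1) →
      ∫ x, m x * dv N ψ x ≤ tv N u := fun h1 h2 h3 => hm ▸ moll_le_tv hu h1 h2 h3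
  rw [← hm]
  have sm : ContDiff ℝ 1 m := hm ▸ moll_smooth hu.1.locallyIntegrable
  have t1 : ContDiff ℝ 1 (fun x => g₁ (m x) • ψ₁ x) := (hg₁.comp sm).smul s1
  have t2 : ContDiff ℝ 1 (fun x => g₂ (m x) • ψ₂ x) := (hg₂.comp sm).smul s2
  have k1 : HasCompactSupport (fun x => g₁ (m x) • ψ₁ x) := supp_smul _ c1
  have k2 : HasCompactSupport (fun x => g₂ (m x) • ψ₂ x) := supp_smul _ c2
  rw [chain_key sm hG₁ hg₁ s1 c1, chain_key sm hG₂ hg₂ s2 c2,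
    ← integral_add (mul_dv_int im t1 k1)
      (mul_dv_int im t2 k2)]
  have e : ∀ x, m x * dv N (fun x => g₁ (m x) • ψ₁ x) x + m x * dv N (fun x => g₂ (m x) • ψ₂ x) x
      = m x * dv N (fun x => g₁ (m x) • ψ₁ x + g₂ (m x) • ψ₂ x) x := fun x => by
    rw [← mul_add]; congr 1
    exact (dv_add (t1.differentiable one_ne_zero x) (t2.differentiable one_ne_zero x)).symm
  rw [integral_congr_ae (ae_of_all _ e)]
  refine hml (t1.add t2) (k1.add k2) fun x => ?_
  calc _ ≤ ‖g₁ (m x) • ψ₁ x‖ + ‖g₂ (m x) • ψ₂ x‖ := norm_add_le _ _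
    _ ≤ |g₁ (m x)| * 1 + |g₂ (m x)| * 1 := by
        rw [norm_smul, norm_smul]
        exact add_le_add (mul_le_mul_of_nonneg_left (b1 x) (abs_nonneg _))
          (mul_le_mul_of_nonneg_left (b2 x) (abs_nonneg _))
    _ ≤ 1 := by linarith [hg (m x)]

/-- splitting of the total variation by `C²` truncations -/
lemma chain_tv {N : ℕ} {u : Euc N → ℝ} (hu : MemBV N u) {G₁ g₁ G₂ g₂ : ℝ → ℝ}
    (hG₁ : ∀ s, HasDerivAt G₁ (g₁ s) s) (hG₂ : ∀ s, HasDerivAt G₂ (g₂ s) s)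
    (hg₁ : ContDiff ℝ 1 g₁) (hg₂ : ContDiff ℝ 1 g₂) (hg : ∀ s, |g₁ s| + |g₂ s| ≤ 1)
    (h1 : G₁ 0 = 0) (h2 : G₂ 0 = 0) :
    MemBV N (fun x => G₁ (u x)) ∧ MemBV N (fun x => G₂ (u x)) ∧
    tv N (fun x => G₁ (u x)) + tv N (fun x => G₂ (u x)) ≤ tv N u := by
  have l1 : ∀ s, |g₁ s| ≤ 1 := fun s => by linarith [hg s, abs_nonneg (g₂ s)]
  have l2 : ∀ s, |g₂ s| ≤ 1 := fun s => by linarith [hg s, abs_nonneg (g₁ s)]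
  have := tv_pair (v := fun x => G₁ (u x)) (w := fun x => G₂ (u x)) (C := tv N u) (by
    rintro r₁ ⟨ψ₁, s1, c1, b1, rfl⟩ r₂ ⟨ψ₂, s2, c2, b2, rfl⟩
    exact chain_le hu hG₁ hG₂ hg₁ hg₂ hg h1 h2 s1 c1 b1 s2 c2 b2)
  exact ⟨⟨comp_integrable hu.1 hG₁ l1 h1, this.1⟩, ⟨comp_integrable hu.1 hG₂ l2 h2, this.2.1⟩,
    this.2.2⟩

/-- the truncation profile -/
def HH (s : ℝ) : ℝ := (s + √(1 + s ^ 2) - 1) / 2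
def hh (s : ℝ) : ℝ := (1 + s / √(1 + s ^ 2)) / 2

lemma sq1_pos (s : ℝ) : 0 < 1 + s ^ 2 := by positivity

lemma hasDeriv_sq1 (s : ℝ) : HasDerivAt (fun s => √(1 + s ^ 2) - 1) (s / √(1 + s ^ 2)) s := by
  have := (((hasDerivAt_pow 2 s).const_add 1).sqrt (sq1_pos s).ne').sub_const 1
  have e : s / √(1 + s ^ 2) = ((2 : ℕ) : ℝ) * s ^ (2 - 1) / (2 * √(1 + s ^ 2)) := by
    rw [Nat.cast_ofNat, mul_div_mul_left _ _ two_ne_zero]; simp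
  rw [e]; exact this

lemma hasDeriv_HH (s : ℝ) : HasDerivAt HH (hh s) s := by
  have := ((hasDerivAt_id s).add (hasDeriv_sq1 s)).div_const 2
  refine this.congr_of_eventuallyEq (Eventually.of_forall fun t => ?_)
  simp [HH]; ring

lemma sd_smooth : ContDiff ℝ 1 (fun s : ℝ => s / √(1 + s ^ 2)) := by
  refine contDiff_id.div ?_ fun s => (Real.sqrt_pos.2 (sq1_pos s)).ne'
  exact (contDiff_const.add (contDiff_id.pow 2)).sqrt fun s => (sq1_pos s).ne'

lemma hh_smooth : ContDiff ℝ 1 hh := by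
  unfold hh; exact (contDiff_const.add sd_smooth).div_const 2

lemma sd_bd (s : ℝ) : |s / √(1 + s ^ 2)| ≤ 1 := by
  rw [abs_div, abs_of_pos (Real.sqrt_pos.2 (sq1_pos s)), div_le_one (Real.sqrt_pos.2 (sq1_pos s))]
  exact Real.abs_le_sqrt (by linarith)

lemma split_HH {N : ℕ} {u : Euc N → ℝ} (hu : MemBV N u) :
    MemBV N (fun x => u x - HH (u x)) ∧ MemBV N (fun x => HH (u x)) ∧
    tv N (fun x => u x - HH (u x)) + tv N (fun x => HH (u x)) ≤ tv N u := by
  refine chain_tv (G₁ := fun s => s - HH s) (g₁ := fun s => 1 - hh s) (g₂ := hh) hu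
    (fun s => (hasDerivAt_id s).sub (hasDeriv_HH s)) hasDeriv_HH (contDiff_const.sub hh_smooth)
    hh_smooth (fun s => ?_) (by simp [HH]) (by simp [HH])
  have := abs_le.1 (sd_bd s)
  rw [abs_of_nonneg, abs_of_nonneg]
  · linarith
  · unfold hh; linarith
  · unfold hh; linarith

lemma sq1_BV {N : ℕ} {u : Euc N → ℝ} (hu : MemBV N u) :
    MemBV N (fun x => √(1 + (u x) ^ 2) - 1) ∧ tv N (fun x => √(1 + (u x) ^ 2) - 1) ≤ tv N u := by
  obtain ⟨h1, h2, h3⟩ := chain_tv (G₁ := fun s => √(1 + s ^ 2) - 1) (G₂ := fun s => 0)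
    (g₂ := fun s => 0) hu
    hasDeriv_sq1 (fun s => hasDerivAt_const s 0) sd_smooth contDiff_const
    (fun s => by simpa using sd_bd s) (by simp) rfl
  exact ⟨h1, by linarith [tv_nonneg h2]⟩

/-- coordinates splitting -/
def consE (n : ℕ) : ℝ × (Fin n → ℝ) ≃ᵐ (Fin (n + 1) → ℝ) :=
  (MeasurableEquiv.piFinSuccAbove (fun _ : Fin (n + 1) => ℝ) 0).symm

lemma consE_apply {n : ℕ} (t : ℝ) (x : Fin n → ℝ) :
    consE n (t, x) = (Fin.cons t x : Fin (n + 1) → ℝ) := by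
  have : consE n (t, x) = (Fin.consEquiv fun _ => ℝ) (t, x) := by
    simp [consE, MeasurableEquiv.piFinSuccAbove]
  rw [this]; rfl

lemma consE_mp (n : ℕ) : MeasurePreserving (consE n) (volume.prod volume) volume :=
  (volume_preserving_piFinSuccAbove (fun _ : Fin (n + 1) => ℝ) 0).symm _

lemma cons_meas {n : ℕ} : Measurable fun p : ℝ × (Fin n → ℝ) =>
    (Fin.cons p.1 p.2 : Fin (n + 1) → ℝ) := by
  have : (fun p : ℝ × (Fin n → ℝ) => (Fin.cons p.1 p.2 : Fin (n + 1) → ℝ)) = consE n :=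
    funext fun p => (consE_apply p.1 p.2).symm
  rw [this]; exact (consE n).measurable

lemma lintegral_cons {n : ℕ} {f : (Fin (n + 1) → ℝ) → ENNReal} (hf : Measurable f) :
    ∫⁻ x, f x = ∫⁻ t, ∫⁻ x', f (Fin.cons t x') := by
  rw [← (consE_mp n).lintegral_comp hf,
    lintegral_prod (fun p => f (consE n p)) (hf.comp (consE n).measurable).aemeasurable]
  simp only [consE_apply]

lemma lintegral_cons' {n : ℕ} {f : (Fin (n + 1) → ℝ) → ENNReal} (hf : Measurable f) :
    ∫⁻ x, f x = ∫⁻ x', ∫⁻ t, f (Fin.cons t x') := by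
  rw [← (consE_mp n).lintegral_comp hf,
    lintegral_prod_symm (fun p => f (consE n p)) (hf.comp (consE n).measurable).aemeasurable]
  simp only [consE_apply]

lemma integrable_cons {n : ℕ} {f : (Fin (n + 1) → ℝ) → ℝ} (hf : Integrable f) :
    Integrable (fun p : ℝ × (Fin n → ℝ) => f (Fin.cons p.1 p.2)) (volume.prod volume) := by
  have := ((consE_mp n).integrable_comp_emb (consE n).measurableEmbedding).2 hf
  refine this.congr (ae_of_all _ fun p => ?_)
  simp only [Function.comp]
  rw [← consE_apply]

lemma integral_cons {n : ℕ} {f : (Fin (n + 1) → ℝ) → ℝ} (hf : Integrable f) :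
    ∫ x, f x = ∫ t, ∫ x', f (Fin.cons t x') := by
  rw [← (consE_mp n).integral_comp (consE n).measurableEmbedding]
  have h2 := integral_prod _ (integrable_cons hf)
  rw [← h2]
  refine integral_congr_ae (ae_of_all _ fun p => ?_)
  show f (consE n (p.1, p.2)) = _
  rw [consE_apply]

lemma integral_cons' {n : ℕ} {f : (Fin (n + 1) → ℝ) → ℝ} (hf : Integrable f) :
    ∫ x, f x = ∫ x', ∫ t, f (Fin.cons t x') := by
  rw [← (consE_mp n).integral_comp (consE n).measurableEmbedding]
  have h2 := integral_prod_symm _ (integrable_cons hf)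
  rw [← h2]
  refine integral_congr_ae (ae_of_all _ fun p => ?_)
  show f (consE n (p.1, p.2)) = _
  rw [consE_apply]

lemma ae_cons {n : ℕ} {s : Set (Fin (n + 1) → ℝ)} (hs : MeasurableSet s) :
    (∀ᵐ x, x ∈ s) ↔ ∀ᵐ t : ℝ, ∀ᵐ x' : Fin n → ℝ, (Fin.cons t x' : Fin (n + 1) → ℝ) ∈ s := by
  have h1 : (∀ᵐ x, x ∈ s) ↔ ∀ᵐ p ∂((volume : Measure ℝ).prod (volume : Measure (Fin n → ℝ))),
      p ∈ consE n ⁻¹' s := by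
    rw [← (consE_mp n).map_eq, (consE n).measurableEmbedding.ae_map_iff]
    rfl
  rw [h1, Measure.ae_prod_mem_iff_ae_ae_mem ((consE n).measurable hs)]
  simp only [Set.mem_preimage, consE_apply]

/-- volume of the Euclidean unit ball -/
def beta (n : ℕ) : ℝ := (volume (Metric.ball (0 : Euc n) 1)).toReal

lemma beta_pos (n : ℕ) : 0 < beta n :=
  ENNReal.toReal_pos (Metric.measure_ball_pos _ _ one_pos).ne' measure_ball_lt_top.ne

lemma beta_ofReal (n : ℕ) : volume (Metric.ball (0 : Euc n) 1) = ENNReal.ofReal (beta n) :=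
  (ENNReal.ofReal_toReal measure_ball_lt_top.ne).symm

lemma vol_sq (n : ℕ) {ρ : ℝ} (hρ : 0 < ρ) :
    volume {x : Fin n → ℝ | ∑ i, x i ^ 2 < ρ} = ENNReal.ofReal (√ρ ^ n * beta n) := by
  have h1 : (WithLp.ofLp : Euc n → _) ⁻¹' {x : Fin n → ℝ | ∑ i, x i ^ 2 < ρ}
      = Metric.ball (0 : Euc n) √ρ := by
    ext x
    simp only [Set.mem_preimage, Set.mem_ofPred_eq, mem_ball_zero_iff]
    rw [EuclideanSpace.norm_eq, Real.sqrt_lt_sqrt_iff (Finset.sum_nonneg fun i _ => by positivity)]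
    simp
  have hm : MeasurableSet {x : Fin n → ℝ | ∑ i, x i ^ 2 < ρ} :=
    measurableSet_lt (by fun_prop) measurable_const
  rw [← (PiLp.volume_preserving_ofLp (Fin n)).measure_preimage hm.nullMeasurableSet, h1,
    Measure.addHaar_ball_of_pos _ _ (Real.sqrt_pos.2 hρ), beta_ofReal,
    ENNReal.ofReal_mul (by positivity)]
  simp

/-- the slice weight -/
def wt (n : ℕ) (s : ℝ) : ℝ := √(1 - s ^ 2) ^ n

lemma wt_cont (n : ℕ) : Continuous (wt n) := by unfold wt; fun_prop
lemma wt_nonneg (n : ℕ) (s : ℝ) : 0 ≤ wt n s := by unfold wt; positivity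
lemma wt_pos (n : ℕ) {s : ℝ} (h : s ∈ Set.Ioo (-1 : ℝ) 1) : 0 < wt n s := by
  have : 0 < 1 - s ^ 2 := by nlinarith [h.1, h.2]
  unfold wt; have := Real.sqrt_pos.2 this; positivity

def kap (n : ℕ) : ℝ := ∫ s in (-1 : ℝ)..1, wt n s

lemma kap_pos (n : ℕ) : 0 < kap n :=
  intervalIntegral.intervalIntegral_pos_of_pos_on ((wt_cont n).intervalIntegrable _ _)
    (fun _ h => wt_pos n h) (by norm_num)

lemma beta_succ (n : ℕ) : beta (n + 1) = beta n * kap n := by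
  have hm : MeasurableSet {x : Fin (n + 1) → ℝ | ∑ i, x i ^ 2 < 1} :=
    measurableSet_lt (by fun_prop) measurable_const
  have h := vol_sq (n + 1) one_pos
  simp only [Real.sqrt_one, one_pow, one_mul] at h
  rw [← lintegral_indicator_one hm, lintegral_cons (measurable_one.indicator hm)] at h
  have e : ∀ t : ℝ, ∫⁻ x' : Fin n → ℝ, Set.indicator {x : Fin (n + 1) → ℝ | ∑ i, x i ^ 2 < 1} 1
      (Fin.cons t x' : Fin (n + 1) → ℝ) =
      Set.indicator (Set.Ioo (-1 : ℝ) 1) (fun t => ENNReal.ofReal (wt n t * beta n)) t := by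
    intro t
    have e1 : (fun x' : Fin n → ℝ => Set.indicator {x : Fin (n + 1) → ℝ | ∑ i, x i ^ 2 < 1}
        (1 : (Fin (n + 1) → ℝ) → ENNReal) (Fin.cons t x' : Fin (n + 1) → ℝ)) =
        Set.indicator {x : Fin n → ℝ | ∑ i, x i ^ 2 < 1 - t ^ 2} 1 := by
      ext x'
      simp only [Set.indicator, Set.mem_ofPred_eq, Fin.sum_univ_succ, Fin.cons_zero, Fin.cons_succ]
      have : t ^ 2 + ∑ i, x' i ^ 2 < 1 ↔ ∑ i, x' i ^ 2 < 1 - t ^ 2 := by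
        constructor <;> intro h <;> linarith
      simp only [this]; rfl
    rw [e1, lintegral_indicator_one (measurableSet_lt (by fun_prop) measurable_const)]
    by_cases ht : t ∈ Set.Ioo (-1 : ℝ) 1
    · rw [Set.indicator_of_mem ht, vol_sq n (by nlinarith [ht.1, ht.2])]; rfl
    · rw [Set.indicator_of_notMem ht]
      have : {x : Fin n → ℝ | ∑ i, x i ^ 2 < 1 - t ^ 2} = ∅ := by
        ext x
        simp only [Set.mem_ofPred_eq, Set.mem_empty_iff_false, iff_false, not_lt]
        have h1 : 1 ≤ t ^ 2 := by
          by_contra h; push Not at h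
          exact ht (abs_lt.1 ((sq_lt_one_iff_abs_lt_one t).1 h))
        have : 0 ≤ ∑ i, x i ^ 2 := Finset.sum_nonneg fun i _ => by positivity
        linarith
      rw [this, measure_empty]
  simp only [e] at h
  rw [lintegral_indicator measurableSet_Ioo, ← ofReal_integral_eq_lintegral_ofReal] at h
  · rw [integral_mul_const, ← integral_Ioc_eq_integral_Ioo,
      ← intervalIntegral.integral_of_le (by norm_num)] at h
    have h0 : 0 ≤ kap n * beta n := (mul_pos (kap_pos n) (beta_pos n)).le
    have := (ENNReal.ofReal_eq_ofReal_iff h0 (beta_pos (n + 1)).le).1 h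
    rw [← this, mul_comm]
  · refine Integrable.mul_const ?_ _
    exact ((wt_cont n).integrableOn_Icc (a := -1) (b := 1)).mono_set Set.Ioo_subset_Icc_self
  · exact ae_of_all _ fun t => mul_nonneg (wt_nonneg n t) (beta_pos n).le

/-- normalized slice distribution function -/
def Gn (n : ℕ) (x : ℝ) : ℝ := (kap n)⁻¹ * ∫ s in (-1 : ℝ)..x, wt n s

lemma Gn_deriv (n : ℕ) (x : ℝ) : HasDerivAt (Gn n) ((kap n)⁻¹ * wt n x) x :=
  ((wt_cont n).integral_hasStrictDerivAt (-1) x).hasDerivAt.const_mul _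

lemma Gn_cont (n : ℕ) : Continuous (Gn n) :=
  continuous_iff_continuousAt.2 fun x => (Gn_deriv n x).continuousAt

lemma Gn_left (n : ℕ) : Gn n (-1) = 0 := by simp [Gn]
lemma Gn_right (n : ℕ) : Gn n 1 = 1 := by
  have : Gn n 1 = (kap n)⁻¹ * kap n := rfl
  rw [this, inv_mul_cancel₀ (kap_pos n).ne']

lemma Gn_strictMono (n : ℕ) : StrictMonoOn (Gn n) (Set.Icc (-1) 1) := by
  refine strictMonoOn_of_deriv_pos (convex_Icc _ _) (Gn_cont n).continuousOn fun x hx => ?_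
  rw [interior_Icc] at hx
  rw [(Gn_deriv n x).deriv]
  exact mul_pos (inv_pos.2 (kap_pos n)) (wt_pos n hx)

lemma Gam_ex (n : ℕ) (y : ℝ) : ∃ x ∈ Set.Icc (-1 : ℝ) 1,
    Gn n x = (Set.projIcc (0 : ℝ) 1 zero_le_one y : ℝ) := by
  have h := intermediate_value_Icc (by norm_num : (-1 : ℝ) ≤ 1) (Gn_cont n).continuousOn
  rw [Gn_left, Gn_right] at h
  exact h (Set.projIcc (0 : ℝ) 1 zero_le_one y).2

def Gam (n : ℕ) (y : ℝ) : ℝ := (Gam_ex n y).choose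

lemma Gam_mem (n : ℕ) (y : ℝ) : Gam n y ∈ Set.Icc (-1 : ℝ) 1 := (Gam_ex n y).choose_spec.1
lemma Gn_Gam' (n : ℕ) (y : ℝ) : Gn n (Gam n y) = (Set.projIcc (0 : ℝ) 1 zero_le_one y : ℝ) :=
  (Gam_ex n y).choose_spec.2
lemma Gn_Gam (n : ℕ) {y : ℝ} (hy : y ∈ Set.Icc (0 : ℝ) 1) : Gn n (Gam n y) = y := by
  rw [Gn_Gam', Set.projIcc_of_mem _ hy]

lemma Gam_mono (n : ℕ) : Monotone (Gam n) := by
  intro x y h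
  rw [← (Gn_strictMono n).le_iff_le (Gam_mem n x) (Gam_mem n y), Gn_Gam', Gn_Gam']
  exact_mod_cast Set.monotone_projIcc (zero_le_one (α := ℝ)) h

lemma Gam_Gn (n : ℕ) {x : ℝ} (hx : x ∈ Set.Icc (-1 : ℝ) 1) : Gam n (Gn n x) = x := by
  apply (Gn_strictMono n).injOn (Gam_mem n _) hx
  apply Gn_Gam
  have m := (Gn_strictMono n).monotoneOn
  refine ⟨?_, ?_⟩
  · rw [← Gn_left n]; exact m (by simp) hx hx.1
  · rw [← Gn_right n]; exact m hx (by simp) hx.2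

lemma Gam_Ioo (n : ℕ) {y : ℝ} (hy : y ∈ Set.Ioo (0 : ℝ) 1) : Gam n y ∈ Set.Ioo (-1 : ℝ) 1 := by
  have h := Gam_mem n y
  have e := Gn_Gam n ⟨hy.1.le, hy.2.le⟩
  refine ⟨lt_of_le_of_ne h.1 fun h1 => ?_, lt_of_le_of_ne h.2 fun h1 => ?_⟩
  · rw [← h1, Gn_left] at e; exact hy.1.ne e
  · rw [h1, Gn_right] at e; exact hy.2.ne e.symm

lemma Gam_deriv (n : ℕ) {y : ℝ} (hy : y ∈ Set.Ioo (0 : ℝ) 1) :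
    HasDerivAt (Gam n) (kap n / wt n (Gam n y)) y := by
  have hI := Gam_Ioo n hy
  have hn : Set.Icc (0 : ℝ) 1 ∈ 𝓝 y := Icc_mem_nhds hy.1 hy.2
  have hc : ContinuousAt (Gam n) y := by
    refine continuousAt_of_monotoneOn_of_image_mem_nhds ((Gam_mono n).monotoneOn (Set.Icc 0 1)) hn ?_
    refine mem_of_superset (Icc_mem_nhds hI.1 hI.2) fun x hx => ⟨Gn n x, ?_, Gam_Gn n hx⟩
    have m := (Gn_strictMono n).monotoneOn
    refine ⟨?_, ?_⟩
    · rw [← Gn_left n]; exact m (by simp) hx hx.1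
    · rw [← Gn_right n]; exact m hx (by simp) hx.2
  have := HasDerivAt.of_local_left_inverse hc (Gn_deriv n (Gam n y))
    (mul_pos (inv_pos.2 (kap_pos n)) (wt_pos n hI)).ne'
    (by filter_upwards [hn] with z hz using Gn_Gam n hz)
  rw [mul_inv, inv_inv, ← div_eq_mul_inv] at this
  exact this

/-- one-dimensional weak derivative inequality -/
lemma weak1 {a a' : ℝ → ℝ} (ha : Monotone a) (hb : ∀ t, |a t| ≤ 1)
    (hd : ∀ᵐ t, a' t = 0 ∨ HasDerivAt a (a' t) t) {η η' : ℝ → ℝ} (hη : ∀ t, HasDerivAt η (η' t) t)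
    (hη' : Continuous η') (hc : HasCompactSupport η) (h0 : ∀ t, 0 ≤ η t) :
    0 ≤ - ∫ t, a t * η' t ∧
    ∫⁻ t, ENNReal.ofReal (a' t) * ENNReal.ofReal (η t) ≤ ENNReal.ofReal (- ∫ t, a t * η' t) := by
  have hηc : Continuous η := continuous_iff_continuousAt.2 fun t => (hη t).continuousAt
  have hc' : HasCompactSupport η' := by
    have : η' = deriv η := funext fun t => (hη t).deriv.symm
    rw [this]; exact hc.deriv
  obtain ⟨C, hC⟩ := hη'.bounded_above_of_compact_support hc'
  have hC0 : 0 ≤ C := (norm_nonneg _).trans (hC 0)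
  have hiη : Integrable η := hηc.integrable_of_hasCompactSupport hc
  have lip : ∀ x y, |η x - η y| ≤ C * |x - y| := fun x y => by
    simpa using Convex.norm_image_sub_le_of_norm_hasDerivWithin_le (f := η) (f' := η') (C := C)
      (s := Set.univ) (x := y) (y := x) (fun s _ => (hη s).hasDerivWithinAt) (fun s _ => hC s)
      convex_univ trivial trivial
  let h : ℕ → ℝ := fun k => ((k : ℝ) + 1)⁻¹
  have hpos : ∀ k, 0 < h k := fun k => by simp only [h]; positivity
  have hle : ∀ k, h k ≤ 1 := fun k => inv_le_one_of_one_le₀ (by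
    have := Nat.cast_nonneg (α := ℝ) k; linarith)
  have hlim : Tendsto h atTop (𝓝 0) := tendsto_inv_atTop_zero.comp
      (tendsto_atTop_add_const_right _ _ tendsto_natCast_atTop_atTop)
  let d : ℕ → ℝ → ℝ := fun k t => (a (t + h k) - a t) / h k
  have dnn : ∀ k t, 0 ≤ d k t := fun k t =>
    div_nonneg (sub_nonneg.2 (ha (by linarith [hpos k]))) (hpos k).le
  have am : Measurable a := ha.measurable
  have hia : ∀ {f : ℝ → ℝ} (c : ℝ), Integrable f → Integrable fun t => a (t + c) * f t := by
    intro f c hf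
    exact hf.bdd_mul (c := 1) (am.comp (measurable_add_const c)).aestronglyMeasurable
      (ae_of_all _ fun t => hb _)
  have hia0 : ∀ {f : ℝ → ℝ}, Integrable f → Integrable fun t => a t * f t := by
    intro f hf
    simpa using hia 0 hf
  have e1 : ∀ k, ∫ t, d k t * η t = ∫ t, a t * ((η (t - h k) - η t) / h k) := by
    intro k
    have s1 : ∫ t, a (t + h k) * η t = ∫ t, a t * η (t - h k) := by
      rw [← integral_sub_right_eq_self (fun t => a (t + h k) * η t) (h k)]
      simp
    have i1 : Integrable fun t => η (t - h k) := hiη.comp_sub_right _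
    have : ∀ t, d k t * η t = (a (t + h k) * η t - a t * η t) / h k := fun t => by
      simp only [d]; ring
    simp only [this]
    rw [integral_div, integral_sub (hia _ hiη) (hia0 hiη), s1,
      ← integral_sub (hia0 i1) (hia0 hiη), ← integral_div]
    congr 1; ext t; ring
  have hid : ∀ k, Integrable fun t => d k t * η t := fun k => by
    have := ((hia (h k) hiη).sub (hia0 hiη)).div_const (h k)
    refine this.congr (ae_of_all _ fun t => ?_)
    simp only [d, Pi.sub_apply]; ring
  obtain ⟨r, hr⟩ := hc.isCompact.isBounded.subset_closedBall (0 : ℝ)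
  have hz : ∀ t, r < |t| → η t = 0 := fun t ht => by
    by_contra h
    have := hr (subset_tsupport _ h)
    rw [Metric.mem_closedBall, dist_zero_right, Real.norm_eq_abs] at this
    linarith
  have lim : Tendsto (fun k => ∫ t, d k t * η t) atTop (𝓝 (∫ t, a t * (- η' t))) := by
    simp only [e1]
    refine tendsto_integral_of_dominated_convergence
      ((Set.Icc (-(r + 1)) (r + 1)).indicator fun _ => C) ?_ ?_ ?_ ?_
    · intro k
      exact (am.mul (((hηc.measurable.comp (measurable_sub_const _)).sub
        hηc.measurable).div_const _)).aestronglyMeasurable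
    · exact (integrable_indicator_iff measurableSet_Icc).2 (integrableOn_const (by simp) (by simp))
    · intro k
      refine ae_of_all _ fun t => ?_
      by_cases ht : t ∈ Set.Icc (-(r + 1)) (r + 1)
      · rw [Set.indicator_of_mem ht, norm_mul, norm_div]
        have l1 := lip (t - h k) t
        have l2 : |η (t - h k) - η t| ≤ C * h k := by
          simpa [abs_of_pos (hpos k)] using l1
        calc |a t| * (‖η (t - h k) - η t‖ / ‖h k‖) ≤ 1 * C := by
              refine mul_le_mul (hb t) ?_ (by positivity) zero_le_one
              rw [Real.norm_of_nonneg (hpos k).le, div_le_iff₀ (hpos k)]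
              exact l2
          _ = C := one_mul _
      · rw [Set.indicator_of_notMem ht]
        have h1 : r + 1 < |t| := by
          by_contra hh; push Not at hh; exact ht (abs_le.1 hh)
        have h2 : r < |t - h k| := by
          have := abs_sub_abs_le_abs_sub t (h k)
          rw [abs_of_pos (hpos k)] at this
          linarith [hle k]
        rw [hz t (by linarith), hz _ h2]; simp
    · refine ae_of_all _ fun t => ?_
      refine Tendsto.const_mul _ ?_
      have t1 := (hη t).tendsto_slope_zero
      have t2 : Tendsto (fun k => - h k) atTop (𝓝[≠] 0) := by
        refine tendsto_nhdsWithin_iff.2 ⟨by simpa using hlim.neg, Eventually.of_forall fun k => ?_⟩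
        simp [(hpos k).ne']
      have t3 := (t1.comp t2).neg
      refine t3.congr fun k => ?_
      simp only [Function.comp, smul_eq_mul]
      rw [← sub_eq_add_neg, inv_neg]; ring
  have e2 : ∫ t, a t * (- η' t) = - ∫ t, a t * η' t := by
    rw [← integral_neg]; congr 1; ext t; ring
  rw [e2] at lim
  refine ⟨ge_of_tendsto' lim fun k => integral_nonneg fun t => mul_nonneg (dnn k t) (h0 t), ?_⟩
  have lim2 : Tendsto (fun k => ∫⁻ t, ENNReal.ofReal (d k t * η t)) atTop
      (𝓝 (ENNReal.ofReal (- ∫ t, a t * η' t))) := by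
    have := (ENNReal.continuous_ofReal.tendsto _).comp lim
    refine this.congr fun k => ?_
    exact ofReal_integral_eq_lintegral_ofReal (hid k)
      (ae_of_all _ fun t => mul_nonneg (dnn k t) (h0 t))
  rw [← lim2.liminf_eq]
  refine le_trans (lintegral_mono_ae ?_) (lintegral_liminf_le fun k => ?_)
  · filter_upwards [hd] with t ht
    rcases ht with ht | ht
    · simp [ht]
    · have t1 := ht.tendsto_slope_zero
      have t2 : Tendsto h atTop (𝓝[≠] 0) :=
        tendsto_nhdsWithin_iff.2 ⟨hlim, Eventually.of_forall fun k => (hpos k).ne'⟩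
      have t3 : Tendsto (fun k => d k t) atTop (𝓝 (a' t)) := by
        refine (t1.comp t2).congr fun k => ?_
        simp only [Function.comp, smul_eq_mul, d]; ring
      have t4 := (ENNReal.continuous_ofReal.tendsto _).comp (t3.mul_const (η t))
      rw [← ENNReal.ofReal_mul' (h0 t)]
      exact t4.liminf_eq.ge
  · exact ((((am.comp (measurable_add_const _)).sub am).div_const _).mul
      hηc.measurable).ennreal_ofReal

/-- distribution function of a slice-measure density -/
def FF (m : ℝ → ENNReal) (t : ℝ) : ℝ := (∫⁻ s in Set.Iio t, m s).toReal / (∫⁻ s, m s).toReal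
def aa (n : ℕ) (m : ℝ → ENNReal) (t : ℝ) : ℝ := Gam n (FF m t)
def bb (n : ℕ) (m : ℝ → ENNReal) (t : ℝ) : ℝ := √(1 - aa n m t ^ 2)
open Classical in
def ad (n : ℕ) (m : ℝ → ENNReal) (t : ℝ) : ℝ :=
  if FF m t ∈ Set.Ioo (0 : ℝ) 1 then
    kap n * ((m t).toReal / (∫⁻ s, m s).toReal) / bb n m t ^ n else 0

lemma bb_nonneg {n : ℕ} {m : ℝ → ENNReal} (t : ℝ) : 0 ≤ bb n m t := Real.sqrt_nonneg _
lemma ad_nonneg {n : ℕ} {m : ℝ → ENNReal} (t : ℝ) : 0 ≤ ad n m t := by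
  unfold ad
  split_ifs
  · have := bb_nonneg (n := n) (m := m) t
    have := kap_pos n
    positivity
  · exact le_rfl

lemma FF_nonneg (m : ℝ → ENNReal) (t : ℝ) : 0 ≤ FF m t := by unfold FF; positivity

lemma FF_mono (m : ℝ → ENNReal) : Monotone (FF m) := by
  intro s t h
  unfold FF
  by_cases hV : ∫⁻ s, m s = ⊤
  · simp [hV]
  · refine div_le_div_of_nonneg_right ?_ ENNReal.toReal_nonneg
    refine ENNReal.toReal_mono ?_ (lintegral_mono_set (Set.Iio_subset_Iio h))
    exact ne_top_of_le_ne_top hV (setLIntegral_le_lintegral _ _)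

lemma FF_le_one (m : ℝ → ENNReal) (t : ℝ) : FF m t ≤ 1 := by
  unfold FF
  by_cases hV : ∫⁻ s, m s = ⊤
  · simp [hV]
  · exact div_le_one_of_le₀ (ENNReal.toReal_mono hV (setLIntegral_le_lintegral _ _))
      ENNReal.toReal_nonneg

lemma aa_mono (n : ℕ) (m : ℝ → ENNReal) : Monotone (aa n m) := (Gam_mono n).comp (FF_mono m)
lemma aa_abs (n : ℕ) (m : ℝ → ENNReal) (t : ℝ) : |aa n m t| ≤ 1 := abs_le.2 (Gam_mem n _)
lemma Gn_aa (n : ℕ) (m : ℝ → ENNReal) (t : ℝ) : Gn n (aa n m t) = FF m t :=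
  Gn_Gam n ⟨FF_nonneg m t, FF_le_one m t⟩
lemma ab_sq (n : ℕ) (m : ℝ → ENNReal) (t : ℝ) : aa n m t ^ 2 + bb n m t ^ 2 = 1 := by
  have := (sq_le_one_iff_abs_le_one _).2 (aa_abs n m t)
  unfold bb; rw [Real.sq_sqrt (by linarith)]; ring

lemma FF_eq {m : ℝ → ENNReal} (hm : Measurable m) (hV : ∫⁻ s, m s ≠ ⊤) (t : ℝ) :
    FF m t = (∫ s in Set.Iic t, (m s).toReal) / (∫⁻ s, m s).toReal := by
  unfold FF
  rw [integral_Iic_eq_integral_Iio, integral_toReal hm.aemeasurable]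
  exact ae_restrict_of_ae (ae_lt_top hm hV)

lemma m_int {m : ℝ → ENNReal} (hm : Measurable m) (hV : ∫⁻ s, m s ≠ ⊤) :
    Integrable fun s => (m s).toReal := integrable_toReal_of_lintegral_ne_top hm.aemeasurable hV

lemma FF_deriv {m : ℝ → ENNReal} (hm : Measurable m) (hV : ∫⁻ s, m s ≠ ⊤) :
    ∀ᵐ t, HasDerivAt (FF m) ((m t).toReal / (∫⁻ s, m s).toReal) t := by
  have hi := m_int hm hV
  filter_upwards [LocallyIntegrable.ae_hasDerivAt_integral hi.locallyIntegrable] with t ht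
  have h1 := ((ht 0).const_add (∫ s in Set.Iic 0, (m s).toReal)).div_const (∫⁻ s, m s).toReal
  refine h1.congr_of_eventuallyEq (Eventually.of_forall fun s => ?_)
  simp only [FF_eq hm hV]
  rw [← intervalIntegral.integral_Iic_sub_Iic hi.integrableOn hi.integrableOn]
  congr 1; ring

lemma aa_deriv (n : ℕ) {m : ℝ → ENNReal} (hm : Measurable m) :
    ∀ᵐ t, ad n m t = 0 ∨ HasDerivAt (aa n m) (ad n m t) t := by
  by_cases hV : ∫⁻ s, m s = ⊤
  · refine ae_of_all _ fun t => Or.inl ?_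
    simp [ad, FF, hV]
  filter_upwards [FF_deriv hm hV] with t ht
  by_cases h : FF m t ∈ Set.Ioo (0 : ℝ) 1
  · right
    have := (Gam_deriv n h).comp t ht
    unfold ad
    rw [if_pos h]
    have e : kap n / wt n (Gam n (FF m t)) * ((m t).toReal / (∫⁻ s, m s).toReal) =
        kap n * ((m t).toReal / (∫⁻ s, m s).toReal) / bb n m t ^ n := by
      have : bb n m t ^ n = wt n (Gam n (FF m t)) := rfl
      rw [this]; ring
    rw [← e]; exact this
  · left; unfold ad; rw [if_neg h]

lemma ad_key (n : ℕ) {m : ℝ → ENNReal} (hm : Measurable m) (hV : ∫⁻ s, m s ≠ ⊤)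
    (hV0 : ∫⁻ s, m s ≠ 0) :
    ∀ᵐ t, m t ≠ 0 → m t ≠ ⊤ ∧ 0 < bb n m t ∧ FF m t ∈ Set.Ioo (0 : ℝ) 1 ∧
      ad n m t * bb n m t ^ n = kap n * (m t).toReal / (∫⁻ s, m s).toReal := by
  filter_upwards [FF_deriv hm hV, ae_lt_top hm hV] with t ht ht' h0
  have hp : (m t).toReal / (∫⁻ s, m s).toReal ≠ 0 :=
    div_ne_zero (ENNReal.toReal_ne_zero.2 ⟨h0, ht'.ne⟩) (ENNReal.toReal_ne_zero.2 ⟨hV0, hV⟩)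
  have hF : FF m t ∈ Set.Ioo (0 : ℝ) 1 := by
    refine ⟨lt_of_le_of_ne (FF_nonneg m t) fun h => ?_, lt_of_le_of_ne (FF_le_one m t) fun h => ?_⟩
    · have : IsLocalMin (FF m) t := Eventually.of_forall fun s => by
        rw [← h]; exact FF_nonneg m s
      exact hp (this.hasDerivAt_eq_zero ht)
    · have : IsLocalMax (FF m) t := Eventually.of_forall fun s => by
        rw [h]; exact FF_le_one m s
      exact hp (this.hasDerivAt_eq_zero ht)
  have hb : 0 < bb n m t := by
    have := Gam_Ioo n hF
    refine Real.sqrt_pos.2 ?_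
    have h2 : aa n m t ^ 2 < 1 := (sq_lt_one_iff_abs_lt_one _).2 (abs_lt.2 this)
    linarith
  refine ⟨ht'.ne, hb, hF, ?_⟩
  unfold ad
  rw [if_pos hF, div_mul_cancel₀ _ (pow_pos hb n).ne', mul_div_assoc]

section
variable {Ω : Type} [MeasurableSpace Ω] {M : Ω → ℝ → ENNReal}

lemma meas_FF (hM : Measurable fun p : Ω × ℝ => M p.1 p.2) :
    Measurable fun p : Ω × ℝ => FF (M p.1) p.2 := by
  unfold FF
  have h1 : Measurable fun ω => ∫⁻ s, M ω s := hM.lintegral_prod_right'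
  have h2 : Measurable fun p : Ω × ℝ => ∫⁻ s in Set.Iio p.2, M p.1 s := by
    have e : (fun p : Ω × ℝ => ∫⁻ s in Set.Iio p.2, M p.1 s) =
        fun p : Ω × ℝ => ∫⁻ s, Set.indicator {z : (Ω × ℝ) × ℝ | z.2 < z.1.2}
          (fun z => M z.1.1 z.2) (p, s) := by
      ext p
      rw [← lintegral_indicator measurableSet_Iio]
      rfl
    rw [e]
    refine Measurable.lintegral_prod_right' ?_
    refine Measurable.indicator ?_ (measurableSet_lt measurable_snd (by fun_prop))
    exact hM.comp (measurable_fst.fst.prodMk measurable_snd)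
  exact h2.ennreal_toReal.div (h1.comp measurable_fst).ennreal_toReal

lemma meas_aa (n : ℕ) (hM : Measurable fun p : Ω × ℝ => M p.1 p.2) :
    Measurable fun p : Ω × ℝ => aa n (M p.1) p.2 :=
  (Gam_mono n).measurable.comp (meas_FF hM)

lemma meas_bb (n : ℕ) (hM : Measurable fun p : Ω × ℝ => M p.1 p.2) :
    Measurable fun p : Ω × ℝ => bb n (M p.1) p.2 := by
  have := meas_aa n hM
  unfold bb; fun_prop

lemma meas_ad (n : ℕ) (hM : Measurable fun p : Ω × ℝ => M p.1 p.2) :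
    Measurable fun p : Ω × ℝ => ad n (M p.1) p.2 := by
  have h1 : Measurable fun ω => ∫⁻ s, M ω s := hM.lintegral_prod_right'
  have h2 := meas_bb n hM
  unfold ad
  refine Measurable.ite ((meas_FF hM) measurableSet_Ioo) ?_ measurable_const
  exact ((hM.ennreal_toReal.div (h1.comp measurable_fst).ennreal_toReal).const_mul _).div
    (h2.pow_const n)
end

/-- nonnegative test functions with their partial derivatives -/
structure IsTest (n : ℕ) (η : (Fin n → ℝ) → ℝ) (η' : Fin n → (Fin n → ℝ) → ℝ) : Prop where
  cont : Continuous η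
  supp : HasCompactSupport η
  nn : ∀ x, 0 ≤ η x
  cont' : ∀ i, Continuous (η' i)
  supp' : ∀ i, HasCompactSupport (η' i)
  der : ∀ i x, HasDerivAt (fun s => η (Function.update x i s)) (η' i x) (x i)

/-- `D` is a lower bound for the distributional divergence of `T` -/
def WeakDiv (n : ℕ) (T : (Fin n → ℝ) → Fin n → ℝ) (D : (Fin n → ℝ) → ENNReal) : Prop :=
  ∀ η η', IsTest n η η' → 0 ≤ (- ∫ x, ∑ i, T x i * η' i x) ∧
    ∫⁻ x, D x * ENNReal.ofReal (η x) ≤ ENNReal.ofReal (- ∫ x, ∑ i, T x i * η' i x)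

lemma cons_cont_right {n : ℕ} (t : ℝ) :
    Continuous fun x : Fin n → ℝ => (Fin.cons t x : Fin (n + 1) → ℝ) :=
  continuous_const.finCons continuous_id

lemma cons_cont_left {n : ℕ} (x : Fin n → ℝ) :
    Continuous fun t : ℝ => (Fin.cons t x : Fin (n + 1) → ℝ) :=
  continuous_pi fun i => by
    refine Fin.cases ?_ (fun j => ?_) i
    · simp only [Fin.cons_zero]; exact continuous_id
    · simpa using continuous_const

lemma supp_cons_right {n : ℕ} {η : (Fin (n + 1) → ℝ) → ℝ} (h : HasCompactSupport η) (t : ℝ) :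
    HasCompactSupport fun x : Fin n → ℝ => η (Fin.cons t x) := by
  have hK : IsCompact ((fun y : Fin (n + 1) → ℝ => Fin.tail y) '' tsupport η) :=
    h.isCompact.image (by fun_prop)
  refine HasCompactSupport.of_support_subset_isCompact hK fun x hx => ?_
  exact ⟨Fin.cons t x, subset_tsupport _ hx, by simp⟩

lemma supp_cons_left {n : ℕ} {η : (Fin (n + 1) → ℝ) → ℝ} (h : HasCompactSupport η)
    (x : Fin n → ℝ) : HasCompactSupport fun t : ℝ => η (Fin.cons t x) := by
  have hK : IsCompact ((fun y : Fin (n + 1) → ℝ => y 0) '' tsupport η) :=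
    h.isCompact.image (by fun_prop)
  refine HasCompactSupport.of_support_subset_isCompact hK fun t hx => ?_
  exact ⟨Fin.cons t x, subset_tsupport _ hx, by simp⟩

lemma IsTest.slice {n : ℕ} {η : (Fin (n + 1) → ℝ) → ℝ} {η' : Fin (n + 1) → (Fin (n + 1) → ℝ) → ℝ}
    (h : IsTest (n + 1) η η') (t : ℝ) :
    IsTest n (fun x => η (Fin.cons t x)) (fun i x => η' i.succ (Fin.cons t x)) where
  cont := h.cont.comp (cons_cont_right t)
  supp := supp_cons_right h.supp t
  nn x := h.nn _
  cont' i := (h.cont' _).comp (cons_cont_right t)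
  supp' i := supp_cons_right (h.supp' _) t
  der i x := by
    have := h.der i.succ (Fin.cons t x)
    simpa [← Fin.cons_update] using this

lemma IsTest.line {n : ℕ} {η : (Fin (n + 1) → ℝ) → ℝ} {η' : Fin (n + 1) → (Fin (n + 1) → ℝ) → ℝ}
    (h : IsTest (n + 1) η η') (x : Fin n → ℝ) (t : ℝ) :
    HasDerivAt (fun s => η (Fin.cons s x)) (η' 0 (Fin.cons t x)) t := by
  simpa using h.der 0 (Fin.cons t x)

lemma sum_sq_le_abs {n : ℕ} {v : Fin n → ℝ} (h : ∑ i, v i ^ 2 ≤ 1) (i : Fin n) : |v i| ≤ 1 := by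
  rw [← sq_le_one_iff_abs_le_one]
  exact (Finset.single_le_sum (f := fun i => v i ^ 2) (fun i _ => sq_nonneg _)
    (Finset.mem_univ i)).trans h

lemma T_int {n : ℕ} {T : (Fin n → ℝ) → Fin n → ℝ} (hT : Measurable T)
    (h1 : ∀ x, ∑ i, T x i ^ 2 ≤ 1) {η η'} (h : IsTest n η η') (i : Fin n) :
    Integrable fun x => T x i * η' i x := by
  refine ((h.cont' i).integrable_of_hasCompactSupport (h.supp' i)).bdd_mul (c := 1)
    ((measurable_pi_apply i).comp hT).aestronglyMeasurable (ae_of_all _ fun x => ?_)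
  exact sum_sq_le_abs (h1 x) i

/-- inductive step for the weak divergence -/
lemma weak_step {n : ℕ} {a a' b : ℝ → ℝ} (ha : Monotone a) (ham : Measurable a') (hbm : Measurable b)
    (hd : ∀ᵐ t, a' t = 0 ∨ HasDerivAt a (a' t) t)
    (hb : ∀ t, 0 ≤ b t) (hab : ∀ t, a t ^ 2 + b t ^ 2 = 1)
    {T' : ℝ → (Fin n → ℝ) → Fin n → ℝ} {D' : ℝ → (Fin n → ℝ) → ENNReal}
    (hT' : Measurable fun p : ℝ × (Fin n → ℝ) => T' p.1 p.2)
    (hD' : Measurable fun p : ℝ × (Fin n → ℝ) => D' p.1 p.2)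
    (hT1 : ∀ t x, ∑ i, T' t x i ^ 2 ≤ 1) (hw : ∀ t, WeakDiv n (T' t) (D' t)) :
    (∀ x : Fin (n + 1) → ℝ, ∑ i, (Fin.cons (a (x 0)) (fun i => b (x 0) * T' (x 0) (Fin.tail x) i) :
      Fin (n + 1) → ℝ) i ^ 2 ≤ 1) ∧
    WeakDiv (n + 1) (fun x => Fin.cons (a (x 0)) (fun i => b (x 0) * T' (x 0) (Fin.tail x) i))
      (fun x => ENNReal.ofReal (a' (x 0)) + ENNReal.ofReal (b (x 0)) * D' (x 0) (Fin.tail x)) := by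
  have hn : ∀ x : Fin (n + 1) → ℝ, ∑ i, (Fin.cons (a (x 0))
      (fun i => b (x 0) * T' (x 0) (Fin.tail x) i) : Fin (n + 1) → ℝ) i ^ 2 ≤ 1 := by
    intro x
    simp only [Fin.sum_univ_succ, Fin.cons_zero, Fin.cons_succ, mul_pow, ← Finset.mul_sum]
    have h1 := hab (x 0)
    have h2 := mul_le_mul_of_nonneg_left (hT1 (x 0) (Fin.tail x)) (sq_nonneg (b (x 0)))
    linarith
  refine ⟨hn, ?_⟩
  intro η η' h
  have htail : Measurable fun x : Fin (n + 1) → ℝ => (x 0, Fin.tail x) :=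
    (measurable_pi_apply 0).prodMk (measurable_pi_lambda _ fun i => measurable_pi_apply _)
  have hTm : Measurable fun x : Fin (n + 1) → ℝ => (Fin.cons (a (x 0))
      (fun i => b (x 0) * T' (x 0) (Fin.tail x) i) : Fin (n + 1) → ℝ) := by
    refine cons_meas.comp (Measurable.prodMk (ha.measurable.comp (measurable_pi_apply 0)) ?_)
    refine measurable_pi_lambda _ fun i => ?_
    exact (hbm.comp (measurable_pi_apply 0)).mul
      ((measurable_pi_apply i).comp (hT'.comp htail))
  have hI := T_int hTm hn h
  have aabs : ∀ t, |a t| ≤ 1 := fun t => by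
    rw [← sq_le_one_iff_abs_le_one]; nlinarith [hab t, sq_nonneg (b t)]
  -- splitting of the flux
  have e1 : ∫ x, ∑ i, (Fin.cons (a (x 0))
      (fun i => b (x 0) * T' (x 0) (Fin.tail x) i) : Fin (n + 1) → ℝ) i * η' i x =
      (∫ x : Fin (n + 1) → ℝ, a (x 0) * η' 0 x) +
      ∫ x : Fin (n + 1) → ℝ, b (x 0) * ∑ i : Fin n, T' (x 0) (Fin.tail x) i * η' i.succ x := by
    have i0 := hI 0
    have i1 : Integrable fun x : Fin (n + 1) → ℝ =>
        b (x 0) * ∑ i : Fin n, T' (x 0) (Fin.tail x) i * η' i.succ x := by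
      have := integrable_finsetSum (Finset.univ : Finset (Fin n)) (fun i _ => hI i.succ)
      refine this.congr (ae_of_all _ fun x => ?_)
      simp only [Fin.cons_succ, Finset.mul_sum, mul_assoc]
    simp only [Fin.cons_zero] at i0
    rw [← integral_add i0 i1]
    congr 1; ext x
    rw [Fin.sum_univ_succ]
    simp only [Fin.cons_zero, Fin.cons_succ, Finset.mul_sum, mul_assoc]
  have i0 : Integrable fun x : Fin (n + 1) → ℝ => a (x 0) * η' 0 x := by
    have := hI 0; simpa only [Fin.cons_zero] using this
  have i1 : Integrable fun x : Fin (n + 1) → ℝ =>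
      b (x 0) * ∑ i : Fin n, T' (x 0) (Fin.tail x) i * η' i.succ x := by
    have := integrable_finsetSum (Finset.univ : Finset (Fin n)) (fun i _ => hI i.succ)
    refine this.congr (ae_of_all _ fun x => ?_)
    simp only [Fin.cons_succ, Finset.mul_sum, mul_assoc]
  have w1 := fun x' : Fin n → ℝ => weak1 ha aabs hd (h.line x') ((h.cont' 0).comp (cons_cont_left x'))
    (supp_cons_left h.supp x') (fun t => h.nn _)
  have w2 := fun t => hw t _ _ (h.slice t)
  have f0 : ∫ x : Fin (n + 1) → ℝ, a (x 0) * η' 0 x =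
      ∫ x' : Fin n → ℝ, ∫ t, a t * η' 0 (Fin.cons t x') := by
    rw [integral_cons' i0]; simp only [Fin.cons_zero]
  have f1 : ∫ x : Fin (n + 1) → ℝ, b (x 0) * ∑ i : Fin n, T' (x 0) (Fin.tail x) i * η' i.succ x =
      ∫ t, b t * ∫ x' : Fin n → ℝ, ∑ i : Fin n, T' t x' i * η' i.succ (Fin.cons t x') := by
    rw [integral_cons i1]; simp only [Fin.cons_zero, Fin.tail_cons, integral_const_mul]
  have j0 : Integrable fun x' : Fin n → ℝ => - ∫ t, a t * η' 0 (Fin.cons t x') := by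
    have := (integrable_cons i0).integral_prod_right
    simp only [Fin.cons_zero] at this
    exact this.neg
  have j1 : Integrable fun t =>
      b t * - ∫ x' : Fin n → ℝ, ∑ i : Fin n, T' t x' i * η' i.succ (Fin.cons t x') := by
    have := (integrable_cons i1).integral_prod_left
    simp only [Fin.cons_zero, Fin.tail_cons, integral_const_mul] at this
    simp only [mul_neg]; exact this.neg
  have E : - ∫ x, ∑ i, (Fin.cons (a (x 0))
      (fun i => b (x 0) * T' (x 0) (Fin.tail x) i) : Fin (n + 1) → ℝ) i * η' i x =
      (∫ x' : Fin n → ℝ, - ∫ t, a t * η' 0 (Fin.cons t x')) +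
      ∫ t, b t * - ∫ x' : Fin n → ℝ, ∑ i : Fin n, T' t x' i * η' i.succ (Fin.cons t x') := by
    rw [e1, f0, f1]
    simp only [mul_neg, integral_neg]
    ring
  rw [E]
  have p0 : 0 ≤ ∫ x' : Fin n → ℝ, - ∫ t, a t * η' 0 (Fin.cons t x') :=
    integral_nonneg fun x' => (w1 x').1
  have p1 : 0 ≤ ∫ t, b t * - ∫ x' : Fin n → ℝ, ∑ i : Fin n, T' t x' i * η' i.succ (Fin.cons t x') :=
    integral_nonneg fun t => mul_nonneg (hb t) (w2 t).1
  refine ⟨add_nonneg p0 p1, ?_⟩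
  have hη : Measurable fun x => ENNReal.ofReal (η x) := h.cont.measurable.ennreal_ofReal
  have m1 : Measurable fun x : Fin (n + 1) → ℝ => ENNReal.ofReal (a' (x 0)) * ENNReal.ofReal (η x) :=
    (ham.comp (measurable_pi_apply 0)).ennreal_ofReal.mul hη
  have m2 : Measurable fun x : Fin (n + 1) → ℝ =>
      ENNReal.ofReal (b (x 0)) * (D' (x 0) (Fin.tail x) * ENNReal.ofReal (η x)) :=
    (hbm.comp (measurable_pi_apply 0)).ennreal_ofReal.mul ((hD'.comp htail).mul hη)
  rw [ENNReal.ofReal_add p0 p1,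
    ofReal_integral_eq_lintegral_ofReal j0 (ae_of_all _ fun x' => (w1 x').1),
    ofReal_integral_eq_lintegral_ofReal j1 (ae_of_all _ fun t => mul_nonneg (hb t) (w2 t).1)]
  simp only [add_mul, mul_assoc]
  rw [lintegral_add_left m1, lintegral_cons' m1, lintegral_cons m2]
  refine add_le_add (lintegral_mono fun x' => ?_) (lintegral_mono fun t => ?_)
  · simp only [Fin.cons_zero]; exact (w1 x').2
  · simp only [Fin.cons_zero, Fin.tail_cons]
    rw [lintegral_const_mul' _ _ ENNReal.ofReal_ne_top, ENNReal.ofReal_mul (hb t)]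
    exact mul_le_mul_right (w2 t).2 _

lemma amgm {n : ℕ} {x y c : ℝ} (hy : 0 ≤ y) (hc : 0 < c)
    (h : x * y ^ n = c ^ (n + 1)) :
    (n + 1) * c ≤ x + n * y ∧ (1 ≤ n → x ≠ c → (n + 1) * c < x + n * y) := by
  rcases Nat.eq_zero_or_pos n with rfl | hn
  · simp at h; simp [h]
  have hy0 : 0 < y := by
    rcases hy.eq_or_lt with h0 | h0
    · rw [← h0, zero_pow (by omega), mul_zero] at h
      exact absurd h.symm (pow_pos hc _).ne'
    · exact h0
  set w := c / y with hw
  have hw0 : 0 < w := div_pos hc hy0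
  have hxw : x = c * w ^ n := by
    rw [hw, div_pow]; field_simp; rw [h]; ring
  have hyw : y = c / w := by rw [hw]; field_simp
  have hn1 : (1 : ℝ) < ((n + 1 : ℕ) : ℝ) := by exact_mod_cast Nat.lt_succ_of_le hn
  have e : x + n * y = c * (w ^ (n + 1) + n) / w := by
    rw [hyw, hxw, pow_succ]; field_simp
  have bern : (n + 1) * w ≤ w ^ (n + 1) + n ∧ (w ≠ 1 → (n + 1) * w < w ^ (n + 1) + n) := by
    have strict : w ≠ 1 → (n + 1) * w < w ^ (n + 1) + n := by
      intro hne
      have := one_add_mul_self_lt_rpow_one_add (s := w - 1) (by linarith) (sub_ne_zero.2 hne) hn1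
      rw [show (1 : ℝ) + (w - 1) = w by ring, Real.rpow_natCast] at this
      push_cast at this
      linarith
    refine ⟨?_, strict⟩
    by_cases h1 : w = 1
    · rw [h1]; simp; linarith
    · exact (strict h1).le
  refine ⟨?_, fun _ hne => ?_⟩
  · rw [e, le_div_iff₀ hw0]
    have := mul_le_mul_of_nonneg_left bern.1 hc.le
    linarith
  · have hw1 : w ≠ 1 := by
      intro h1; apply hne; rw [hxw, h1]; simp
    rw [e, lt_div_iff₀ hw0]
    have := mul_lt_mul_of_pos_left (bern.2 hw1) hc
    linarith

/-- slice measures -/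
def slc {Ω : Type} {n : ℕ} (A : Set (Ω × (Fin (n + 1) → ℝ))) (ω : Ω) (t : ℝ) : ENNReal :=
  volume {x' : Fin n → ℝ | (ω, (Fin.cons t x' : Fin (n + 1) → ℝ)) ∈ A}

def Knothe (n : ℕ) : Prop :=
  ∀ (Ω : Type) [MeasurableSpace Ω] (A : Set (Ω × (Fin n → ℝ))), MeasurableSet A →
    ∃ (T : Ω → (Fin n → ℝ) → Fin n → ℝ) (D : Ω → (Fin n → ℝ) → ENNReal),
      (Measurable fun p : Ω × (Fin n → ℝ) => T p.1 p.2) ∧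
      (Measurable fun p : Ω × (Fin n → ℝ) => D p.1 p.2) ∧
      (∀ ω x, ∑ i, T ω x i ^ 2 ≤ 1) ∧ (∀ ω, WeakDiv n (T ω) (D ω)) ∧
      ∀ ω, volume {x | (ω, x) ∈ A} ≠ 0 → volume {x | (ω, x) ∈ A} ≠ ⊤ → ∀ᵐ x, (ω, x) ∈ A →
        ENNReal.ofReal (n * (beta n / (volume {x | (ω, x) ∈ A}).toReal) ^ (n : ℝ)⁻¹) ≤ D ω x

lemma cons_meas2 {Ω : Type} [MeasurableSpace Ω] {n : ℕ} :
    Measurable fun p : (Ω × ℝ) × (Fin n → ℝ) =>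
      (p.1.1, (Fin.cons p.1.2 p.2 : Fin (n + 1) → ℝ)) :=
  measurable_fst.fst.prodMk (cons_meas.comp (measurable_fst.snd.prodMk measurable_snd))

lemma slc_meas {Ω : Type} [MeasurableSpace Ω] {n : ℕ} {A : Set (Ω × (Fin (n + 1) → ℝ))}
    (hA : MeasurableSet A) : Measurable fun p : Ω × ℝ => slc A p.1 p.2 :=
  measurable_measure_prodMk_left (ν := (volume : Measure (Fin n → ℝ))) (cons_meas2 hA)

lemma slc_total {Ω : Type} [MeasurableSpace Ω] {n : ℕ} {A : Set (Ω × (Fin (n + 1) → ℝ))}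
    (hA : MeasurableSet A) (ω : Ω) : ∫⁻ t, slc A ω t = volume {x | (ω, x) ∈ A} := by
  have hm : MeasurableSet {x | (ω, x) ∈ A} := measurable_prodMk_left hA
  rw [← lintegral_indicator_one hm, lintegral_cons (measurable_one.indicator hm)]
  refine lintegral_congr fun t => ?_
  have hm2 : MeasurableSet {x' : Fin n → ℝ | (ω, (Fin.cons t x' : Fin (n + 1) → ℝ)) ∈ A} :=
    (cons_cont_right t).measurable hm
  rw [slc, ← lintegral_indicator_one hm2]
  rfl

set_option maxHeartbeats 2000000 in
lemma knothe_step {n : ℕ} (hK : Knothe n) (Ω : Type) [MeasurableSpace Ω]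
    (A : Set (Ω × (Fin (n + 1) → ℝ))) (hA : MeasurableSet A) :
    ∃ (T : Ω → (Fin (n + 1) → ℝ) → Fin (n + 1) → ℝ) (D : Ω → (Fin (n + 1) → ℝ) → ENNReal),
      (Measurable fun p : Ω × (Fin (n + 1) → ℝ) => T p.1 p.2) ∧
      (Measurable fun p : Ω × (Fin (n + 1) → ℝ) => D p.1 p.2) ∧
      (∀ ω x, ∑ i, T ω x i ^ 2 ≤ 1) ∧ (∀ ω, WeakDiv (n + 1) (T ω) (D ω)) ∧
      ∀ ω, ∀ᵐ x, (ω, x) ∈ A → slc A ω (x 0) ≠ 0 ∧ (slc A ω (x 0) ≠ ⊤ →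
        ENNReal.ofReal (ad n (slc A ω) (x 0) + n * (bb n (slc A ω) (x 0) *
          (beta n / (slc A ω (x 0)).toReal) ^ (n : ℝ)⁻¹)) ≤ D ω x) := by
  obtain ⟨T', D', hT', hD', hT1, hw, hD⟩ := hK (Ω × ℝ) _ (cons_meas2 hA)
  have hM := slc_meas hA
  have htail : Measurable fun p : Ω × (Fin (n + 1) → ℝ) => ((p.1, p.2 0), Fin.tail p.2) :=
    (measurable_fst.prodMk ((measurable_pi_apply 0).comp measurable_snd)).prodMk
      (measurable_pi_lambda _ fun i => (measurable_pi_apply _).comp measurable_snd)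
  have hz : Measurable fun p : Ω × (Fin (n + 1) → ℝ) => (p.1, p.2 0) := htail.fst
  have ws := fun ω => weak_step (aa_mono n (slc A ω))
    ((meas_ad n hM).comp (measurable_prodMk_left (x := ω)))
    ((meas_bb n hM).comp (measurable_prodMk_left (x := ω)))
    (aa_deriv n (hM.comp (measurable_prodMk_left (x := ω)))) (bb_nonneg (n := n) (m := slc A ω))
    (ab_sq n (slc A ω)) (T' := fun t x => T' (ω, t) x) (D' := fun t x => D' (ω, t) x)
    (hT'.comp ((measurable_const.prodMk measurable_fst).prodMk measurable_snd))
    (hD'.comp ((measurable_const.prodMk measurable_fst).prodMk measurable_snd))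
    (fun t => hT1 _) (fun t => hw _)
  refine ⟨fun ω x => Fin.cons (aa n (slc A ω) (x 0))
      (fun i => bb n (slc A ω) (x 0) * T' (ω, x 0) (Fin.tail x) i),
    fun ω x => ENNReal.ofReal (ad n (slc A ω) (x 0)) + ENNReal.ofReal (bb n (slc A ω) (x 0)) *
      D' (ω, x 0) (Fin.tail x), ?_, ?_, fun ω => (ws ω).1, fun ω => (ws ω).2, fun ω => ?_⟩
  · refine cons_meas.comp (Measurable.prodMk ((meas_aa n hM).comp hz) ?_)
    refine measurable_pi_lambda _ fun i => ?_
    exact ((meas_bb n hM).comp hz).mul ((measurable_pi_apply i).comp (hT'.comp htail))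
  · exact ((meas_ad n hM).comp hz).ennreal_ofReal.add
      (((meas_bb n hM).comp hz).ennreal_ofReal.mul (hD'.comp htail))
  · have hmA : MeasurableSet {x | (ω, x) ∈ A} := measurable_prodMk_left hA
    have mM : Measurable (slc A ω) := hM.comp (measurable_prodMk_left (x := ω))
    have m0 : Measurable fun x : Fin (n + 1) → ℝ => slc A ω (x 0) :=
      mM.comp (measurable_pi_apply 0)
    have mad : Measurable fun x : Fin (n + 1) → ℝ => ad n (slc A ω) (x 0) :=
      ((meas_ad n hM).comp (measurable_prodMk_left (x := ω))).comp (measurable_pi_apply 0)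
    have mbb : Measurable fun x : Fin (n + 1) → ℝ => bb n (slc A ω) (x 0) :=
      ((meas_bb n hM).comp (measurable_prodMk_left (x := ω))).comp (measurable_pi_apply 0)
    have mD : Measurable fun x : Fin (n + 1) → ℝ => D' (ω, x 0) (Fin.tail x) :=
      hD'.comp (htail.comp (measurable_prodMk_left (x := ω)))
    refine (ae_cons (s := {x | (ω, x) ∈ A → slc A ω (x 0) ≠ 0 ∧ (slc A ω (x 0) ≠ ⊤ →
        ENNReal.ofReal (ad n (slc A ω) (x 0) + n * (bb n (slc A ω) (x 0) *
          (beta n / (slc A ω (x 0)).toReal) ^ (n : ℝ)⁻¹)) ≤ 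
        ENNReal.ofReal (ad n (slc A ω) (x 0)) + ENNReal.ofReal (bb n (slc A ω) (x 0)) *
          D' (ω, x 0) (Fin.tail x))}) ?_).2 ?_
    · have s1 : MeasurableSet {x : Fin (n + 1) → ℝ | slc A ω (x 0) = 0} :=
        m0 (measurableSet_singleton 0)
      have s2 : MeasurableSet {x : Fin (n + 1) → ℝ | slc A ω (x 0) = ⊤} :=
        m0 (measurableSet_singleton ⊤)
      have s3 : MeasurableSet {x : Fin (n + 1) → ℝ |
          ENNReal.ofReal (ad n (slc A ω) (x 0) + n * (bb n (slc A ω) (x 0) *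
          (beta n / (slc A ω (x 0)).toReal) ^ (n : ℝ)⁻¹)) ≤ 
          ENNReal.ofReal (ad n (slc A ω) (x 0)) + ENNReal.ofReal (bb n (slc A ω) (x 0)) *
          D' (ω, x 0) (Fin.tail x)} := by
        refine measurableSet_le (Measurable.ennreal_ofReal (mad.add ((mbb.mul
          ((measurable_const.div m0.ennreal_toReal).pow_const _)).const_mul _)))
          (mad.ennreal_ofReal.add (mbb.ennreal_ofReal.mul mD))
      exact hmA.imp (s1.compl.inter (s2.compl.imp s3))
    · refine ae_of_all _ fun t => ?_
      simp only [Set.mem_ofPred_eq, Fin.cons_zero, Fin.tail_cons]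
      by_cases h0 : slc A ω t = 0
      · have : ∀ᵐ x' : Fin n → ℝ, ¬ (ω, (Fin.cons t x' : Fin (n + 1) → ℝ)) ∈ A := by
          rw [ae_iff]; simpa [slc] using h0
        filter_upwards [this] with x' hx' hx2 using absurd hx2 hx'
      by_cases h1 : slc A ω t = ⊤
      · exact ae_of_all _ fun x' _ => ⟨h0, fun h => absurd h1 h⟩
      filter_upwards [hD (ω, t) h0 h1] with x' hx' hx2
      refine ⟨h0, fun _ => ?_⟩
      have := hx' hx2
      have hb0 := bb_nonneg (n := n) (m := slc A ω) t
      have hp : 0 ≤ (beta n / (slc A ω t).toReal) ^ (n : ℝ)⁻¹ :=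
        Real.rpow_nonneg (div_nonneg (beta_pos n).le ENNReal.toReal_nonneg) _
      rw [ENNReal.ofReal_add (ad_nonneg t) (by positivity)]
      gcongr
      rw [mul_left_comm, ENNReal.ofReal_mul hb0]
      gcongr
      exact this

lemma beta_zero : beta 0 = 1 := by
  have h := vol_sq 0 one_pos
  have e : {x : Fin 0 → ℝ | ∑ i, x i ^ 2 < 1} = Set.univ := by ext x; simp
  rw [e, volume_pi, Measure.pi_of_empty] at h
  simp at h
  rw [eq_comm, ENNReal.ofReal_eq_one] at h; exact h

lemma slc_zero {Ω : Type} {A : Set (Ω × (Fin (0 + 1) → ℝ))} {ω : Ω} {t : ℝ}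
    (h : slc A ω t ≠ 0) : slc A ω t = 1 := by
  unfold slc at *
  rcases Set.eq_empty_or_nonempty {x' : Fin 0 → ℝ | (ω, (Fin.cons t x' : Fin (0 + 1) → ℝ)) ∈ A}
    with h1 | h1
  · rw [h1] at h; simp at h
  · rw [Subsingleton.eq_univ_of_nonempty h1, volume_pi, Measure.pi_of_empty]; simp

/-- the pointwise relation used in the AM-GM step -/
lemma slice_rel {Ω : Type} [MeasurableSpace Ω] {n : ℕ} {A : Set (Ω × (Fin (n + 1) → ℝ))}
    (hA : MeasurableSet A) (ω : Ω) (h0 : volume {x | (ω, x) ∈ A} ≠ 0)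
    (h1 : volume {x | (ω, x) ∈ A} ≠ ⊤) {c : ℝ}
    (hc : c ^ (n + 1) = beta (n + 1) / (volume {x | (ω, x) ∈ A}).toReal) :
    ∀ᵐ t, slc A ω t ≠ 0 → slc A ω t ≠ ⊤ ∧ ad n (slc A ω) t * (bb n (slc A ω) t *
          (beta n / (slc A ω t).toReal) ^ (n : ℝ)⁻¹) ^ n = c ^ (n + 1) := by
  have mM : Measurable (slc A ω) := (slc_meas hA).comp (measurable_prodMk_left (x := ω))
  rw [← slc_total hA ω] at h0 h1 hc
  filter_upwards [ad_key n mM h1 h0] with t ht hne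
  obtain ⟨k1, k2, k3, k4⟩ := ht hne
  refine ⟨k1, ?_⟩
  have hp : (slc A ω t).toReal ≠ 0 := ENNReal.toReal_ne_zero.2 ⟨hne, k1⟩
  have e : ((beta n / (slc A ω t).toReal) ^ (n : ℝ)⁻¹) ^ n = beta n / (slc A ω t).toReal := by
    rcases Nat.eq_zero_or_pos n with rfl | hn
    · rw [slc_zero hne, beta_zero]; simp
    · rw [Real.rpow_inv_natCast_pow _ (by omega)]
      exact div_nonneg (beta_pos n).le ENNReal.toReal_nonneg
  rw [mul_pow, e, ← mul_assoc, k4, hc, beta_succ]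
  field_simp

lemma knothe (n : ℕ) : Knothe n := by
  induction n with
  | zero =>
    intro Ω _ A hA
    refine ⟨fun _ _ => 0, fun _ _ => 0, measurable_const, measurable_const, by simp, ?_, ?_⟩
    · intro ω η η' _; simp
    · intro ω _ _; simp
  | succ n ih =>
    intro Ω _ A hA
    obtain ⟨T, D, hT, hD, h1, h2, h3⟩ := knothe_step ih Ω A hA
    refine ⟨T, D, hT, hD, h1, h2, fun ω hV0 hV1 => ?_⟩
    set V := (volume {x | (ω, x) ∈ A}).toReal with hV
    have Vp : 0 < V := ENNReal.toReal_pos hV0 hV1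
    have q : 0 < beta (n + 1) / V := div_pos (beta_pos _) Vp
    set c := (beta (n + 1) / V) ^ ((n + 1 : ℕ) : ℝ)⁻¹ with hc
    have cp : 0 < c := Real.rpow_pos_of_pos q _
    have hcc : c ^ (n + 1) = beta (n + 1) / V := Real.rpow_inv_natCast_pow q.le (by omega)
    have hs := slice_rel hA ω hV0 hV1 hcc
    have hs' := (Measure.quasiMeasurePreserving_eval (fun _ : Fin (n + 1) => (volume : Measure ℝ))
      0).ae hs
    filter_upwards [h3 ω, hs'] with x hx hx' hxA
    obtain ⟨k1, k2⟩ := hx hxA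
    obtain ⟨k3, k4⟩ := hx' k1
    refine le_trans (ENNReal.ofReal_le_ofReal ?_) (k2 k3)
    have := (amgm (mul_nonneg (bb_nonneg (x 0)) (Real.rpow_nonneg
      (div_nonneg (beta_pos n).le ENNReal.toReal_nonneg) _)) cp k4).1
    push_cast at this ⊢
    exact this

lemma moll_fderiv {N k : ℕ} {g : Euc N → ℝ} (hg : LocallyIntegrable g) (x v : Euc N) :
    fderiv ℝ (moll N k g) x v = ∫ y, fderiv ℝ (rho N k) (x - y) v * g y := by
  have hd : HasFDerivAt (moll N k g) (convolution (fderiv ℝ (rho N k)) g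
      ((ContinuousLinearMap.lsmul ℝ ℝ).precompL (Euc N)) volume x) x := by
    rw [moll_eq]
    exact rho_supp.hasFDerivAt_convolution_left (ContinuousLinearMap.lsmul ℝ ℝ) rho_smooth hg x
  have hex : ConvolutionExistsAt (fderiv ℝ (rho N k)) g x
      ((ContinuousLinearMap.lsmul ℝ ℝ).precompL (Euc N)) volume :=
    (rho_supp.fderiv (𝕜 := ℝ)).convolutionExists_left _
      (rho_smooth.continuous_fderiv one_ne_zero) hg x
  have hex' : Integrable (fun t => ((ContinuousLinearMap.lsmul ℝ ℝ).precompL (Euc N))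
    (fderiv ℝ (rho N k) t) (g (x - t))) := hex
  rw [hd.fderiv, convolution_def, ContinuousLinearMap.integral_apply hex' v]
  rw [← integral_sub_left_eq_self (fun y => fderiv ℝ (rho N k) (x - y) v * g y) volume x]
  refine integral_congr_ae (ae_of_all _ fun y => ?_)
  simp only [ContinuousLinearMap.precompL_apply, sub_sub_cancel]
  rfl

lemma fieldE_norm {N : ℕ} {T : (Fin N → ℝ) → Fin N → ℝ} (hT1 : ∀ x, ∑ i, T x i ^ 2 ≤ 1)
    (x : Euc N) : ‖(WithLp.toLp 2 (T x.ofLp) : Euc N)‖ ≤ 1 := by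
  rw [EuclideanSpace.norm_eq]
  refine Real.sqrt_le_iff.2 ⟨zero_le_one, ?_⟩
  simpa using hT1 x.ofLp

lemma fieldE_loc {N : ℕ} {T : (Fin N → ℝ) → Fin N → ℝ} (hT : Measurable T)
    (hT1 : ∀ x, ∑ i, T x i ^ 2 ≤ 1) :
    LocallyIntegrable fun x : Euc N => (WithLp.toLp 2 (T x.ofLp) : Euc N) := by
  have hm : Measurable fun x : Euc N => (WithLp.toLp 2 (T x.ofLp) : Euc N) := by fun_prop
  refine (locallyIntegrable_const (1 : ℝ)).mono hm.aestronglyMeasurable (ae_of_all _ fun x => ?_)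
  simpa using fieldE_norm hT1 x

lemma comp_loc {N : ℕ} {T : (Fin N → ℝ) → Fin N → ℝ} (hT : Measurable T)
    (hT1 : ∀ x, ∑ i, T x i ^ 2 ≤ 1) (i : Fin N) :
    LocallyIntegrable fun x : Euc N => T x.ofLp i := by
  have hm : Measurable fun x : Euc N => T x.ofLp i := by fun_prop
  refine (locallyIntegrable_const (1 : ℝ)).mono hm.aestronglyMeasurable (ae_of_all _ fun x => ?_)
  simpa using (PiLp.norm_apply_le (WithLp.toLp 2 (T x.ofLp) : Euc N) i).trans (fieldE_norm hT1 x)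

lemma comp_le {N : ℕ} {T : (Fin N → ℝ) → Fin N → ℝ}
    (hT1 : ∀ x, ∑ i, T x i ^ 2 ≤ 1) (x) (i : Fin N) : |T x i| ≤ 1 := by
  have := (PiLp.norm_apply_le (WithLp.toLp 2 (T x) : Euc N) i).trans
    (fieldE_norm hT1 (WithLp.toLp 2 x))
  simpa using this

lemma drho_int {N k : ℕ} {T : (Fin N → ℝ) → Fin N → ℝ} (hT : Measurable T)
    (hT1 : ∀ x, ∑ i, T x i ^ 2 ≤ 1) (x : Euc N) (i : Fin N) :
    Integrable fun y : Euc N => fderiv ℝ (rho N k) (x - y) (EuclideanSpace.single i 1) * T y.ofLp i := by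
  have h : Integrable fun y : Euc N => fderiv ℝ (rho N k) y (EuclideanSpace.single i 1) := by
    refine Continuous.integrable_of_hasCompactSupport
      ((rho_smooth.continuous_fderiv one_ne_zero).clm_apply continuous_const) ?_
    exact (rho_supp.fderiv (𝕜 := ℝ)).comp_left
        (g := fun L : Euc N →L[ℝ] ℝ => L (EuclideanSpace.single i 1)) (by simp)
  have hm : Measurable fun x : Euc N => T x.ofLp i := by fun_prop
  exact (h.comp_sub_left x).mul_bdd (c := 1) hm.aestronglyMeasurable
    (ae_of_all _ fun y => comp_le hT1 _ i)

lemma dv_mollT {N k : ℕ} {T : (Fin N → ℝ) → Fin N → ℝ} (hT : Measurable T)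
    (hT1 : ∀ x, ∑ i, T x i ^ 2 ≤ 1) (x : Euc N) :
    dv N (moll N k fun x : Euc N => (WithLp.toLp 2 (T x.ofLp) : Euc N)) x
      = ∫ y : Euc N, ∑ i, fderiv ℝ (rho N k) (x - y) (EuclideanSpace.single i 1) * T y.ofLp i := by
  unfold dv
  have e : ∀ i : Fin N, (fun y => (moll N k fun x : Euc N => (WithLp.toLp 2 (T x.ofLp) : Euc N)) y i)
      = moll N k fun x : Euc N => T x.ofLp i := by
    intro i; ext z
    unfold moll
    have hi : Integrable fun y : Euc N => rho N k (z - y) • (WithLp.toLp 2 (T y.ofLp) : Euc N) := by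
      have hm : Measurable fun x : Euc N => (WithLp.toLp 2 (T x.ofLp) : Euc N) := by fun_prop
      exact (rho_integrable_sub z).smul_bdd 1 hm.aestronglyMeasurable
        (ae_of_all _ fun y => fieldE_norm hT1 y)
    have := (EuclideanSpace.proj i : Euc N →L[ℝ] ℝ).integral_comp_comm hi
    simp only [PiLp.proj_apply] at this
    rw [← this]; simp
  simp only [e, moll_fderiv (comp_loc hT hT1 _)]
  rw [integral_finsetSum]
  exact fun i _ => drho_int hT hT1 x i

lemma rho_test {N k : ℕ} (x : Euc N) :
    IsTest N (fun y => rho N k (x - WithLp.toLp 2 y))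
      (fun i y => - fderiv ℝ (rho N k) (x - WithLp.toLp 2 y) (EuclideanSpace.single i 1)) := by
  have hs : ∀ {g : Euc N → ℝ}, HasCompactSupport g →
      HasCompactSupport fun y : Fin N → ℝ => g (x - WithLp.toLp 2 y) := by
    intro g hg
    have hK : IsCompact ((fun z : Euc N => (x - z).ofLp) '' tsupport g) :=
      hg.isCompact.image (by fun_prop)
    refine HasCompactSupport.of_support_subset_isCompact hK fun y hy => ?_
    exact ⟨x - WithLp.toLp 2 y, subset_tsupport _ hy, by simp⟩
  have hc : Continuous fun y : Fin N → ℝ => x - (WithLp.toLp 2 y : Euc N) := by fun_prop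
  refine ⟨rho_cont.comp hc, hs rho_supp, fun _ => rho_nonneg _, fun i => ?_, fun i => ?_,
    fun i y => ?_⟩
  · exact (((rho_smooth.continuous_fderiv one_ne_zero).clm_apply continuous_const).comp hc).neg
  · refine hs (g := fun z => - fderiv ℝ (rho N k) z (EuclideanSpace.single i 1)) ?_
    exact (rho_supp.fderiv (𝕜 := ℝ)).comp_left
        (g := fun L : Euc N →L[ℝ] ℝ => - L (EuclideanSpace.single i 1)) (by simp)
  · have h1 : HasDerivAt (fun s : ℝ => x - (WithLp.toLp 2 (Function.update y i s) : Euc N))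
        (- EuclideanSpace.single i 1) (y i) := by
      have e : (fun s : ℝ => x - (WithLp.toLp 2 (Function.update y i s) : Euc N))
          = fun s => (x - WithLp.toLp 2 y + (y i) • EuclideanSpace.single i 1)
            - s • EuclideanSpace.single i (1 : ℝ) := by
        ext s j
        by_cases h : j = i
        · subst h; simp
        · simp [h]
      rw [e]
      have := ((hasDerivAt_id (y i)).smul_const (EuclideanSpace.single i (1 : ℝ))).const_sub
        (x - WithLp.toLp 2 y + (y i) • EuclideanSpace.single i 1)
      simpa using this
    have h2 := (rho_smooth (N := N) (k := k)).differentiable one_ne_zero (x - WithLp.toLp 2 y)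
    have h3 : HasFDerivAt (rho N k) (fderiv ℝ (rho N k) (x - WithLp.toLp 2 y))
        ((fun s : ℝ => x - (WithLp.toLp 2 (Function.update y i s) : Euc N)) (y i)) := by
      simpa using h2.hasFDerivAt
    have := h3.comp_hasDerivAt (y i) h1
    rw [map_neg] at this
    exact this

lemma dv_mollT_ge {N k : ℕ} {T : (Fin N → ℝ) → Fin N → ℝ} (hT : Measurable T)
    (hT1 : ∀ x, ∑ i, T x i ^ 2 ≤ 1) {D : (Fin N → ℝ) → ENNReal} 
    (hw : WeakDiv N T D) (x : Euc N) :
    0 ≤ dv N (moll N k fun x : Euc N => (WithLp.toLp 2 (T x.ofLp) : Euc N)) x ∧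
    ∫⁻ y : Euc N, D y.ofLp * ENNReal.ofReal (rho N k (x - y)) ≤
      ENNReal.ofReal (dv N (moll N k fun x : Euc N => (WithLp.toLp 2 (T x.ofLp) : Euc N)) x) := by
  have h := hw _ _ (rho_test (k := k) x)
  have e : -∫ y : Fin N → ℝ, ∑ i, T y i *
      (- fderiv ℝ (rho N k) (x - WithLp.toLp 2 y) (EuclideanSpace.single i 1))
      = dv N (moll N k fun x : Euc N => (WithLp.toLp 2 (T x.ofLp) : Euc N)) x := by
    rw [dv_mollT hT hT1, ← integral_neg, ← (PiLp.volume_preserving_toLp (Fin N)).integral_comp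
      (MeasurableEquiv.toLp 2 (Fin N → ℝ)).measurableEmbedding]
    refine integral_congr_ae (ae_of_all _ fun y => ?_)
    simp [mul_comm]
  rw [e] at h
  refine ⟨h.1, le_trans (le_of_eq ?_) h.2⟩
  rw [← (PiLp.volume_preserving_toLp (Fin N)).lintegral_comp_emb
      (MeasurableEquiv.toLp 2 (Fin N → ℝ)).measurableEmbedding]

lemma dv_mollT_bdd {N k : ℕ} {T : (Fin N → ℝ) → Fin N → ℝ} (hT : Measurable T)
    (hT1 : ∀ x, ∑ i, T x i ^ 2 ≤ 1) (x : Euc N) :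
    ‖dv N (moll N k fun x : Euc N => (WithLp.toLp 2 (T x.ofLp) : Euc N)) x‖ ≤
      ∑ i, ∫ y, ‖fderiv ℝ (rho N k) y (EuclideanSpace.single i 1)‖ := by
  rw [dv_mollT hT hT1, integral_finsetSum _ fun i _ => drho_int hT hT1 x i]
  refine (norm_sum_le _ _).trans (Finset.sum_le_sum fun i _ => ?_)
  rw [← integral_sub_left_eq_self
    (fun y => ‖fderiv ℝ (rho N k) y (EuclideanSpace.single i 1)‖) volume x]
  refine norm_integral_le_of_norm_le ?_ (ae_of_all _ fun y => ?_)
  · have h : Integrable fun y : Euc N => fderiv ℝ (rho N k) y (EuclideanSpace.single i 1) := by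
      refine Continuous.integrable_of_hasCompactSupport
        ((rho_smooth.continuous_fderiv one_ne_zero).clm_apply continuous_const) ?_
      exact (rho_supp.fderiv (𝕜 := ℝ)).comp_left
          (g := fun L : Euc N →L[ℝ] ℝ => L (EuclideanSpace.single i 1)) (by simp)
    exact (h.comp_sub_left x).norm
  · rw [norm_mul]
    exact mul_le_of_le_one_right (norm_nonneg _) (comp_le hT1 _ i)

lemma W_moll {N k : ℕ} {T : (Fin N → ℝ) → Fin N → ℝ} (hT : Measurable T)
    (hT1 : ∀ x, ∑ i, T x i ^ 2 ≤ 1) {D : (Fin N → ℝ) → ENNReal} (hD : Measurable D)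
    (hw : WeakDiv N T D) {u : Euc N → ℝ} (hu : MemBV N u) (hu0 : ∀ x, 0 ≤ u x) :
    ∫⁻ x : Euc N, D x.ofLp * ENNReal.ofReal (moll N k u x) ≤ ENNReal.ofReal (tv N u) := by
  set ψ := moll N k fun x : Euc N => (WithLp.toLp 2 (T x.ofLp) : Euc N) with hψ
  have h1 : ContDiff ℝ 1 ψ := moll_smooth (fieldE_loc hT hT1)
  have h2 := le_tv_of_bdd hu h1 (moll_bdd (fieldE_norm hT1)) (dv_mollT_bdd hT hT1)
  have h3 : Integrable fun x => u x * dv N ψ x :=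
    hu.1.mul_bdd (dv_continuous h1).aestronglyMeasurable (ae_of_all _ (dv_mollT_bdd hT hT1))
  refine le_trans ?_ (ENNReal.ofReal_le_ofReal h2)
  have hum : AEMeasurable u := hu.1.aemeasurable
  have hDm : Measurable fun y : Euc N => D y.ofLp := by fun_prop
  rw [ofReal_integral_eq_lintegral_ofReal h3 (ae_of_all _ fun x =>
    mul_nonneg (hu0 x) (dv_mollT_ge hT hT1 hw x).1)]
  have hr : Measurable fun p : Euc N × Euc N => rho N k (p.1 - p.2) :=
    (rho_cont.comp (continuous_fst.sub continuous_snd)).measurable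
  calc ∫⁻ x : Euc N, D x.ofLp * ENNReal.ofReal (moll N k u x)
      ≤ ∫⁻ x : Euc N, ∫⁻ y, D x.ofLp * (ENNReal.ofReal (rho N k (x - y)) * ENNReal.ofReal (u y)) := by
        refine lintegral_mono fun x => ?_
        rw [lintegral_const_mul'' _ (by
          refine AEMeasurable.mul ?_ hum.ennreal_ofReal
          exact (hr.comp measurable_prodMk_left).ennreal_ofReal.aemeasurable)]
        gcongr
        unfold moll
        refine (Real.ofReal_le_enorm _).trans ((enorm_integral_le_lintegral_enorm _).trans
          (le_of_eq (lintegral_congr fun y => ?_)))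
        rw [smul_eq_mul, enorm_mul, Real.enorm_of_nonneg (rho_nonneg _),
          Real.enorm_of_nonneg (hu0 y)]
    _ = ∫⁻ y : Euc N, ∫⁻ x, D x.ofLp * (ENNReal.ofReal (rho N k (x - y)) * ENNReal.ofReal (u y)) := by
        refine lintegral_lintegral_swap ?_
        refine AEMeasurable.mul (hDm.comp measurable_fst).aemeasurable
          (AEMeasurable.mul hr.ennreal_ofReal.aemeasurable ?_)
        exact (hum.comp_quasiMeasurePreserving Measure.quasiMeasurePreserving_snd).ennreal_ofReal
    _ ≤ _ := by
        refine lintegral_mono fun y => ?_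
        have := (dv_mollT_ge (k := k) hT hT1 hw y).2
        rw [ENNReal.ofReal_mul (hu0 y)]
        calc _ = ENNReal.ofReal (u y) * ∫⁻ x : Euc N, D x.ofLp * ENNReal.ofReal (rho N k (y - x)) := by
              rw [← lintegral_const_mul _ (by
                exact hDm.mul (hr.comp measurable_prodMk_left).ennreal_ofReal)]
              refine lintegral_congr fun x => ?_
              rw [← rho_neg, neg_sub]; ring
          _ ≤ _ := by gcongr

lemma W_lemma {N : ℕ} {T : (Fin N → ℝ) → Fin N → ℝ} (hT : Measurable T)
    (hT1 : ∀ x, ∑ i, T x i ^ 2 ≤ 1) {D : (Fin N → ℝ) → ENNReal} (hD : Measurable D)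
    (hw : WeakDiv N T D) {u : Euc N → ℝ} (hu : MemBV N u) (hu0 : ∀ x, 0 ≤ u x) :
    ∫⁻ x : Euc N, D x.ofLp * ENNReal.ofReal (u x) ≤ ENNReal.ofReal (tv N u) := by
  have hDm : Measurable fun y : Euc N => D y.ofLp := by fun_prop
  calc ∫⁻ x : Euc N, D x.ofLp * ENNReal.ofReal (u x)
      ≤ ∫⁻ x : Euc N, liminf (fun k => D x.ofLp * ENNReal.ofReal (moll N k u x)) atTop := by
        refine lintegral_mono_ae ?_
        filter_upwards [moll_tendsto hu.1.locallyIntegrable] with x hx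
        rcases (hu0 x).eq_or_lt with h | h
        · rw [← h]; simp
        · refine le_of_eq (Tendsto.liminf_eq ?_).symm
          refine ENNReal.Tendsto.const_mul ((ENNReal.continuous_ofReal.tendsto _).comp hx) (Or.inl ?_)
          simpa using h
    _ ≤ liminf (fun k => ∫⁻ x : Euc N, D x.ofLp * ENNReal.ofReal (moll N k u x)) atTop := by
        refine lintegral_liminf_le fun k => hDm.mul ?_
        exact (moll_smooth hu.1.locallyIntegrable).continuous.measurable.ennreal_ofReal
    _ ≤ _ := by
        refine liminf_le_of_le (by isBoundedDefault) fun b hb => ?_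
        obtain ⟨k, hk⟩ := hb.exists
        exact hk.trans (W_moll hT hT1 hD hw hu hu0)

/-- characteristic function -/
abbrev chi {N : ℕ} (A : Set (Euc N)) : Euc N → ℝ := A.indicator fun _ => 1

lemma chi_int {N : ℕ} {A : Set (Euc N)} (hA : MeasurableSet A) (h1 : volume A ≠ ⊤) :
    Integrable (chi A) :=
  (integrable_indicator_iff hA).2 (integrableOn_const h1)

lemma ball_vol {N : ℕ} (x : Euc N) {R : ℝ} (hR : 0 < R) :
    volume (Metric.ball x R) = ENNReal.ofReal (R ^ N * beta N) := by
  rw [Measure.addHaar_ball_of_pos _ _ hR, beta_ofReal, ENNReal.ofReal_mul (by positivity)]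
  simp

/-- transfer a set of `Euc N` to a family over `Unit` -/
def uset {N : ℕ} (A : Set (Euc N)) : Set (Unit × (Fin N → ℝ)) := {p | WithLp.toLp 2 p.2 ∈ A}

lemma uset_meas {N : ℕ} {A : Set (Euc N)} (hA : MeasurableSet A) : MeasurableSet (uset A) := by
  have : Measurable fun p : Unit × (Fin N → ℝ) => (WithLp.toLp 2 p.2 : Euc N) := by fun_prop
  exact this hA

lemma uset_vol {N : ℕ} {A : Set (Euc N)} (hA : MeasurableSet A) :
    volume {x | ((), x) ∈ uset A} = volume A :=
  (PiLp.volume_preserving_toLp (Fin N)).measure_preimage hA.nullMeasurableSet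

lemma iso_gen {N : ℕ} {A : Set (Euc N)} (hA : MeasurableSet A) (h0 : volume A ≠ 0)
    (h1 : volume A ≠ ⊤) {u : Euc N → ℝ} (hu : MemBV N u) (hu0 : ∀ x, 0 ≤ u x) :
    ENNReal.ofReal (N * (beta N / (volume A).toReal) ^ (N : ℝ)⁻¹) *
      ∫⁻ x in A, ENNReal.ofReal (u x) ≤ ENNReal.ofReal (tv N u) := by
  obtain ⟨T, D, hT, hD, hT1, hw, hDA⟩ := knothe N Unit (uset A) (uset_meas hA)
  have h := hDA ()
  rw [uset_vol hA] at h
  replace h := (PiLp.volume_preserving_ofLp (Fin N)).quasiMeasurePreserving.ae (h h0 h1)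
  refine le_trans ?_ (W_lemma (hT.comp (measurable_prodMk_left (x := ()))) (hT1 ())
    (hD.comp (measurable_prodMk_left (x := ()))) (hw ()) hu hu0)
  rw [← lintegral_const_mul' _ _ ENNReal.ofReal_ne_top]
  refine le_trans ?_ (setLIntegral_le_lintegral A _)
  refine setLIntegral_mono_ae' hA ?_
  filter_upwards [h] with x hx hxA
  gcongr
  exact hx hxA

lemma iso {N : ℕ} {A : Set (Euc N)} (hA : MeasurableSet A) (h0 : volume A ≠ 0)
    (h1 : volume A ≠ ⊤) (hu : MemBV N (chi A)) :
    N * (beta N / (volume A).toReal) ^ (N : ℝ)⁻¹ * (volume A).toReal ≤ tv N (chi A) := by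
  have h := iso_gen hA h0 h1 hu (fun x => Set.indicator_nonneg (fun _ _ => zero_le_one) x)
  have e : ∫⁻ x in A, ENNReal.ofReal (chi A x) = volume A := by
    rw [← setLIntegral_one]
    refine setLIntegral_congr_fun hA fun x hx => ?_
    simp [chi, hx]
  rw [e] at h
  have h' := ENNReal.toReal_mono ENNReal.ofReal_ne_top h
  rw [ENNReal.toReal_mul, ENNReal.toReal_ofReal (tv_nonneg hu), ENNReal.toReal_ofReal] at h'
  · exact h'
  · exact mul_nonneg (Nat.cast_nonneg _) (Real.rpow_nonneg (div_nonneg (beta_pos N).le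
      ENNReal.toReal_nonneg) _)

lemma tv_zero {N : ℕ} (hN : 1 ≤ N) {u : Euc N → ℝ} (hu : MemBV N u) (h : tv N u = 0) :
    u =ᵐ[volume] 0 := by
  obtain ⟨h1, h2⟩ := sq1_BV hu
  have hf0 : ∀ x, 0 ≤ √(1 + (u x) ^ 2) - 1 := fun x => by
    have := Real.one_le_sqrt.2 (show 1 ≤ 1 + (u x) ^ 2 by nlinarith [sq_nonneg (u x)])
    linarith
  have key : ∀ k : ℕ, ∀ᵐ x, x ∈ Metric.ball (0 : Euc N) (k + 1) → u x = 0 := by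
    intro k
    have kp : (0 : ℝ) < k + 1 := by positivity
    have hv := ball_vol (0 : Euc N) kp
    have hvp : 0 < ((k : ℝ) + 1) ^ N * beta N := mul_pos (by positivity) (beta_pos N)
    have := iso_gen (A := Metric.ball (0 : Euc N) (k + 1)) measurableSet_ball
      (by rw [hv]; simpa using hvp) (by rw [hv]; exact ENNReal.ofReal_ne_top) h1 hf0
    rw [h] at h2
    rw [ENNReal.ofReal_of_nonpos h2, nonpos_iff_eq_zero, mul_eq_zero] at this
    rcases this with h3 | h3
    · exfalso
      rw [ENNReal.ofReal_eq_zero, hv, ENNReal.toReal_ofReal hvp.le] at h3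
      have : 0 < (N : ℝ) * (beta N / (((k : ℝ) + 1) ^ N * beta N)) ^ (N : ℝ)⁻¹ :=
        mul_pos (by exact_mod_cast hN) (Real.rpow_pos_of_pos (div_pos (beta_pos N) hvp) _)
      linarith
    · rw [lintegral_eq_zero_iff' (h1.1.aemeasurable.ennreal_ofReal.restrict),
        EventuallyEq, ae_restrict_iff' measurableSet_ball] at h3
      filter_upwards [h3] with x hx hxA
      have := hx hxA
      simp only [Pi.zero_apply, ENNReal.ofReal_eq_zero] at this
      have h5 : √(1 + (u x) ^ 2) ≤ 1 := by linarith
      rw [Real.sqrt_le_one] at h5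
      nlinarith [sq_nonneg (u x)]
  filter_upwards [ae_all_iff.2 key] with x hx
  obtain ⟨k, hk⟩ := exists_nat_gt ‖x‖
  exact hx k (by simp; linarith)

/-- radial cutoff -/
def rcut (N : ℕ) (R ρ : ℝ) (x : Euc N) : ℝ :=
  Real.smoothTransition ((ρ ^ 2 - ‖x‖ ^ 2) / (ρ ^ 2 - R ^ 2))

lemma st_deriv_nonneg (s : ℝ) : 0 ≤ deriv Real.smoothTransition s :=
  Real.smoothTransition.monotone.deriv_nonneg

lemma st_deriv_zero {s : ℝ} (hs : 1 ≤ s) : deriv Real.smoothTransition s = 0 := by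
  refine IsLocalMax.deriv_eq_zero (Eventually.of_forall fun t => ?_)
  rw [Real.smoothTransition.one_of_one_le hs]
  exact Real.smoothTransition.le_one t

lemma rcut_smooth {N : ℕ} {R ρ : ℝ} : ContDiff ℝ 1 (rcut N R ρ) := by
  unfold rcut
  exact (Real.smoothTransition.contDiff (n := 1)).comp
    ((contDiff_const.sub (contDiff_norm_sq ℝ)).div_const _)

lemma rcut_supp {N : ℕ} {R ρ : ℝ} (hR : 0 < R) (h : R < ρ) : HasCompactSupport (rcut N R ρ) := by
  refine HasCompactSupport.intro (isCompact_closedBall (0 : Euc N) ρ) fun x hx => ?_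
  unfold rcut
  refine Real.smoothTransition.zero_of_nonpos (div_nonpos_of_nonpos_of_nonneg ?_ ?_)
  · simp at hx; nlinarith
  · nlinarith

lemma rcut_out {N : ℕ} {R ρ : ℝ} (hR : 0 < R) (h : R < ρ) {x : Euc N} (hx : ρ ≤ ‖x‖) :
    rcut N R ρ x = 0 := by
  unfold rcut
  refine Real.smoothTransition.zero_of_nonpos (div_nonpos_of_nonpos_of_nonneg ?_ ?_) <;> nlinarith

lemma rcut_in {N : ℕ} {R ρ : ℝ} (hR : 0 < R) (h : R < ρ) {x : Euc N} (hx : ‖x‖ ≤ R) :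
    rcut N R ρ x = 1 := by
  unfold rcut
  refine Real.smoothTransition.one_of_one_le ?_
  rw [le_div_iff₀ (by nlinarith)]
  nlinarith [norm_nonneg x]

lemma rcut_deriv {N : ℕ} {R ρ : ℝ} (x v : Euc N) : fderiv ℝ (rcut N R ρ) x v =
    - (deriv Real.smoothTransition ((ρ ^ 2 - ‖x‖ ^ 2) / (ρ ^ 2 - R ^ 2)) * (2 * inner ℝ x v)
      / (ρ ^ 2 - R ^ 2)) := by
  have h1 : HasFDerivAt (fun x : Euc N => (ρ ^ 2 - ‖x‖ ^ 2) / (ρ ^ 2 - R ^ 2))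
      ((ρ ^ 2 - R ^ 2)⁻¹ • -((2 : ℕ) • (innerSL ℝ x : Euc N →L[ℝ] ℝ))) x := by
    have := ((hasStrictFDerivAt_norm_sq x).hasFDerivAt.const_sub (ρ ^ 2)).mul_const (ρ ^ 2 - R ^ 2)⁻¹
    simpa only [div_eq_mul_inv] using this
  have h2 : HasDerivAt Real.smoothTransition
      (deriv Real.smoothTransition ((ρ ^ 2 - ‖x‖ ^ 2) / (ρ ^ 2 - R ^ 2)))
      ((ρ ^ 2 - ‖x‖ ^ 2) / (ρ ^ 2 - R ^ 2)) :=
    ((Real.smoothTransition.contDiff (n := 1)).differentiable one_ne_zero _).hasDerivAt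
  have h3 := h2.comp_hasFDerivAt x h1
  have e : fderiv ℝ (rcut N R ρ) x = _ := h3.fderiv
  rw [e]
  simp
  ring

lemma rcut_le {N : ℕ} {R ρ : ℝ} (hR : 0 < R) (h : R < ρ) (x v : Euc N) (hv : ‖v‖ ≤ 1) :
    - fderiv ℝ (rcut N R ρ) x v ≤ R⁻¹ * (- fderiv ℝ (rcut N R ρ) x x) := by
  rw [rcut_deriv, rcut_deriv, neg_neg, neg_neg]
  have hp : 0 < ρ ^ 2 - R ^ 2 := by nlinarith
  set d := deriv Real.smoothTransition ((ρ ^ 2 - ‖x‖ ^ 2) / (ρ ^ 2 - R ^ 2)) with hd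
  rcases le_or_gt ‖x‖ R with hx | hx
  · have : d = 0 := st_deriv_zero (by rw [le_div_iff₀ hp]; nlinarith [norm_nonneg x])
    rw [this]; simp
  · have d0 : 0 ≤ d := st_deriv_nonneg _
    rw [real_inner_self_eq_norm_sq]
    have h1 : inner ℝ x v ≤ R⁻¹ * ‖x‖ ^ 2 := by
      calc inner ℝ x v ≤ ‖x‖ * ‖v‖ := real_inner_le_norm x v
        _ ≤ ‖x‖ * 1 := by gcongr
        _ ≤ R⁻¹ * ‖x‖ ^ 2 := by
          rw [inv_mul_eq_div, le_div_iff₀ hR]; nlinarith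
    calc d * (2 * inner ℝ x v) / (ρ ^ 2 - R ^ 2) ≤ d * (2 * (R⁻¹ * ‖x‖ ^ 2)) / (ρ ^ 2 - R ^ 2) := by
          gcongr
      _ = _ := by ring

lemma dv_id {N : ℕ} (x : Euc N) : dv N (fun y => y) x = N := by
  rw [dv_eq (ψ := fun y => y) differentiableAt_id, fderiv_fun_id]
  simp

lemma rcut_div {N : ℕ} {R ρ : ℝ} (hR : 0 < R) (h : R < ρ) :
    - ∫ x, fderiv ℝ (rcut N R ρ) x x = N * ∫ x, rcut N R ρ x := by
  have h0 : ∫ x, (dv N fun y => rcut N R ρ y • y) x = 0 :=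
    integral_dv ((rcut_smooth (N := N) (R := R) (ρ := ρ)).smul contDiff_id)
      ((rcut_supp hR h).mono fun x hx hx' => hx (by simp only [hx', zero_smul]))
  have e : (dv N fun y => rcut N R ρ y • y) = fun x => rcut N R ρ x * N + fderiv ℝ (rcut N R ρ) x x :=
    funext fun x => by
      rw [dv_smul (ψ := fun y => y) (rcut_smooth.differentiable one_ne_zero x) differentiableAt_id, dv_id]
  have i1 : Integrable (rcut N R ρ) :=
    rcut_smooth.continuous.integrable_of_hasCompactSupport (rcut_supp hR h)
  have i2 : Integrable fun x => fderiv ℝ (rcut N R ρ) x x := by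
    refine Continuous.integrable_of_hasCompactSupport
      ((rcut_smooth.continuous_fderiv one_ne_zero).clm_apply continuous_id) ?_
    exact ((rcut_supp hR h).fderiv (𝕜 := ℝ)).mono fun x hx => by
      intro h; apply hx; simp [h]
  rw [e, integral_add (i1.mul_const _) i2, integral_mul_const] at h0
  linarith

lemma rcut_int_le {N : ℕ} {R ρ : ℝ} (hR : 0 < R) (h : R < ρ) :
    ∫ x, rcut N R ρ x ≤ ρ ^ N * beta N := by
  have i1 : Integrable (rcut N R ρ) :=
    rcut_smooth.continuous.integrable_of_hasCompactSupport (rcut_supp hR h)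
  have e : ∫ x, chi (Metric.ball (0 : Euc N) ρ) x = ρ ^ N * beta N := by
    rw [integral_indicator measurableSet_ball, integral_const]
    simp only [smul_eq_mul, mul_one, measureReal_restrict_apply_univ]
    rw [measureReal_def, ball_vol _ (hR.trans h), ENNReal.toReal_ofReal]
    exact mul_nonneg (pow_nonneg (hR.trans h).le _) (beta_pos N).le
  rw [← e]
  refine integral_mono i1 ?_ fun x => ?_
  · exact chi_int measurableSet_ball measure_ball_lt_top.ne
  · by_cases hx : ‖x‖ < ρ
    · simp only [chi, Set.indicator, Metric.mem_ball, dist_zero_right, hx, if_true]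
      exact Real.smoothTransition.le_one _
    · rw [rcut_out hR h (not_lt.1 hx)]
      exact Set.indicator_nonneg (fun _ _ => zero_le_one) x


lemma ball_tv_aux {N : ℕ} {R : ℝ} (hR : 0 < R) {ψ : Euc N → Euc N} (h : ContDiff ℝ 1 ψ)
    (hc : HasCompactSupport ψ) (hb : ∀ x, ‖ψ x‖ ≤ 1) :
    ∫ x, chi (Metric.ball (0 : Euc N) R) x * dv N ψ x ≤ N / R * (R ^ N * beta N) := by
  obtain ⟨C, hC⟩ := dv_bdd h hc
  have hC0 : 0 ≤ C := (norm_nonneg _).trans (hC 0)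
  have ec : ∀ {ρ : ℝ}, 0 < ρ → ∫ x, chi (Metric.ball (0 : Euc N) ρ) x = ρ ^ N * beta N := by
    intro ρ hρ
    rw [integral_indicator measurableSet_ball, integral_const]
    simp only [smul_eq_mul, mul_one, measureReal_restrict_apply_univ]
    rw [measureReal_def, ball_vol _ hρ, ENNReal.toReal_ofReal]
    exact mul_nonneg (pow_nonneg hρ.le _) (beta_pos N).le
  have ci : ∀ ρ : ℝ, Integrable (chi (Metric.ball (0 : Euc N) ρ)) := fun ρ =>
    chi_int measurableSet_ball measure_ball_lt_top.ne
  have key : ∀ ρ, R < ρ → ∫ x, chi (Metric.ball (0 : Euc N) R) x * dv N ψ x ≤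
      N / R * (ρ ^ N * beta N) + C * (ρ ^ N * beta N - R ^ N * beta N) := by
    intro ρ hρ
    have i1 : Integrable (rcut N R ρ) :=
      rcut_smooth.continuous.integrable_of_hasCompactSupport (rcut_supp hR hρ)
    have s1 : ∫ x, rcut N R ρ x * dv N ψ x ≤ N / R * (ρ ^ N * beta N) := by
      rw [integral_mul_dv rcut_smooth h hc, ← integral_neg]
      calc ∫ x, - fderiv ℝ (rcut N R ρ) x (ψ x)
          ≤ ∫ x, R⁻¹ * (- fderiv ℝ (rcut N R ρ) x x) := by
            refine integral_mono ?_ ?_ fun x => rcut_le hR hρ x _ (hb x)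
            · refine Continuous.integrable_of_hasCompactSupport
                ((rcut_smooth.continuous_fderiv one_ne_zero).clm_apply h.continuous).neg ?_
              exact ((rcut_supp hR hρ).fderiv (𝕜 := ℝ)).mono fun x hx => by
                intro h; apply hx; simp [h]
            · refine Continuous.integrable_of_hasCompactSupport (continuous_const.mul
                ((rcut_smooth.continuous_fderiv one_ne_zero).clm_apply continuous_id).neg) ?_
              exact ((rcut_supp hR hρ).fderiv (𝕜 := ℝ)).mono fun x hx => by
                intro h; apply hx; simp [h]
        _ = R⁻¹ * (N * ∫ x, rcut N R ρ x) := by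
            rw [integral_const_mul, integral_neg, rcut_div hR hρ]
        _ ≤ R⁻¹ * (N * (ρ ^ N * beta N)) := by
            have := rcut_int_le (N := N) hR hρ
            gcongr
        _ = _ := by ring
    have s2 : ∫ x, (chi (Metric.ball (0 : Euc N) R) x - rcut N R ρ x) * dv N ψ x ≤
        C * (ρ ^ N * beta N - R ^ N * beta N) := by
      rw [← ec hR, ← ec (hR.trans hρ), ← integral_sub (ci _) (ci _), ← integral_const_mul]
      refine integral_mono (mul_dv_int ((ci _).sub i1) h hc) (((ci _).sub (ci _)).const_mul _)
        fun x => ?_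
      have hd := abs_le.1 (hC x)
      have r0 : 0 ≤ rcut N R ρ x := Real.smoothTransition.nonneg _
      have r1 : rcut N R ρ x ≤ 1 := Real.smoothTransition.le_one _
      rcases lt_or_ge ‖x‖ R with hx | hx
      · rw [rcut_in hR hρ hx.le]
        simp [chi, Set.indicator, hx, hx.trans hρ]
      · rcases lt_or_ge ‖x‖ ρ with hx' | hx'
        · simp only [chi, Set.indicator, Metric.mem_ball, dist_zero_right, hx.not_gt, hx', if_true,
            if_false]
          nlinarith
        · rw [rcut_out hR hρ hx']
          simp [chi, Set.indicator, hx.not_gt, hx'.not_gt]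
    have e : ∫ x, chi (Metric.ball (0 : Euc N) R) x * dv N ψ x
        = (∫ x, rcut N R ρ x * dv N ψ x) +
          ∫ x, (chi (Metric.ball (0 : Euc N) R) x - rcut N R ρ x) * dv N ψ x := by
      have i2 : Integrable fun x =>
          (chi (Metric.ball (0 : Euc N) R) x - rcut N R ρ x) * dv N ψ x :=
        mul_dv_int ((ci _).sub i1) h hc
      rw [← integral_add (mul_dv_int i1 h hc) i2]
      refine integral_congr_ae (ae_of_all _ fun x => ?_)
      simp only []
      ring
    rw [e]; exact add_le_add s1 s2
  have ht : Tendsto (fun ρ : ℝ => N / R * (ρ ^ N * beta N) + C * (ρ ^ N * beta N - R ^ N * beta N))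
      (𝓝[>] R) (𝓝 (N / R * (R ^ N * beta N) + C * (R ^ N * beta N - R ^ N * beta N))) :=
    (Continuous.tendsto (by fun_prop) R).mono_left nhdsWithin_le_nhds
  rw [sub_self, mul_zero, add_zero] at ht
  refine ge_of_tendsto ht ?_
  filter_upwards [self_mem_nhdsWithin] with ρ hρ using key ρ hρ

lemma ball_BV {N : ℕ} {R : ℝ} (hR : 0 < R) : MemBV N (chi (Metric.ball (0 : Euc N) R)) :=
  ⟨chi_int measurableSet_ball measure_ball_lt_top.ne, ⟨_, by
    rintro r ⟨ψ, h, hc, hb, rfl⟩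
    exact ball_tv_aux hR h hc hb⟩⟩

lemma ball_tv_le {N : ℕ} {R : ℝ} (hR : 0 < R) :
    tv N (chi (Metric.ball (0 : Euc N) R)) ≤ N / R * (R ^ N * beta N) := by
  refine csSup_le ⟨0, zero_mem_TVSet _⟩ ?_
  rintro r ⟨ψ, h, hc, hb, rfl⟩
  exact ball_tv_aux hR h hc hb

lemma FF_sub {m : ℝ → ENNReal} (hm : Measurable m) (hV : ∫⁻ s, m s ≠ ⊤) (s t : ℝ) :
    FF m t = FF m s + ∫ r in s..t, (m r).toReal / (∫⁻ s, m s).toReal := by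
  have hi := m_int hm hV
  rw [FF_eq hm hV, FF_eq hm hV, intervalIntegral.integral_div, ← add_div]
  congr 1
  rw [← intervalIntegral.integral_Iic_sub_Iic hi.integrableOn hi.integrableOn]
  ring

lemma FF_cont {m : ℝ → ENNReal} (hm : Measurable m) (hV : ∫⁻ s, m s ≠ ⊤) : Continuous (FF m) := by
  have hi := (m_int hm hV).div_const (∫⁻ s, m s).toReal
  have : FF m = fun t => FF m 0 + ∫ r in (0 : ℝ)..t, (m r).toReal / (∫⁻ s, m s).toReal :=
    funext fun t => FF_sub hm hV 0 t
  rw [this]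
  exact continuous_const.add (intervalIntegral.continuous_primitive
    (fun a b => hi.intervalIntegrable) 0)

lemma FF_top {m : ℝ → ENNReal} (hm : Measurable m) (hV : ∫⁻ s, m s ≠ ⊤) (hV0 : ∫⁻ s, m s ≠ 0) :
    Tendsto (FF m) atTop (𝓝 1) := by
  have hi := m_int hm hV
  have h := (aecover_Iic (μ := volume) (b := fun t : ℝ => t) (l := atTop)
    tendsto_id).integral_tendsto_of_countably_generated hi
  have h2 := h.div_const (∫⁻ s, m s).toReal
  rw [integral_toReal hm.aemeasurable (ae_lt_top hm hV), div_self
    (ENNReal.toReal_ne_zero.2 ⟨hV0, hV⟩)] at h2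
  refine h2.congr fun t => ?_
  rw [FF_eq hm hV]

lemma FF_bot {m : ℝ → ENNReal} (hm : Measurable m) (hV : ∫⁻ s, m s ≠ ⊤) (hV0 : ∫⁻ s, m s ≠ 0) :
    Tendsto (FF m) atBot (𝓝 0) := by
  have hi := m_int hm hV
  have h := (aecover_Ioi (μ := volume) (a := fun t : ℝ => t) (l := atBot)
    tendsto_id).integral_tendsto_of_countably_generated hi
  have h2 := (h.const_sub (∫ s, (m s).toReal)).div_const (∫⁻ s, m s).toReal
  rw [sub_self, zero_div] at h2
  refine h2.congr fun t => ?_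
  rw [FF_eq hm hV, ← intervalIntegral.integral_Iic_add_Ioi (b := t) hi.integrableOn hi.integrableOn]
  congr 1
  ring

lemma FF_ivt {m : ℝ → ENNReal} (hm : Measurable m) (hV : ∫⁻ s, m s ≠ ⊤) (hV0 : ∫⁻ s, m s ≠ 0)
    {y : ℝ} (hy : y ∈ Set.Ioo (0 : ℝ) 1) : ∃ t, FF m t = y := by
  have h1 := ((FF_bot hm hV hV0).eventually (gt_mem_nhds hy.1)).exists
  have h2 := ((FF_top hm hV hV0).eventually (lt_mem_nhds hy.2)).exists
  obtain ⟨a, ha⟩ := h1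
  obtain ⟨b, hb⟩ := h2
  exact mem_range_of_exists_le_of_exists_ge (FF_cont hm hV) ⟨a, ha.le⟩ ⟨b, hb.le⟩

lemma Gn_symm (n : ℕ) (x : ℝ) : Gn n x + Gn n (-x) = 1 := by
  have hc : ∀ a b, IntervalIntegrable (wt n) volume a b := fun a b =>
    (wt_cont n).intervalIntegrable a b
  have e : ∫ s in (-1 : ℝ)..(-x), wt n s = ∫ s in x..1, wt n s := by
    rw [← intervalIntegral.integral_comp_neg]
    refine intervalIntegral.integral_congr fun s _ => ?_
    simp [wt]
  unfold Gn
  rw [e, ← mul_add, intervalIntegral.integral_add_adjacent_intervals (hc _ _) (hc _ _)]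
  exact inv_mul_cancel₀ (kap_pos n).ne'

lemma FF_der {n : ℕ} {m : ℝ → ENNReal} {c : ℝ} (hm : Measurable m) (hV : ∫⁻ s, m s ≠ ⊤)
    (h : ∀ᵐ t, FF m t ∈ Set.Ioo (0 : ℝ) 1 → ad n m t = c) {t : ℝ}
    (ht : FF m t ∈ Set.Ioo (0 : ℝ) 1) :
    HasDerivAt (FF m) (c * wt n (aa n m t) / kap n) t := by
  have hca : ContinuousAt (aa n m) t :=
    ContinuousAt.comp (Gam_deriv n ht).continuousAt (FF_cont hm hV).continuousAt
  have hma : Measurable fun s => c * wt n (aa n m s) / kap n :=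
    (((wt_cont n).measurable.comp (aa_mono n m).measurable).const_mul c).div_const _
  have h1 : HasDerivAt (fun s => ∫ r in t..s, c * wt n (aa n m r) / kap n)
      (c * wt n (aa n m t) / kap n) t := by
    refine intervalIntegral.integral_hasDerivAt_right (by simp)
      (hma.stronglyMeasurable.stronglyMeasurableAtFilter) ?_
    exact (continuousAt_const.mul ((wt_cont n).continuousAt.comp hca)).div_const _
  refine (h1.const_add (FF m t)).congr_of_eventuallyEq ?_
  have hI : ∀ᶠ s in 𝓝 t, FF m s ∈ Set.Ioo (0 : ℝ) 1 :=
    (FF_cont hm hV).continuousAt.eventually (isOpen_Ioo.mem_nhds ht)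
  filter_upwards [hI] with s hs
  rw [FF_sub hm hV t s]
  congr 1
  refine intervalIntegral.integral_congr_ae ?_
  filter_upwards [h] with r hr hrs
  have hrI : FF m r ∈ Set.Ioo (0 : ℝ) 1 := by
    have h1 := FF_mono m hrs.1.le
    have h2 := FF_mono m hrs.2
    refine ⟨lt_of_lt_of_le ?_ h1, lt_of_le_of_lt h2 ?_⟩
    · rcases min_choice t s with e | e <;> rw [e]
      exacts [ht.1, hs.1]
    · rcases max_choice t s with e | e <;> rw [e]
      exacts [ht.2, hs.2]
  have := hr hrI
  unfold ad at this
  rw [if_pos hrI] at this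
  have hw : 0 < wt n (aa n m r) := wt_pos n (Gam_Ioo n hrI)
  have hb : bb n m r ^ n = wt n (aa n m r) := rfl
  rw [hb, div_eq_iff hw.ne'] at this
  rw [eq_div_iff (kap_pos n).ne', ← this]
  ring

lemma prof {n : ℕ} {m : ℝ → ENNReal} {R : ℝ} (hR : 0 < R) (hm : Measurable m)
    (hV : ∫⁻ s, m s ≠ ⊤) (hV0 : ∫⁻ s, m s ≠ 0)
    (h : ∀ᵐ t, FF m t ∈ Set.Ioo (0 : ℝ) 1 → ad n m t = R⁻¹) :
    ∃ p, (∀ s, FF m (p + s) + FF m (p - s) = 1) ∧ FF m (p + R) = 1 ∧ FF m (p - R) = 0 := by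
  obtain ⟨t0, ht0⟩ := FF_ivt hm hV hV0 (y := 1 / 2) (by norm_num)
  have ht0I : FF m t0 ∈ Set.Ioo (0 : ℝ) 1 := by rw [ht0]; norm_num
  have hder : ∀ t, FF m t ∈ Set.Ioo (0 : ℝ) 1 → HasDerivAt (aa n m) R⁻¹ t := by
    intro t ht
    have h1 := (Gam_deriv n ht).comp t (FF_der hm hV h ht)
    have hw : wt n (Gam n (FF m t)) ≠ 0 := (wt_pos n (Gam_Ioo n ht)).ne'
    have e : kap n / wt n (Gam n (FF m t)) * (R⁻¹ * wt n (aa n m t) / kap n) = R⁻¹ := by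
      have := (kap_pos n).ne'
      unfold aa
      field_simp
    rw [e] at h1
    exact h1
  have hlin : ∀ t1 t2, t1 < t2 → FF m t1 ∈ Set.Ioo (0 : ℝ) 1 → FF m t2 ∈ Set.Ioo (0 : ℝ) 1 →
      aa n m t2 - aa n m t1 = R⁻¹ * (t2 - t1) := by
    intro t1 t2 h12 h1 h2
    have hI : ∀ t ∈ Set.Icc t1 t2, FF m t ∈ Set.Ioo (0 : ℝ) 1 := fun t ht =>
      ⟨h1.1.trans_le (FF_mono m ht.1), (FF_mono m ht.2).trans_lt h2.2⟩
    obtain ⟨x, hx, e⟩ := exists_hasDerivAt_eq_slope (aa n m) (fun _ => R⁻¹) h12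
      (fun t ht => (hder t (hI t ht)).continuousAt.continuousWithinAt)
      (fun t ht => hder t (hI t ⟨ht.1.le, ht.2.le⟩))
    rw [e, div_mul_cancel₀ _ (sub_pos.2 h12).ne']
  set p := t0 - R * aa n m t0 with hp
  have hap : ∀ t, FF m t ∈ Set.Ioo (0 : ℝ) 1 → aa n m t = R⁻¹ * (t - p) := by
    intro t ht
    have hh : R⁻¹ * (t - p) = aa n m t0 + R⁻¹ * (t - t0) := by
      rw [hp]; field_simp; ring
    rw [hh]
    rcases lt_trichotomy t t0 with h1 | h1 | h1
    · have := hlin t t0 h1 ht ht0I; linarith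
    · rw [h1]; ring
    · have := hlin t0 t h1 ht0I ht; linarith
  have hFin : ∀ t, |t - p| < R → FF m t = Gn n (R⁻¹ * (t - p)) := by
    intro t ht
    rw [abs_lt] at ht
    have hx : R⁻¹ * (t - p) ∈ Set.Ioo (-1 : ℝ) 1 := by
      rw [inv_mul_eq_div]
      exact ⟨by rw [lt_div_iff₀ hR]; linarith, by rw [div_lt_iff₀ hR]; linarith⟩
    have hy : Gn n (R⁻¹ * (t - p)) ∈ Set.Ioo (0 : ℝ) 1 := by
      have g1 := Gn_strictMono n (show (-1 : ℝ) ∈ Set.Icc (-1) 1 by norm_num)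
        ⟨hx.1.le, hx.2.le⟩ hx.1
      have g2 := Gn_strictMono n ⟨hx.1.le, hx.2.le⟩
        (show (1 : ℝ) ∈ Set.Icc (-1) 1 by norm_num) hx.2
      rw [Gn_left] at g1
      rw [Gn_right] at g2
      exact ⟨g1, g2⟩
    obtain ⟨t', ht'⟩ := FF_ivt hm hV hV0 hy
    have e1 := hap t' (by rw [ht']; exact hy)
    have e2 : aa n m t' = R⁻¹ * (t - p) := by
      unfold aa; rw [ht', Gam_Gn n ⟨hx.1.le, hx.2.le⟩]
    have e3 : t' = t := by
      have := mul_left_cancel₀ (inv_ne_zero hR.ne') (e1.symm.trans e2)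
      linarith
    rw [← e3, ht', e3]
  have hIlt : ∀ t, FF m t ∈ Set.Ioo (0 : ℝ) 1 → |t - p| < R := by
    intro t ht
    have h1 : aa n m t ∈ Set.Ioo (-1 : ℝ) 1 := Gam_Ioo n ht
    rw [hap t ht, inv_mul_eq_div] at h1
    have a1 := (lt_div_iff₀ hR).1 h1.1
    have a2 := (div_lt_iff₀ hR).1 h1.2
    rw [abs_lt]; constructor <;> linarith
  have h01 : ∀ t, R ≤ |t - p| → FF m t = 0 ∨ FF m t = 1 := by
    intro t ht
    by_contra hcon
    push Not at hcon
    exact absurd (hIlt t ⟨lt_of_le_of_ne (FF_nonneg m t) hcon.1.symm,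
      lt_of_le_of_ne (FF_le_one m t) hcon.2⟩) (not_lt.2 ht)
  have ht0p := abs_lt.1 (hIlt t0 ht0I)
  have hup : ∀ t, p + R ≤ t → FF m t = 1 := by
    intro t ht
    rcases h01 t (by rw [abs_of_nonneg] <;> linarith) with h1 | h1
    · have := FF_mono m (show t0 ≤ t by linarith)
      rw [h1, ht0] at this; norm_num at this
    · exact h1
  have hdn : ∀ t, t ≤ p - R → FF m t = 0 := by
    intro t ht
    rcases h01 t (by rw [abs_of_nonpos] <;> linarith) with h1 | h1
    · exact h1
    · have := FF_mono m (show t ≤ t0 by linarith)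
      rw [h1, ht0] at this; norm_num at this
  refine ⟨p, fun s => ?_, hup _ le_rfl, hdn _ le_rfl⟩
  rcases lt_or_ge |s| R with hs | hs
  · rw [hFin (p + s) (by simpa using hs), hFin (p - s) (by simpa using hs)]
    have e1 : R⁻¹ * (p + s - p) = R⁻¹ * s := by ring
    have e2 : R⁻¹ * (p - s - p) = -(R⁻¹ * s) := by ring
    rw [e1, e2, Gn_symm]
  · rcases le_abs.1 hs with h1 | h1
    · rw [hup (p + s) (by linarith), hdn (p - s) (by linarith)]; norm_num
    · rw [hdn (p + s) (by linarith), hup (p - s) (by linarith)]; norm_num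

lemma chi_lint {N : ℕ} {A : Set (Euc N)} (hA : MeasurableSet A) (f : Euc N → ENNReal) :
    ∫⁻ x, f x * ENNReal.ofReal (chi A x) = ∫⁻ x in A, f x := by
  rw [← lintegral_indicator hA]
  refine lintegral_congr fun x => ?_
  by_cases h : x ∈ A <;> simp [chi, h]

set_option maxHeartbeats 1000000 in
lemma rig1 {n : ℕ} (hn : 1 ≤ n) {A : Set (Euc (n + 1))} (hA : MeasurableSet A) {R : ℝ}
    (hR : 0 < R) (hV : volume A = ENNReal.ofReal (R ^ (n + 1) * beta (n + 1)))
    (hu : MemBV (n + 1) (chi A))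
    (ht : tv (n + 1) (chi A) ≤ (n + 1) * R⁻¹ * (R ^ (n + 1) * beta (n + 1))) :
    ∀ᵐ t, slc (uset A) () t ≠ 0 → ad n (slc (uset A) ()) t = R⁻¹ := by
  have hc : 0 < R⁻¹ := inv_pos.2 hR
  have Vp : 0 < R ^ (n + 1) * beta (n + 1) := mul_pos (by positivity) (beta_pos _)
  have hUA := uset_meas hA
  obtain ⟨T, D, hT, hD, hT1, hw, hDA⟩ := knothe_step (knothe n) Unit (uset A) hUA
  have hDm : Measurable (D ()) := hD.comp (measurable_prodMk_left (x := ()))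
  have W := W_lemma (hT.comp (measurable_prodMk_left (x := ()))) (hT1 ()) hDm (hw ()) hu
    (fun x => Set.indicator_nonneg (fun _ _ => zero_le_one) x)
  rw [chi_lint hA] at W
  have hv := uset_vol hA
  have hs := slice_rel (c := R⁻¹) hUA () (by rw [hv, hV]; simpa using Vp)
    (by rw [hv, hV]; exact ENNReal.ofReal_ne_top)
    (by rw [hv, hV, ENNReal.toReal_ofReal Vp.le]; have := (beta_pos (n + 1)).ne'; rw [inv_pow]; field_simp)
  have hs' := (Measure.quasiMeasurePreserving_eval (fun _ : Fin (n + 1) => (volume : Measure ℝ))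
      0).ae hs
  have hb : ∀ x : Fin (n + 1) → ℝ, 0 ≤ bb n (slc (uset A) ()) (x 0) *
      (beta n / (slc (uset A) () (x 0)).toReal) ^ (n : ℝ)⁻¹ := fun x =>
    mul_nonneg (bb_nonneg (x 0)) (Real.rpow_nonneg
      (div_nonneg (beta_pos n).le ENNReal.toReal_nonneg) _)
  have hle : ∀ᵐ x : Fin (n + 1) → ℝ, ((), x) ∈ uset A →
      ENNReal.ofReal ((n + 1) * R⁻¹) ≤ D () x := by
    filter_upwards [hDA (), hs'] with x hx hx' hxA
    obtain ⟨k1, k2⟩ := hx hxA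
    obtain ⟨k3, k4⟩ := hx' k1
    exact le_trans (ENNReal.ofReal_le_ofReal (amgm (hb x) hc k4).1) (k2 k3)
  have hle2 := (PiLp.volume_preserving_ofLp (Fin (n + 1))).quasiMeasurePreserving.ae hle
  have heq : ∀ᵐ x : Euc (n + 1), x ∈ A → ENNReal.ofReal ((n + 1) * R⁻¹) = D () x.ofLp := by
    have := ae_eq_of_ae_le_of_lintegral_le (μ := volume.restrict A)
      (f := fun _ => ENNReal.ofReal ((n + 1) * R⁻¹)) (g := fun x => D () x.ofLp)
      ((ae_restrict_iff' hA).2 hle2) ?_ ?_ ?_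
    · exact (ae_restrict_iff' hA).1 this
    · rw [setLIntegral_const, hV]
      exact ENNReal.mul_ne_top ENNReal.ofReal_ne_top ENNReal.ofReal_ne_top
    · exact (hDm.comp (PiLp.volume_preserving_ofLp (Fin (n + 1))).measurable).aemeasurable
    · rw [setLIntegral_const, hV, ← ENNReal.ofReal_mul (by positivity)]
      exact W.trans (ENNReal.ofReal_le_ofReal ht)
  have heq2 := (PiLp.volume_preserving_toLp (Fin (n + 1))).quasiMeasurePreserving.ae heq
  have mad : Measurable (ad n (slc (uset A) ())) :=
    (meas_ad n (slc_meas hUA)).comp (measurable_prodMk_left (x := ()))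
  have hfin : ∀ᵐ x : Fin (n + 1) → ℝ, x ∈ {x : Fin (n + 1) → ℝ | ((), x) ∈ uset A →
      ad n (slc (uset A) ()) (x 0) = R⁻¹} := by
    filter_upwards [hDA (), hs', heq2] with x hx hx' hx2 hxA
    obtain ⟨k1, k2⟩ := hx hxA
    obtain ⟨k3, k4⟩ := hx' k1
    have h5 := hx2 hxA
    have k5 := k2 k3
    by_contra hne
    have h6 := (amgm (hb x) hc k4).2 hn hne
    have h7 : ENNReal.ofReal ((n + 1) * R⁻¹) < ENNReal.ofReal ((n + 1) * R⁻¹) :=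
      lt_of_lt_of_le ((ENNReal.ofReal_lt_ofReal_iff (lt_trans (by positivity) h6)).2 h6)
        (k5.trans h5.ge)
    exact lt_irrefl _ h7
  rw [ae_cons] at hfin
  · filter_upwards [hfin] with t ht h0
    by_contra hne
    refine h0 ?_
    unfold slc
    rw [measure_eq_zero_iff_ae_notMem]
    filter_upwards [ht] with x' hx' hx2
    exact hne (by simpa using hx' hx2)
  · exact (measurable_prodMk_left hUA).imp
      ((mad.comp (measurable_pi_apply 0)) (measurableSet_singleton _))

lemma st_deriv_zero' {s : ℝ} (hs : s ≤ 0) : deriv Real.smoothTransition s = 0 := by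
  refine IsLocalMin.deriv_eq_zero (Eventually.of_forall fun t => ?_)
  rw [Real.smoothTransition.zero_of_nonpos hs]
  exact Real.smoothTransition.nonneg t

lemma st_deriv_bdd : ∃ C, 0 ≤ C ∧ ∀ s, |deriv Real.smoothTransition s| ≤ C := by
  have hc : Continuous (deriv Real.smoothTransition) :=
    (Real.smoothTransition.contDiff (n := 1)).continuous_deriv le_rfl
  obtain ⟨C, hC⟩ := (isCompact_Icc (a := (0 : ℝ)) (b := 1)).exists_bound_of_continuousOn
    hc.continuousOn
  have hC0 : 0 ≤ C := (norm_nonneg _).trans (hC 0 (by norm_num))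
  refine ⟨C, hC0, fun s => ?_⟩
  rcases le_total s 0 with h | h
  · rw [st_deriv_zero' h]; simpa using hC0
  rcases le_total 1 s with hs1 | hs1
  · rw [st_deriv_zero hs1]; simpa using hC0
  exact hC s ⟨h, hs1⟩

/-- linear cutoff in the coordinate direction `i` -/
def hcut {N : ℕ} (i : Fin N) (s ε : ℝ) (x : Euc N) : ℝ := Real.smoothTransition ((x i - s) / ε)

lemma hcut_smooth {N : ℕ} (i : Fin N) (s ε : ℝ) : ContDiff ℝ 1 (hcut i s ε) := by
  unfold hcut
  exact (Real.smoothTransition.contDiff (n := 1)).comp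
    (((EuclideanSpace.proj i : Euc N →L[ℝ] ℝ).contDiff.sub contDiff_const).div_const _)

lemma hcut_deriv {N : ℕ} (i : Fin N) (s ε : ℝ) (x v : Euc N) : fderiv ℝ (hcut i s ε) x v =
    deriv Real.smoothTransition ((x i - s) / ε) * (v i / ε) := by
  have h1 : HasFDerivAt (fun x : Euc N => (x i - s) / ε)
      (ε⁻¹ • (EuclideanSpace.proj i : Euc N →L[ℝ] ℝ)) x := by
    have := ((EuclideanSpace.proj i : Euc N →L[ℝ] ℝ).hasFDerivAt (x := x)).sub_const s |>.mul_const ε⁻¹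
    simp only [div_eq_mul_inv]
    exact this
  have h2 : HasDerivAt Real.smoothTransition
      (deriv Real.smoothTransition ((x i - s) / ε)) ((x i - s) / ε) :=
    ((Real.smoothTransition.contDiff (n := 1)).differentiable one_ne_zero _).hasDerivAt
  have h3 := h2.comp_hasFDerivAt x h1
  have e : fderiv ℝ (hcut i s ε) x = _ := h3.fderiv
  rw [e]
  change deriv Real.smoothTransition ((x i - s) / ε) * (ε⁻¹ * v i) = _
  ring

lemma cut_aux {N : ℕ} {A : Set (Euc N)} (hA : MeasurableSet A) (h1 : volume A ≠ ⊤)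
    (hu : MemBV N (chi A)) (i : Fin N) (s : ℝ) {ψ₁ ψ₂ : Euc N → Euc N}
    (c1 : ContDiff ℝ 1 ψ₁) (s1 : HasCompactSupport ψ₁) (b1 : ∀ x, ‖ψ₁ x‖ ≤ 1)
    (c2 : ContDiff ℝ 1 ψ₂) (s2 : HasCompactSupport ψ₂) (b2 : ∀ x, ‖ψ₂ x‖ ≤ 1) :
    ∃ C K : ℝ, ∀ ε : ℝ, 0 < ε →
      (∫ x, chi (A ∩ {x | x i ≤ s}) x * dv N ψ₁ x) + (∫ x, chi (A ∩ {x | s < x i}) x * dv N ψ₂ x) ≤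
      tv N (chi A) + (C + K / ε) * (volume (A ∩ {x | s < x i ∧ x i < s + ε})).toReal := by
  obtain ⟨C1, hC1⟩ := dv_bdd c1 s1
  obtain ⟨C2, hC2⟩ := dv_bdd c2 s2
  obtain ⟨C, hC0, hC⟩ := st_deriv_bdd
  have mi : Measurable fun x : Euc N => x i := by fun_prop
  have m1 : MeasurableSet (A ∩ {x : Euc N | x i ≤ s}) := hA.inter (measurableSet_le mi measurable_const)
  have m2 : MeasurableSet (A ∩ {x : Euc N | s < x i}) := hA.inter (measurableSet_lt measurable_const mi)
  have fin : ∀ B : Set (Euc N), volume (A ∩ B) ≠ ⊤ := fun B =>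
    measure_ne_top_of_subset Set.inter_subset_left h1
  refine ⟨2 * C1 + 2 * C2, 2 * C, fun ε hε => ?_⟩
  have m3 : MeasurableSet (A ∩ {x : Euc N | s < x i ∧ x i < s + ε}) :=
    hA.inter ((measurableSet_lt measurable_const mi).inter (measurableSet_lt mi measurable_const))
  set h := hcut i s ε with hh
  have hsm : ContDiff ℝ 1 h := hcut_smooth i s ε
  have ksm : ContDiff ℝ 1 fun y => 1 - h y := contDiff_const.sub hsm
  have h0 : ∀ x, 0 ≤ h x := fun x => Real.smoothTransition.nonneg _
  have h1' : ∀ x, h x ≤ 1 := fun x => Real.smoothTransition.le_one _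
  set ψ : Euc N → Euc N := fun y => h y • ψ₂ y + (1 - h y) • ψ₁ y with hψ
  have ψc : ContDiff ℝ 1 ψ := (hsm.smul c2).add (ksm.smul c1)
  have ψs : HasCompactSupport ψ := (s2.smul_left (f := h)).add (s1.smul_left (f := fun y => 1 - h y))
  have ψb : ∀ x, ‖ψ x‖ ≤ 1 := fun x => by
    refine (norm_add_le _ _).trans ?_
    rw [norm_smul, norm_smul, Real.norm_of_nonneg (h0 x), Real.norm_of_nonneg (sub_nonneg.2 (h1' x))]
    have := mul_le_mul_of_nonneg_left (b2 x) (h0 x)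
    have := mul_le_mul_of_nonneg_left (b1 x) (sub_nonneg.2 (h1' x))
    linarith
  have ψd : ∀ x, dv N ψ x = h x * dv N ψ₂ x + (1 - h x) * dv N ψ₁ x +
      deriv Real.smoothTransition ((x i - s) / ε) * ((ψ₂ x i - ψ₁ x i) / ε) := by
    intro x
    have d1 := c1.differentiable one_ne_zero x
    have d2 := c2.differentiable one_ne_zero x
    have d3 := hsm.differentiable one_ne_zero x
    have d4 := ksm.differentiable one_ne_zero x
    have d5 : DifferentiableAt ℝ (fun y => h y • ψ₂ y) x := d3.smul d2
    have d6 : DifferentiableAt ℝ (fun y => (1 - h y) • ψ₁ y) x := d4.smul d1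
    rw [hψ, dv_add d5 d6, dv_smul d3 d2, dv_smul d4 d1]
    have : fderiv ℝ (fun y => 1 - h y) x (ψ₁ x) = - fderiv ℝ h x (ψ₁ x) := by
      rw [fderiv_const_sub]; rfl
    rw [this, hcut_deriv, hcut_deriv]
    ring
  have hle := le_tv hu ψc ψs ψb
  have I1 := mul_dv_int (chi_int m1 (fin _)) c1 s1
  have I2 := mul_dv_int (chi_int m2 (fin _)) c2 s2
  have I3 := mul_dv_int hu.1 ψc ψs
  have I4 := (chi_int m3 (fin _)).const_mul (2 * C1 + 2 * C2 + 2 * C / ε)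
  have e4 : ∫ x, (2 * C1 + 2 * C2 + 2 * C / ε) * chi (A ∩ {x | s < x i ∧ x i < s + ε}) x =
      (2 * C1 + 2 * C2 + 2 * C / ε) * (volume (A ∩ {x | s < x i ∧ x i < s + ε})).toReal := by
    rw [integral_const_mul, integral_indicator m3, integral_const]
    simp [measureReal_def]
  rw [← integral_add I1 I2]
  refine le_trans ?_ (add_le_add_left hle _)
  rw [← e4, ← integral_add I3 I4]
  refine integral_mono (I1.add I2) (I3.add I4) fun x => ?_
  by_cases hxA : x ∈ A
  swap
  · simp [chi, hxA]
  simp only [ψd x]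
  rcases le_or_gt (x i) s with hx | hx
  · have a1 : (x i - s) / ε ≤ 0 := div_nonpos_of_nonpos_of_nonneg (by linarith) hε.le
    have a2 : h x = 0 := Real.smoothTransition.zero_of_nonpos a1
    rw [st_deriv_zero' a1, a2]
    simp [chi, hxA, hx, hx.not_gt]
  rcases le_or_gt (s + ε) (x i) with hx' | hx'
  · have a1 : 1 ≤ (x i - s) / ε := by rw [le_div_iff₀ hε]; linarith
    have a2 : h x = 1 := Real.smoothTransition.one_of_one_le a1
    rw [st_deriv_zero a1, a2]
    simp [chi, hxA, hx, hx.not_ge, hx'.not_gt]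
  · have k1 := abs_le.1 (hC1 x)
    have k2 := abs_le.1 (hC2 x)
    have k3 : |(ψ₂ x i - ψ₁ x i) / ε| ≤ 2 / ε := by
      rw [abs_div, abs_of_pos hε]
      gcongr
      have e1 : |ψ₁ x i| ≤ 1 := (PiLp.norm_apply_le (ψ₁ x) i).trans (b1 x)
      have e2 : |ψ₂ x i| ≤ 1 := (PiLp.norm_apply_le (ψ₂ x) i).trans (b2 x)
      have := abs_sub (ψ₂ x i) (ψ₁ x i)
      linarith
    have k4 : |deriv Real.smoothTransition ((x i - s) / ε) * ((ψ₂ x i - ψ₁ x i) / ε)| ≤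
        C * (2 / ε) := by
      rw [abs_mul]; exact mul_le_mul (hC _) k3 (abs_nonneg _) hC0
    have k5 := (abs_le.1 k4).1
    have k6 := h0 x
    have k7 := h1' x
    have k8 : C * (2 / ε) = 2 * C / ε := by ring
    simp [chi, hxA, hx, hx.not_ge, hx']
    nlinarith

lemma cut {N : ℕ} {A : Set (Euc N)} (hA : MeasurableSet A) (h1 : volume A ≠ ⊤)
    (hu : MemBV N (chi A)) (i : Fin N) (s : ℝ)
    (hs : Tendsto (fun ε => (volume (A ∩ {x | s < x i ∧ x i < s + ε})).toReal / ε) (𝓝[>] 0) (𝓝 0)) :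
    MemBV N (chi (A ∩ {x | x i ≤ s})) ∧ MemBV N (chi (A ∩ {x | s < x i})) ∧
      tv N (chi (A ∩ {x | x i ≤ s})) + tv N (chi (A ∩ {x | s < x i})) ≤ tv N (chi A) := by
  have mi : Measurable fun x : Euc N => x i := by fun_prop
  have fin : ∀ B : Set (Euc N), volume (A ∩ B) ≠ ⊤ := fun B =>
    measure_ne_top_of_subset Set.inter_subset_left h1
  have key := tv_pair (v := chi (A ∩ {x | x i ≤ s})) (w := chi (A ∩ {x | s < x i}))
    (C := tv N (chi A)) ?_
  · exact ⟨⟨chi_int (hA.inter (measurableSet_le mi measurable_const)) (fin _), key.1⟩,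
      ⟨chi_int (hA.inter (measurableSet_lt measurable_const mi)) (fin _), key.2.1⟩, key.2.2⟩
  rintro r₁ ⟨ψ₁, c1, s1, b1, rfl⟩ r₂ ⟨ψ₂, c2, s2, b2, rfl⟩
  obtain ⟨C, K, h⟩ := cut_aux hA h1 hu i s c1 s1 b1 c2 s2 b2
  have h0 : Tendsto (fun ε : ℝ => ε) (𝓝[>] 0) (𝓝 0) := nhdsWithin_le_nhds
  have ht := (((h0.const_mul C).add_const K).mul hs).const_add (tv N (chi A))
  rw [mul_zero, add_zero] at ht
  refine ge_of_tendsto ht ?_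
  filter_upwards [self_mem_nhdsWithin] with ε hε
  have hε' : (0 : ℝ) < ε := hε
  refine (h ε hε).trans (le_of_eq ?_)
  field_simp

lemma slab {n : ℕ} {A : Set (Euc (n + 1))} (hA : MeasurableSet A) {B : Set ℝ}
    (hB : MeasurableSet B) :
    volume (A ∩ {x | x 0 ∈ B}) = ∫⁻ t in B, slc (uset A) () t := by
  have mi : Measurable fun x : Euc (n + 1) => x 0 := by fun_prop
  have hm : MeasurableSet (A ∩ {x : Euc (n + 1) | x 0 ∈ B}) := hA.inter (mi hB)
  rw [← uset_vol hm, ← slc_total (uset_meas hm), ← lintegral_indicator hB]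
  refine lintegral_congr fun t => ?_
  by_cases ht : t ∈ B <;> simp [slc, uset, ht]

lemma slab_real {n : ℕ} {A : Set (Euc (n + 1))} (hA : MeasurableSet A) {V : ℝ} (hV : 0 < V)
    (hAV : volume A = ENNReal.ofReal V) (t : ℝ) :
    volume.real (A ∩ {x | x 0 ≤ t}) = V * FF (slc (uset A) ()) t := by
  have e : ∫⁻ s, slc (uset A) () s = ENNReal.ofReal V := by
    rw [slc_total (uset_meas hA), uset_vol hA, hAV]
  have := slab hA (measurableSet_Iic (a := t))
  simp only [Set.mem_Iic] at this
  rw [measureReal_def, this, FF, e, ENNReal.toReal_ofReal hV.le, setLIntegral_congr Iio_ae_eq_Iic]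
  field_simp

lemma slab_real' {n : ℕ} {A : Set (Euc (n + 1))} (hA : MeasurableSet A) {V : ℝ} (hV : 0 < V)
    (hAV : volume A = ENNReal.ofReal V) (t : ℝ) :
    volume.real (A ∩ {x | t < x 0}) = V * (1 - FF (slc (uset A) ()) t) := by
  have mi : Measurable fun x : Euc (n + 1) => x 0 := by fun_prop
  have h := measureReal_inter_add_sdiff (μ := volume) (s := A)
    (mi (measurableSet_Iic (a := t))) (by rw [hAV]; exact ENNReal.ofReal_ne_top)
  have e1 : A \ ((fun x : Euc (n + 1) => x 0) ⁻¹' Set.Iic t) = A ∩ {x | t < x 0} := by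
    ext x; simp
  have e2 : A ∩ ((fun x : Euc (n + 1) => x 0) ⁻¹' Set.Iic t) = A ∩ {x | x 0 ≤ t} := rfl
  have e3 : volume.real A = V := by rw [measureReal_def, hAV, ENNReal.toReal_ofReal hV.le]
  rw [e1, e2, slab_real hA hV hAV, e3] at h
  linarith

lemma slab_lt {n : ℕ} {A : Set (Euc (n + 1))} (hA : MeasurableSet A) {V : ℝ} (hV : 0 < V)
    (hAV : volume A = ENNReal.ofReal V) (t : ℝ) :
    volume.real (A ∩ {x | x 0 < t}) = V * FF (slc (uset A) ()) t := by
  have e : ∫⁻ s, slc (uset A) () s = ENNReal.ofReal V := by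
    rw [slc_total (uset_meas hA), uset_vol hA, hAV]
  have := slab hA (measurableSet_Iio (a := t))
  simp only [Set.mem_Iio] at this
  rw [measureReal_def, this, FF, e, ENNReal.toReal_ofReal hV.le]
  field_simp

lemma slab_ge {n : ℕ} {A : Set (Euc (n + 1))} (hA : MeasurableSet A) {V : ℝ} (hV : 0 < V)
    (hAV : volume A = ENNReal.ofReal V) (t : ℝ) :
    volume.real (A ∩ {x | t ≤ x 0}) = V * (1 - FF (slc (uset A) ()) t) := by
  have mi : Measurable fun x : Euc (n + 1) => x 0 := by fun_prop
  have h := measureReal_inter_add_sdiff (μ := volume) (s := A)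
    (mi (measurableSet_Iio (a := t))) (by rw [hAV]; exact ENNReal.ofReal_ne_top)
  have e1 : A \ ((fun x : Euc (n + 1) => x 0) ⁻¹' Set.Iio t) = A ∩ {x | t ≤ x 0} := by
    ext x; simp
  have e2 : A ∩ ((fun x : Euc (n + 1) => x 0) ⁻¹' Set.Iio t) = A ∩ {x | x 0 < t} := rfl
  have e3 : volume.real A = V := by rw [measureReal_def, hAV, ENNReal.toReal_ofReal hV.le]
  rw [e1, e2, slab_lt hA hV hAV, e3] at h
  linarith

lemma strip_lim {n : ℕ} {A : Set (Euc (n + 1))} (hA : MeasurableSet A) {V : ℝ} (hV : 0 < V)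
    (hAV : volume A = ENNReal.ofReal V) {s : ℝ} (hs : HasDerivAt (FF (slc (uset A) ())) 0 s) :
    Tendsto (fun ε => (volume (A ∩ {x | s < x 0 ∧ x 0 < s + ε})).toReal / ε) (𝓝[>] 0) (𝓝 0) := by
  have mi : Measurable fun x : Euc (n + 1) => x 0 := by fun_prop
  have h := hs.tendsto_slope_zero_right.const_mul V
  rw [mul_zero] at h
  refine h.congr' ?_
  filter_upwards [self_mem_nhdsWithin] with ε hε
  have hε' : (0 : ℝ) < ε := hε
  have h2 := measureReal_inter_add_sdiff (μ := volume) (s := A ∩ {x : Euc (n + 1) | x 0 < s + ε})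
    (mi (measurableSet_Iic (a := s)))
    (measure_ne_top_of_subset Set.inter_subset_left (by rw [hAV]; exact ENNReal.ofReal_ne_top))
  have e1 : (A ∩ {x : Euc (n + 1) | x 0 < s + ε}) \ ((fun x : Euc (n + 1) => x 0) ⁻¹' Set.Iic s)
      = A ∩ {x | s < x 0 ∧ x 0 < s + ε} := by
    ext x; simp; tauto
  have e2 : (A ∩ {x : Euc (n + 1) | x 0 < s + ε}) ∩ ((fun x : Euc (n + 1) => x 0) ⁻¹' Set.Iic s)
      = A ∩ {x | x 0 ≤ s} := by
    ext x; simp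
    intro h1 _
    linarith
  rw [e1, e2, slab_real hA hV hAV, slab_lt hA hV hAV] at h2
  change _ = volume.real _ / ε
  rw [eq_sub_of_add_eq' h2, smul_eq_mul]
  field_simp

lemma iso_lt {N : ℕ} (hN : 1 ≤ N) {B : Set (Euc N)} (hB : MeasurableSet B) {R : ℝ} (hR : 0 < R)
    (h0 : 0 < volume.real B) (h1 : volume.real B < R ^ N * beta N) (hu : MemBV N (chi B)) :
    N * R⁻¹ * volume.real B < tv N (chi B) := by
  have hne : volume B ≠ 0 ∧ volume B ≠ ⊤ := ENNReal.toReal_ne_zero.1 h0.ne'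
  refine lt_of_lt_of_le ?_ (iso hB hne.1 hne.2 hu)
  have hb := beta_pos N
  change _ < N * (beta N / volume.real B) ^ (N : ℝ)⁻¹ * volume.real B
  have hN' : (0 : ℝ) < N := by exact_mod_cast hN
  gcongr
  have e : ((R⁻¹) ^ N) ^ (N : ℝ)⁻¹ = R⁻¹ :=
    Real.pow_rpow_inv_natCast (inv_nonneg.2 hR.le) (by omega)
  conv_lhs => rw [← e]
  refine Real.rpow_lt_rpow (by positivity) ?_ (by positivity)
  rw [lt_div_iff₀ h0, inv_pow]
  calc (R ^ N)⁻¹ * volume.real B < (R ^ N)⁻¹ * (R ^ N * beta N) := by gcongr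
    _ = beta N := by field_simp

lemma gap {n : ℕ} {A : Set (Euc (n + 1))} (hA : MeasurableSet A) {R : ℝ}
    (hR : 0 < R) (hV : volume A = ENNReal.ofReal (R ^ (n + 1) * beta (n + 1)))
    (hu : MemBV (n + 1) (chi A))
    (ht : tv (n + 1) (chi A) ≤ (n + 1) * R⁻¹ * (R ^ (n + 1) * beta (n + 1))) {s : ℝ}
    (hs : HasDerivAt (FF (slc (uset A) ())) 0 s) :
    FF (slc (uset A) ()) s ∉ Set.Ioo (0 : ℝ) 1 := by
  intro hF
  have Vp : 0 < R ^ (n + 1) * beta (n + 1) := mul_pos (by positivity) (beta_pos _)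
  have mi : Measurable fun x : Euc (n + 1) => x 0 := by fun_prop
  obtain ⟨k1, k2, k3⟩ := cut hA (by rw [hV]; exact ENNReal.ofReal_ne_top) hu 0 s
    (strip_lim hA Vp hV hs)
  have v1 := slab_real hA Vp hV s
  have v2 := slab_real' hA Vp hV s
  have a1 := iso_lt (by omega) (hA.inter (measurableSet_le mi measurable_const)) hR
    (by rw [v1]; exact mul_pos Vp hF.1)
    (by rw [v1]; exact mul_lt_of_lt_one_right Vp hF.2) k1
  have a2 := iso_lt (by omega) (hA.inter (measurableSet_lt measurable_const mi)) hR
    (by rw [v2]; exact mul_pos Vp (by linarith [hF.2]))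
    (by rw [v2]; exact mul_lt_of_lt_one_right Vp (by linarith [hF.1])) k2
  rw [v1] at a1
  rw [v2] at a2
  push_cast at a1 a2
  linarith

lemma dir0 {n : ℕ} (hn : 1 ≤ n) {A : Set (Euc (n + 1))} (hA : MeasurableSet A) {R : ℝ}
    (hR : 0 < R) (hV : volume A = ENNReal.ofReal (R ^ (n + 1) * beta (n + 1)))
    (hu : MemBV (n + 1) (chi A))
    (ht : tv (n + 1) (chi A) ≤ (n + 1) * R⁻¹ * (R ^ (n + 1) * beta (n + 1))) :
    ∃ p : ℝ, (∀ᵐ x, x ∈ A → |x 0 - p| ≤ R) ∧ ∫ x in A, (x 0 - p) = 0 := by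
  have Vp : 0 < R ^ (n + 1) * beta (n + 1) := mul_pos (by positivity) (beta_pos _)
  have mi : Measurable fun x : Euc (n + 1) => x 0 := by fun_prop
  have e : ∫⁻ s, slc (uset A) () s = ENNReal.ofReal (R ^ (n + 1) * beta (n + 1)) := by
    rw [slc_total (uset_meas hA), uset_vol hA, hV]
  have mM : Measurable (slc (uset A) ()) :=
    (slc_meas (uset_meas hA)).comp (measurable_prodMk_left (x := ()))
  have e1 : ∫⁻ s, slc (uset A) () s ≠ ⊤ := by rw [e]; exact ENNReal.ofReal_ne_top
  have e0 : ∫⁻ s, slc (uset A) () s ≠ 0 := by rw [e]; simpa using Vp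
  have hae : ∀ᵐ t, FF (slc (uset A) ()) t ∈ Set.Ioo (0 : ℝ) 1 → ad n (slc (uset A) ()) t = R⁻¹ := by
    filter_upwards [rig1 hn hA hR hV hu ht, FF_deriv mM e1] with t h1 h2 h3
    refine h1 fun h4 => ?_
    rw [h4] at h2
    simp only [ENNReal.toReal_zero, zero_div] at h2
    exact gap hA hR hV hu ht h2 h3
  obtain ⟨p, p1, p2, p3⟩ := prof hR mM e1 e0 hae
  have fA : volume A ≠ ⊤ := by rw [hV]; exact ENNReal.ofReal_ne_top
  have fB : ∀ B, volume (A ∩ B) ≠ ⊤ := fun B => measure_ne_top_of_subset Set.inter_subset_left fA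
  refine ⟨p, ?_, ?_⟩
  · have z1 : volume (A ∩ {x | p + R < x 0}) = 0 := by
      rw [← measureReal_eq_zero_iff (fB _), slab_real' hA Vp hV, p2]; simp
    have z2 : volume (A ∩ {x | x 0 < p - R}) = 0 := by
      rw [← measureReal_eq_zero_iff (fB _), slab_lt hA Vp hV, p3]; simp
    filter_upwards [measure_eq_zero_iff_ae_notMem.1 z1, measure_eq_zero_iff_ae_notMem.1 z2]
      with x h1 h2 hx
    have h3 : x 0 ≤ p + R := by by_contra h; exact h1 ⟨hx, not_le.1 h⟩
    have h4 : p - R ≤ x 0 := by by_contra h; exact h2 ⟨hx, not_le.1 h⟩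
    rw [abs_le]; constructor <;> linarith
  · have : IsFiniteMeasure (volume.restrict A) := ⟨by simpa using fA.lt_top⟩
    have mp : Measurable fun x : Euc (n + 1) => x 0 - p := mi.sub_const p
    have mq : Measurable fun x : Euc (n + 1) => -(x 0 - p) := mp.neg
    have key : (volume.restrict A).map (fun x : Euc (n + 1) => x 0 - p) =
        (volume.restrict A).map (fun x : Euc (n + 1) => -(x 0 - p)) := by
      refine Measure.ext_of_Iic _ _ fun s => ?_
      rw [Measure.map_apply mp measurableSet_Iic, Measure.map_apply mq measurableSet_Iic,
        Measure.restrict_apply (mp measurableSet_Iic), Measure.restrict_apply (mq measurableSet_Iic)]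
      have s1 : ((fun x : Euc (n + 1) => x 0 - p) ⁻¹' Set.Iic s) ∩ A = A ∩ {x | x 0 ≤ p + s} := by
        ext x; simp [and_comm, add_comm]
      have s2 : ((fun x : Euc (n + 1) => -(x 0 - p)) ⁻¹' Set.Iic s) ∩ A = A ∩ {x | p - s ≤ x 0} := by
        ext x
        simp only [Set.mem_inter_iff, Set.mem_preimage, Set.mem_Iic, Set.mem_ofPred_eq]
        constructor
        · rintro ⟨h1, h2⟩; exact ⟨h2, by linarith⟩
        · rintro ⟨h1, h2⟩; exact ⟨by linarith, h1⟩
      rw [s1, s2, ← ENNReal.ofReal_toReal (fB _), ← ENNReal.ofReal_toReal (fB {x | p - s ≤ x 0})]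
      have r1 := slab_real hA Vp hV (p + s)
      have r2 := slab_ge hA Vp hV (p - s)
      have := p1 s
      rw [measureReal_def] at r1 r2
      rw [r1, r2, ← this]
      congr 2
      ring
    have i1 := integral_map (μ := volume.restrict A) mp.aemeasurable
      (f := fun t : ℝ => t) measurable_id.aestronglyMeasurable
    have i2 := integral_map (μ := volume.restrict A) mq.aemeasurable
      (f := fun t : ℝ => t) measurable_id.aestronglyMeasurable
    rw [← key, i1, integral_neg] at i2
    linarith

lemma dirE {n : ℕ} (hn : 1 ≤ n) {A : Set (Euc (n + 1))} (hA : MeasurableSet A) {R : ℝ}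
    (hR : 0 < R) (hV : volume A = ENNReal.ofReal (R ^ (n + 1) * beta (n + 1)))
    (hu : MemBV (n + 1) (chi A))
    (ht : tv (n + 1) (chi A) ≤ (n + 1) * R⁻¹ * (R ^ (n + 1) * beta (n + 1)))
    {e : Euc (n + 1)} (he : ‖e‖ = 1) :
    ∃ p : ℝ, (∀ᵐ x, x ∈ A → |inner ℝ e x - p| ≤ R) ∧ ∫ x in A, (inner ℝ e x - p) = 0 := by
  set e0 : Euc (n + 1) := EuclideanSpace.single 0 1 with he0
  have hn0 : ‖e0‖ = ‖e‖ := by simp [he0, he]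
  set L : Euc (n + 1) ≃ₗᵢ[ℝ] Euc (n + 1) := Submodule.reflection (ℝ ∙ (e0 - e))ᗮ with hL
  have hLe : L e0 = e := Submodule.reflection_sub hn0
  have hmp : MeasurePreserving L := L.measurePreserving
  have hin : ∀ x : Euc (n + 1), x 0 = inner ℝ e (L x) := fun x => by
    rw [← hLe, L.inner_map_map, he0, EuclideanSpace.inner_single_left]; simp
  have hA' : MeasurableSet (L ⁻¹' A) := hmp.measurable hA
  have ec : chi (L ⁻¹' A) = fun x => chi A (L x) := rfl
  obtain ⟨p, p1, p2⟩ := dir0 hn hA' hR (by rw [hmp.measure_preimage hA.nullMeasurableSet, hV])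
    (by rw [ec]; exact memBV_isom hu L) (by rw [ec, tv_isom hu L]; exact ht)
  refine ⟨p, ?_, ?_⟩
  · have := L.symm.measurePreserving.quasiMeasurePreserving.ae p1
    filter_upwards [this] with x hx hxA
    have h2 := hx (by simpa using hxA)
    rw [hin] at h2
    simpa using h2
  · rw [← hmp.setIntegral_preimage_emb L.toHomeomorph.measurableEmbedding]
    simp only [hin] at p2
    exact p2

lemma rigidity {N : ℕ} (hN : 2 ≤ N) {A : Set (Euc N)} (hA : MeasurableSet A) {R : ℝ}
    (hR : 0 < R) (hV : volume A = ENNReal.ofReal (R ^ N * beta N))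
    (hu : MemBV N (chi A))
    (ht : tv N (chi A) ≤ N / R * (R ^ N * beta N)) :
    ∃ x₀ : Euc N, A =ᵐ[volume] Metric.ball x₀ R := by
  obtain ⟨n, rfl⟩ : ∃ n, N = n + 1 := ⟨N - 1, by omega⟩
  have hn : 1 ≤ n := by omega
  have ht' : tv (n + 1) (chi A) ≤ (n + 1) * R⁻¹ * (R ^ (n + 1) * beta (n + 1)) := by
    rw [div_eq_mul_inv] at ht; exact_mod_cast ht
  have D := fun {e : Euc (n + 1)} (he : ‖e‖ = 1) => dirE hn hA hR hV hu ht' he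
  have Vp : 0 < R ^ (n + 1) * beta (n + 1) := mul_pos (by positivity) (beta_pos _)
  have fA : volume A ≠ ⊤ := by rw [hV]; exact ENNReal.ofReal_ne_top
  have e3 : volume.real A = R ^ (n + 1) * beta (n + 1) := by
    rw [measureReal_def, hV, ENNReal.toReal_ofReal Vp.le]
  have : IsFiniteMeasure (volume.restrict A) := ⟨by simpa using fA.lt_top⟩
  choose p hp1 hp2 using fun i : Fin (n + 1) =>
    D (e := EuclideanSpace.single i (1 : ℝ)) (by simp)
  have hIntg : IntegrableOn (fun x : Euc (n + 1) => x) A := by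
    refine Integrable.of_bound (C := ∑ i, (|p i| + R)) measurable_id.aestronglyMeasurable ?_
    rw [ae_restrict_iff' hA]
    filter_upwards [ae_all_iff.2 hp1] with x hx hxA
    have h1 : ‖x‖ ≤ ∑ i, |x i| := by
      conv_lhs => rw [← (EuclideanSpace.basisFun (Fin (n + 1)) ℝ).sum_repr x]
      refine (norm_sum_le _ _).trans (le_of_eq ?_)
      simp [norm_smul]
    refine h1.trans (Finset.sum_le_sum fun i _ => ?_)
    have h2 := hx i hxA
    rw [EuclideanSpace.inner_single_left] at h2
    simp only [map_one, one_mul] at h2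
    have := abs_sub_abs_le_abs_sub (x i) (p i)
    linarith
  set xb : Euc (n + 1) := (R ^ (n + 1) * beta (n + 1))⁻¹ • ∫ x in A, x with hxb
  have hpe : ∀ e : Euc (n + 1), ‖e‖ = 1 → ∀ᵐ x, x ∈ A → |inner ℝ e x - inner ℝ e xb| ≤ R := by
    intro e he
    obtain ⟨q, q1, q2⟩ := D he
    have : inner ℝ e xb = q := by
      rw [integral_sub (hIntg.const_inner e) (integrable_const q), integral_inner hIntg,
        integral_const] at q2
      simp only [measureReal_restrict_apply_univ, e3, smul_eq_mul] at q2
      rw [hxb, inner_smul_right, sub_eq_zero.1 q2]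
      exact inv_mul_cancel_left₀ Vp.ne' q
    rw [this]; exact q1
  have hy : ∀ y : Euc (n + 1), ∀ᵐ x, x ∈ A → inner ℝ y (x - xb) ≤ R * ‖y‖ := by
    intro y
    rcases eq_or_ne y 0 with rfl | hy
    · exact ae_of_all _ fun x _ => by simp
    have hyn : 0 < ‖y‖ := norm_pos_iff.2 hy
    filter_upwards [hpe (‖y‖⁻¹ • y) (by rw [norm_smul, norm_inv, norm_norm]; field_simp)]
      with x hx hxA
    have h2 := (abs_le.1 (hx hxA)).2
    rw [← inner_sub_right, real_inner_smul_left, inv_mul_eq_div, div_le_iff₀ hyn] at h2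
    exact h2
  have hall : ∀ᵐ x, x ∈ A → x ∈ Metric.closedBall xb R := by
    filter_upwards [ae_all_iff.2 fun k => hy (TopologicalSpace.denseSeq _ k)] with x hx hxA
    have hcl : IsClosed {y : Euc (n + 1) | inner ℝ y (x - xb) ≤ R * ‖y‖} :=
      isClosed_le (by fun_prop) (by fun_prop)
    have hd : ∀ y : Euc (n + 1), inner ℝ y (x - xb) ≤ R * ‖y‖ := by
      intro y
      have : closure (Set.range (TopologicalSpace.denseSeq (Euc (n + 1)))) ⊆
          {y : Euc (n + 1) | inner ℝ y (x - xb) ≤ R * ‖y‖} := by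
        refine hcl.closure_subset_iff.2 ?_
        rintro _ ⟨k, rfl⟩
        exact hx k hxA
      exact this (TopologicalSpace.denseRange_denseSeq _ y)
    have h3 := hd (x - xb)
    rw [real_inner_self_eq_norm_sq] at h3
    rw [mem_closedBall_iff_norm]
    by_contra h4
    push Not at h4
    nlinarith
  refine ⟨xb, ?_⟩
  have hb : Metric.closedBall xb R =ᵐ[volume] Metric.ball xb R := by
    refine (ae_eq_of_subset_of_measure_ge Metric.ball_subset_closedBall ?_
      measurableSet_ball.nullMeasurableSet measure_closedBall_lt_top.ne).symm
    rw [Measure.addHaar_closedBall_eq_addHaar_ball]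
  refine EventuallyEq.trans ?_ hb
  refine ae_eq_of_ae_subset_of_measure_ge hall ?_ hA.nullMeasurableSet
    measure_closedBall_lt_top.ne
  rw [Measure.addHaar_closedBall_eq_addHaar_ball, ball_vol _ hR, hV]

def QQ (N : ℕ) (p : ℝ) (u : Euc N → ℝ) : ℝ := (∫⁻ x, ‖u x‖ₑ ^ p).toReal

lemma QQ_nonneg {N : ℕ} {p : ℝ} {u : Euc N → ℝ} : 0 ≤ QQ N p u := ENNReal.toReal_nonneg

lemma nrmq_rpow {N : ℕ} {q : ℝ} (hq : 0 < q) (u : Euc N → ℝ) : nrmq N q u ^ q = QQ N q u := by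
  unfold nrmq QQ
  rw [eLpNorm_eq_lintegral_rpow_enorm_toReal (by simpa using hq) (by simp), ENNReal.toReal_ofReal hq.le,
    ENNReal.toReal_rpow, ← ENNReal.rpow_mul]
  congr 1
  rw [one_div, inv_mul_cancel₀ hq.ne', ENNReal.rpow_one]

lemma nrm1_QQ {N : ℕ} (u : Euc N → ℝ) : nrm1 N u = QQ N 1 u := by
  unfold nrm1 QQ
  rw [eLpNorm_one_eq_lintegral_enorm]; simp

lemma lint_scale {N : ℕ} {ρ : ℝ} (hρ : 0 < ρ) (f : Euc N → ENNReal) :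
    ∫⁻ x, f (ρ⁻¹ • x) = ENNReal.ofReal (ρ ^ N) * ∫⁻ x, f x := by
  have h := Measure.map_addHaar_smul (volume : Measure (Euc N)) (inv_ne_zero hρ.ne')
  have e : ∫⁻ x, f x ∂(Measure.map (ρ⁻¹ • ·) (volume : Measure (Euc N))) = ∫⁻ x, f (ρ⁻¹ • x) :=
    (measurableEmbedding_const_smul₀ (inv_ne_zero hρ.ne')).lintegral_map f
  rw [← e, h, lintegral_smul_measure]
  simp only [finrank_euclideanSpace, Fintype.card_fin, smul_eq_mul, inv_pow, inv_inv]
  rw [abs_of_pos (by positivity)]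

lemma QQ_scale {N : ℕ} {q ρ μ : ℝ} (hq : 0 < q) (hρ : 0 < ρ) (hμ : 0 < μ) (u : Euc N → ℝ) :
    QQ N q (fun x => μ * u (ρ⁻¹ • x)) = μ ^ q * ρ ^ N * QQ N q u := by
  unfold QQ
  have e : ∀ x : Euc N, ‖μ * u (ρ⁻¹ • x)‖ₑ ^ q = ENNReal.ofReal (μ ^ q) * (‖u (ρ⁻¹ • x)‖ₑ ^ q) := by
    intro x
    rw [enorm_mul, ENNReal.mul_rpow_of_nonneg _ _ hq.le, Real.enorm_of_nonneg hμ.le,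
      ENNReal.ofReal_rpow_of_pos hμ]
  simp_rw [e]
  rw [lintegral_const_mul' _ _ (by simp), lint_scale hρ (fun x => ‖u x‖ₑ ^ q), ENNReal.toReal_mul,
    ENNReal.toReal_mul, ENNReal.toReal_ofReal (by positivity), ENNReal.toReal_ofReal (by positivity)]
  ring

lemma nrm1_eq_int {N : ℕ} {u : Euc N → ℝ} (hu : Integrable u) : nrm1 N u = ∫ x, |u x| := by
  rw [nrm1_QQ]; unfold QQ
  simp only [ENNReal.rpow_one]
  rw [← integral_norm_eq_lintegral_enorm hu.1]; rfl

lemma nrm1_zero {N : ℕ} {u : Euc N → ℝ} (hu : Integrable u) (h : nrm1 N u = 0) : u =ᵐ[volume] 0 := by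
  unfold nrm1 at h
  rw [ENNReal.toReal_eq_zero_iff] at h
  rcases h with h | h
  · exact (eLpNorm_eq_zero_iff hu.1 one_ne_zero).1 h
  · exact absurd h (memLp_one_iff_integrable.2 hu).2.ne

lemma nrm1_nonneg {N : ℕ} {u : Euc N → ℝ} : 0 ≤ nrm1 N u := ENNReal.toReal_nonneg

lemma tv_of_zero {N : ℕ} {u : Euc N → ℝ} (hu : MemBV N u) (h : u =ᵐ[volume] 0) : tv N u = 0 := by
  have h2 := tv_const_mul hu (c := 2) two_ne_zero
  have : (fun x => 2 * u x) =ᵐ[volume] u := by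
    filter_upwards [h] with x hx; simp [hx]
  rw [tv_congr this] at h2
  norm_num at h2
  linarith

/-- The scaled comparison. -/
def Cmp (N : ℕ) (q : ℝ) (u₀ : Euc N → ℝ) : Prop := ∀ v : Euc N → ℝ, MemBV N v → 0 < nrm1 N v → 0 < tv N v →
  QQ N q v * ((nrm1 N u₀ / nrm1 N v) ^ (q - (q-1)*N) * (tv N u₀ / tv N v) ^ ((q-1)*(N:ℝ))) ≤ QQ N q u₀

lemma main_cmp {N : ℕ} (hN : 2 ≤ N) {q : ℝ} (hq1 : 1 < q)
    {α a b : ℝ} (hα : 0 < α) (ha : 0 < a)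
    (hb : 0 < b) {u₀ : Euc N → ℝ} (hu₀ : MemBV N u₀)
    (hcon : tv N u₀ ^ a + nrm1 N u₀ ^ b = 1)
    (hmax : nrm1 N u₀ + α * nrmq N q u₀ ^ q =
      sSup { r | ∃ u : Euc N → ℝ, MemBV N u ∧ tv N u ^ a + nrm1 N u ^ b = 1 ∧
        r = nrm1 N u + α * nrmq N q u ^ q }) :
    0 < nrm1 N u₀ ∧ 0 < tv N u₀ ∧ Cmp N q u₀ := by
  have hq : 0 < q := by linarith
  have z : ¬ (u₀ =ᵐ[volume] 0) := by
    intro h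
    have h1 := tv_of_zero hu₀ h
    have h2 : nrm1 N u₀ = 0 := by
      unfold nrm1; rw [eLpNorm_congr_ae h]; simp
    rw [h1, h2, zero_rpow ha.ne', zero_rpow hb.ne'] at hcon
    norm_num at hcon
  have hs : 0 < nrm1 N u₀ := lt_of_le_of_ne nrm1_nonneg fun h => z (nrm1_zero hu₀.1 h.symm)
  have ht : 0 < tv N u₀ := lt_of_le_of_ne (tv_nonneg hu₀) fun h => z (tv_zero (by omega) hu₀ h.symm)
  refine ⟨hs, ht, ?_⟩
  intro v hv sv tvp
  rw [nrmq_rpow hq] at hmax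
  have hb : BddAbove { r | ∃ u : Euc N → ℝ, MemBV N u ∧ tv N u ^ a + nrm1 N u ^ b = 1 ∧
        r = nrm1 N u + α * nrmq N q u ^ q } := by
    by_contra h
    rw [Real.sSup_of_not_bddAbove h] at hmax
    have := QQ_nonneg (N := N) (p := q) (u := u₀)
    have : 0 ≤ α * QQ N q u₀ := by positivity
    linarith
  set s0 := nrm1 N u₀
  set t0 := tv N u₀
  set s := nrm1 N v with hs'
  set t := tv N v with ht'
  obtain ⟨ρ, hρ⟩ : ∃ ρ, ρ = (s0 / s) * (t / t0) := ⟨_, rfl⟩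
  have ρp : 0 < ρ := by rw [hρ]; positivity
  obtain ⟨μ, hμ⟩ : ∃ μ, μ = s0 / (s * ρ ^ N) := ⟨_, rfl⟩
  have μp : 0 < μ := by rw [hμ]; positivity
  have b1 := memBV_scale hv ρp
  have b2 := memBV_const_mul b1 μ
  have t2 : tv N (fun x => μ * v (ρ⁻¹ • x)) = t0 := by
    rw [tv_const_mul b1 μp.ne', tv_scale hv ρp, abs_of_pos μp, ← ht']
    have : t / ρ = t0 * s / s0 := by rw [hρ]; field_simp
    calc μ * (ρ ^ N * ρ⁻¹ * t) = μ * ρ ^ N * (t / ρ) := by ring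
      _ = t0 := by rw [this, hμ]; field_simp
  have s2 : nrm1 N (fun x => μ * v (ρ⁻¹ • x)) = s0 := by
    rw [nrm1_QQ, QQ_scale one_pos ρp μp, ← nrm1_QQ, ← hs', hμ, rpow_one]
    field_simp
  have key := le_csSup hb ⟨_, b2, by rw [t2, s2]; exact hcon, rfl⟩
  rw [← hmax, s2, nrmq_rpow hq, QQ_scale hq ρp μp] at key
  have key2 : μ ^ q * ρ ^ N * QQ N q v ≤ QQ N q u₀ := by
    have : α * (μ ^ q * ρ ^ N * QQ N q v) ≤ α * QQ N q u₀ := by linarith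
    exact le_of_mul_le_mul_left this hα
  refine le_trans (le_of_eq ?_) key2
  rw [mul_comm]
  congr 1
  have e1 : μ = (s0 / s) * ρ ^ (-(N:ℝ)) := by
    rw [hμ, rpow_neg ρp.le, rpow_natCast]; field_simp
  have e2 : t0 / t = (s0 / s) * ρ⁻¹ := by rw [hρ]; field_simp
  have sp : 0 < s0 / s := by positivity
  rw [e1, e2, mul_rpow sp.le (by positivity), mul_rpow sp.le (by positivity), ← rpow_mul ρp.le, ← rpow_natCast,
    ← mul_assoc, ← rpow_add sp, mul_assoc, ← rpow_add ρp, inv_rpow ρp.le, ← rpow_neg ρp.le]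
  congr 2 <;> ring

lemma HH_split (s : ℝ) : |s - HH s| + |HH s| = |s| ∧ (HH s = 0 → s = 0) ∧ (s - HH s = 0 → s = 0) ∧
    (∀ k, |HH s| = k * |s| → HH s = k * s) := by
  have h0 : 0 ≤ √(1 + s ^ 2) := Real.sqrt_nonneg _
  have hs : √(1 + s ^ 2) ^ 2 = 1 + s ^ 2 := Real.sq_sqrt (by positivity)
  unfold HH
  generalize √(1 + s ^ 2) = r at h0 hs
  have hr1 : 1 ≤ r := by nlinarith [sq_nonneg s]
  refine ⟨?_, ?_, ?_, ?_⟩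
  · rcases le_total 0 s with h | h
    · have : r ≤ 1 + s := by nlinarith
      rw [abs_of_nonneg h, abs_of_nonneg (by linarith), abs_of_nonneg (by linarith)]; ring
    · have : r ≤ 1 - s := by nlinarith
      rw [abs_of_nonpos h, abs_of_nonpos (by linarith), abs_of_nonpos (by linarith)]; ring
  · intro h
    have : r = 1 - s := by linarith
    subst this; nlinarith
  · intro h
    have : r = 1 + s := by linarith
    subst this; nlinarith
  · intro k hk
    rcases le_total 0 s with h | h
    · rw [abs_of_nonneg h, abs_of_nonneg (by linarith)] at hk; exact hk
    · have : r ≤ 1 - s := by nlinarith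
      rw [abs_of_nonpos h, abs_of_nonpos (by linarith)] at hk; linarith

lemma HH_lin {s k : ℝ} (hk0 : 0 < k) (hk1 : k < 1) (h : HH s = k * s) :
    s = 0 ∨ s = 2 * (2 * k - 1) / (1 - (2 * k - 1) ^ 2) := by
  have hs : √(1 + s ^ 2) ^ 2 = 1 + s ^ 2 := Real.sq_sqrt (by positivity)
  unfold HH at h
  have e : √(1 + s ^ 2) = 1 + (2 * k - 1) * s := by linarith
  rw [e] at hs
  have p : 0 < 1 - (2 * k - 1) ^ 2 := by nlinarith
  rcases eq_or_ne s 0 with h0 | h0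
  · exact Or.inl h0
  · right
    rw [eq_div_iff p.ne']
    apply mul_left_cancel₀ h0
    linarith

lemma QQ_eq_int {N : ℕ} {q : ℝ} (hq : 0 < q) {u : Euc N → ℝ} (hu : AEStronglyMeasurable u) :
    QQ N q u = ∫ x, |u x| ^ q := by
  have m : AEStronglyMeasurable (fun x => |u x| ^ q) volume :=
    (hu.norm.aemeasurable.pow_const q).aestronglyMeasurable
  rw [integral_eq_lintegral_of_nonneg_ae (Eventually.of_forall fun x => by positivity) m]
  unfold QQ
  congr 1
  refine lintegral_congr fun x => ?_
  rw [← ENNReal.ofReal_rpow_of_nonneg (abs_nonneg _) hq.le, Real.enorm_eq_ofReal_abs]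

lemma QQ_integrable {N : ℕ} {q : ℝ} (hq : 0 < q) {u : Euc N → ℝ} (hu : AEStronglyMeasurable u)
    (h : 0 < QQ N q u) : Integrable fun x => |u x| ^ q := by
  by_contra hc
  rw [QQ_eq_int hq hu, integral_undef hc] at h
  exact lt_irrefl _ h

lemma QQ_pos {N : ℕ} {q : ℝ} (hq : 0 < q) {u : Euc N → ℝ} (hu : AEStronglyMeasurable u)
    (hi : Integrable fun x => |u x| ^ q) (h : ¬ (u =ᵐ[volume] 0)) : 0 < QQ N q u := by
  rw [QQ_eq_int hq hu]
  refine lt_of_le_of_ne (integral_nonneg fun x => by positivity) fun e => h ?_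
  have := (integral_eq_zero_iff_of_nonneg (fun x => by positivity) hi).1 e.symm
  filter_upwards [this] with x hx
  simp only [Pi.zero_apply] at hx ⊢
  exact abs_eq_zero.1 ((rpow_eq_zero (abs_nonneg _) hq.ne').1 hx)

lemma QQ_chi {N : ℕ} {q : ℝ} (hq : 0 < q) {A : Set (Euc N)} (hA : MeasurableSet A) :
    QQ N q (chi A) = (volume A).toReal := by
  unfold QQ
  congr 1
  have : ∀ x, ‖chi A x‖ₑ ^ q = A.indicator (fun _ => (1 : ENNReal)) x := by
    intro x
    by_cases hx : x ∈ A <;> simp [chi, hx, hq]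
  simp_rw [this]
  rw [lintegral_indicator hA]; simp

lemma theta_le {N : ℕ} (hN : 2 ≤ N) {q : ℝ}
    (hq2 : q ≤ (N : ℝ) / ((N : ℝ) - 1)) : (q - 1) * N ≤ q := by
  have h : (2 : ℝ) ≤ N := by exact_mod_cast hN
  rw [le_div_iff₀ (by linarith)] at hq2
  linarith

lemma ball_tv_pos {N : ℕ} (hN : 2 ≤ N) {R : ℝ} (hR : 0 < R) :
    0 < nrm1 N (chi (Metric.ball (0 : Euc N) R)) ∧ 0 < tv N (chi (Metric.ball (0 : Euc N) R)) := by
  have h1 : 0 < nrm1 N (chi (Metric.ball (0 : Euc N) R)) := by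
    rw [nrm1_QQ, QQ_chi one_pos Metric.isOpen_ball.measurableSet, ball_vol _ hR]
    have := beta_pos N
    rw [ENNReal.toReal_ofReal (by positivity)]; positivity
  refine ⟨h1, lt_of_le_of_ne (tv_nonneg (ball_BV hR)) fun h => ?_⟩
  have z := tv_zero (by omega) (ball_BV hR) h.symm
  have h2 : nrm1 N (chi (Metric.ball (0 : Euc N) R)) = 0 := by
    unfold nrm1; rw [eLpNorm_congr_ae z]; simp
  linarith

lemma Q0_pos {N : ℕ} (hN : 2 ≤ N) {q : ℝ} (hq1 : 1 < q) {u₀ : Euc N → ℝ}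
    (hs : 0 < nrm1 N u₀) (ht : 0 < tv N u₀) (hC : Cmp N q u₀) : 0 < QQ N q u₀ := by
  obtain ⟨h1, h2⟩ := ball_tv_pos hN (R := 1) one_pos
  refine lt_of_lt_of_le ?_ (hC _ (ball_BV one_pos) h1 h2)
  have : 0 < QQ N q (chi (Metric.ball (0 : Euc N) 1)) := by
    rw [QQ_chi (by linarith) Metric.isOpen_ball.measurableSet]
    exact beta_pos N
  positivity

lemma Cmp_root {N : ℕ} {q : ℝ} (hq1 : 1 < q) (hth : (q - 1) * N ≤ q) {u₀ : Euc N → ℝ}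
    (hs : 0 < nrm1 N u₀) (ht : 0 < tv N u₀) (hC : Cmp N q u₀)
    {v : Euc N → ℝ} (hv : MemBV N v) (sv : 0 < nrm1 N v) (tp : 0 < tv N v) :
    QQ N q v ^ q⁻¹ ≤ QQ N q u₀ ^ q⁻¹ * ((1 - (q - 1) * N / q) * (nrm1 N v / nrm1 N u₀) +
      ((q - 1) * N / q) * (tv N v / tv N u₀)) := by
  have hq : 0 < q := by linarith
  have h := hC v hv sv tp
  have n1 := QQ_nonneg (N := N) (p := q) (u := v)
  have n0 := QQ_nonneg (N := N) (p := q) (u := u₀)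
  set s0 := nrm1 N u₀
  set t0 := tv N u₀
  set s := nrm1 N v
  set t := tv N v
  set Q := QQ N q v
  set Q0 := QQ N q u₀
  obtain ⟨θ, hθ⟩ : ∃ θ, θ = (q - 1) * N := ⟨_, rfl⟩
  rw [← hθ] at h hth ⊢
  have th0 : 0 ≤ θ := by rw [hθ]; have : 0 ≤ q - 1 := by linarith
                         positivity
  have xp : 0 < s / s0 := by positivity
  have yp : 0 < t / t0 := by positivity
  have e1 : s0 / s = (s / s0)⁻¹ := by rw [inv_div]
  have e2 : t0 / t = (t / t0)⁻¹ := by rw [inv_div]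
  rw [e1, e2, inv_rpow xp.le, inv_rpow yp.le, ← mul_inv, ← div_eq_mul_inv, div_le_iff₀ (by positivity)] at h
  have h2 := rpow_le_rpow n1 h (inv_nonneg.2 hq.le)
  rw [mul_rpow n0 (by positivity), mul_rpow (by positivity) (by positivity), ← rpow_mul xp.le, ← rpow_mul yp.le] at h2
  refine h2.trans (mul_le_mul_of_nonneg_left ?_ (by positivity))
  have g := Real.geom_mean_le_arith_mean2_weighted (w₁ := 1 - θ / q) (w₂ := θ / q)
    (by rw [sub_nonneg, div_le_one hq]; exact hth) (by positivity) xp.le yp.le (by ring)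
  refine le_trans (le_of_eq ?_) g
  congr 2
  field_simp

lemma pw_convex {q A B f g : ℝ} (hq1 : 1 < q) (hA : 0 < A) (hB : 0 < B) (hf : 0 ≤ f) (hg : 0 ≤ g) :
    ((f + g) / (A + B)) ^ q ≤ A / (A + B) * (f / A) ^ q + B / (A + B) * (g / B) ^ q ∧
    (((f + g) / (A + B)) ^ q = A / (A + B) * (f / A) ^ q + B / (A + B) * (g / B) ^ q →
      g = B / (A + B) * (f + g)) := by
  have sc := strictConvexOn_rpow hq1
  have hAB : A / (A + B) + B / (A + B) = 1 := by field_simp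
  have e : A / (A + B) * (f / A) + B / (A + B) * (g / B) = (f + g) / (A + B) := by field_simp
  have mf : f / A ∈ Set.Ici (0 : ℝ) := by simp only [Set.mem_Ici]; positivity
  have mg : g / B ∈ Set.Ici (0 : ℝ) := by simp only [Set.mem_Ici]; positivity
  constructor
  · have := sc.convexOn.2 mf mg (show 0 ≤ A / (A + B) by positivity) (show 0 ≤ B / (A + B) by positivity) hAB
    simp only [smul_eq_mul] at this
    rwa [e] at this
  · intro h
    by_contra hne
    have ne : f / A ≠ g / B := by
      intro h2
      apply hne
      field_simp at h2 ⊢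
      linarith
    have := sc.2 mf mg ne (show 0 < A / (A + B) by positivity) (show 0 < B / (A + B) by positivity) hAB
    simp only [smul_eq_mul] at this
    rw [e] at this
    linarith

lemma two_valued {N : ℕ} (hN : 2 ≤ N) {q : ℝ} (hq1 : 1 < q) (hth : (q - 1) * N ≤ q) {u₀ : Euc N → ℝ}
    (hu : MemBV N u₀) (hs : 0 < nrm1 N u₀) (ht : 0 < tv N u₀) (hC : Cmp N q u₀) :
    ∃ lam : ℝ, ∀ᵐ x, u₀ x = 0 ∨ u₀ x = lam := by
  have hq : 0 < q := by linarith
  have hQ0 := Q0_pos hN hq1 hs ht hC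
  have z : ¬ (u₀ =ᵐ[volume] 0) := fun h => by
    rw [tv_of_zero hu h] at ht; exact lt_irrefl _ ht
  obtain ⟨hv, hw, htv⟩ := split_HH hu
  have zv : ¬ ((fun x => u₀ x - HH (u₀ x)) =ᵐ[volume] 0) := fun h => z (by
    filter_upwards [h] with x hx using (HH_split (u₀ x)).2.2.1 hx)
  have zw : ¬ ((fun x => HH (u₀ x)) =ᵐ[volume] 0) := fun h => z (by
    filter_upwards [h] with x hx using (HH_split (u₀ x)).2.1 hx)
  have i0 := QQ_integrable hq hu.1.1 hQ0
  have dom : ∀ v : Euc N → ℝ, Integrable v → (∀ x, |v x| ≤ |u₀ x|) → Integrable fun x => |v x| ^ q := by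
    intro v hv hle
    have m : AEStronglyMeasurable (fun x => |v x| ^ q) volume :=
      (hv.1.norm.aemeasurable.pow_const q).aestronglyMeasurable
    refine i0.mono' m (Eventually.of_forall fun x => ?_)
    rw [Real.norm_of_nonneg (by positivity)]
    exact rpow_le_rpow (abs_nonneg _) (hle x) hq.le
  have i1 := dom _ hv.1 fun x => by
    have := (HH_split (u₀ x)).1; have := abs_nonneg (HH (u₀ x)); linarith
  have i2 := dom _ hw.1 fun x => by
    have := (HH_split (u₀ x)).1; have := abs_nonneg (u₀ x - HH (u₀ x)); linarith
  have Q1 := QQ_pos hq hv.1.1 i1 zv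
  have Q2 := QQ_pos hq hw.1.1 i2 zw
  have s1 : 0 < nrm1 N (fun x => u₀ x - HH (u₀ x)) := lt_of_le_of_ne nrm1_nonneg fun h => zv (nrm1_zero hv.1 h.symm)
  have s2 : 0 < nrm1 N (fun x => HH (u₀ x)) := lt_of_le_of_ne nrm1_nonneg fun h => zw (nrm1_zero hw.1 h.symm)
  have t1 : 0 < tv N (fun x => u₀ x - HH (u₀ x)) := lt_of_le_of_ne (tv_nonneg hv) fun h => zv (tv_zero (by omega) hv h.symm)
  have t2 : 0 < tv N (fun x => HH (u₀ x)) := lt_of_le_of_ne (tv_nonneg hw) fun h => zw (tv_zero (by omega) hw h.symm)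
  have ss : nrm1 N (fun x => u₀ x - HH (u₀ x)) + nrm1 N (fun x => HH (u₀ x)) = nrm1 N u₀ := by
    rw [nrm1_eq_int hv.1, nrm1_eq_int hw.1, nrm1_eq_int hu.1, ← integral_add hv.1.abs hw.1.abs]
    exact integral_congr_ae (Eventually.of_forall fun x => (HH_split (u₀ x)).1)
  have r1 := Cmp_root hq1 hth hs ht hC hv s1 t1
  have r2 := Cmp_root hq1 hth hs ht hC hw s2 t2
  obtain ⟨A, hA⟩ : ∃ A, A = QQ N q (fun x => u₀ x - HH (u₀ x)) ^ q⁻¹ := ⟨_, rfl⟩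
  obtain ⟨B, hB⟩ : ∃ B, B = QQ N q (fun x => HH (u₀ x)) ^ q⁻¹ := ⟨_, rfl⟩
  have Ap : 0 < A := by rw [hA]; positivity
  have Bp : 0 < B := by rw [hB]; positivity
  have Aq : A ^ q = QQ N q (fun x => u₀ x - HH (u₀ x)) := by rw [hA, ← rpow_mul Q1.le, inv_mul_cancel₀ hq.ne', rpow_one]
  have Bq : B ^ q = QQ N q (fun x => HH (u₀ x)) := by rw [hB, ← rpow_mul Q2.le, inv_mul_cancel₀ hq.ne', rpow_one]
  rw [← hA] at r1
  rw [← hB] at r2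
  have CC : A + B ≤ QQ N q u₀ ^ q⁻¹ := by
    refine (add_le_add r1 r2).trans ?_
    rw [← mul_add]
    refine mul_le_of_le_one_right (by positivity) ?_
    have a1 : nrm1 N (fun x => u₀ x - HH (u₀ x)) / nrm1 N u₀ + nrm1 N (fun x => HH (u₀ x)) / nrm1 N u₀ = 1 := by
      rw [← add_div, ss, div_self hs.ne']
    have a2 : tv N (fun x => u₀ x - HH (u₀ x)) / tv N u₀ + tv N (fun x => HH (u₀ x)) / tv N u₀ ≤ 1 := by
      rw [← add_div, div_le_one ht]; exact htv
    have th0 : 0 ≤ (q - 1) * N / q := by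
      have : 0 ≤ q - 1 := by linarith
      positivity
    have := mul_le_mul_of_nonneg_left a2 th0
    linear_combination this + (1 - (q - 1) * N / q) * a1
  have Cq : (A + B) ^ q ≤ QQ N q u₀ := by
    have := rpow_le_rpow (by positivity) CC hq.le
    rwa [← rpow_mul hQ0.le, inv_mul_cancel₀ hq.ne', rpow_one] at this
  have Cp : 0 < (A + B) ^ q := by positivity
  obtain ⟨F, hF⟩ : ∃ F : Euc N → ℝ, F = fun x => (A / (A + B) * (|u₀ x - HH (u₀ x)| / A) ^ q +
    B / (A + B) * (|HH (u₀ x)| / B) ^ q) - (|u₀ x| / (A + B)) ^ q := ⟨_, rfl⟩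
  have F0 : 0 ≤ F := by
    intro x
    rw [hF]
    have := (pw_convex hq1 Ap Bp (abs_nonneg (u₀ x - HH (u₀ x))) (abs_nonneg (HH (u₀ x)))).1
    rw [(HH_split (u₀ x)).1] at this
    simp only [Pi.zero_apply]; linarith
  have Fe : F = fun x => ((A / (A + B) / A ^ q) * |u₀ x - HH (u₀ x)| ^ q +
    (B / (A + B) / B ^ q) * |HH (u₀ x)| ^ q) - (1 / (A + B) ^ q) * |u₀ x| ^ q := by
    rw [hF]; funext x
    rw [div_rpow (abs_nonneg _) Ap.le, div_rpow (abs_nonneg _) Bp.le, div_rpow (abs_nonneg _) (by positivity)]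
    ring
  have j1 := i1.const_mul (A / (A + B) / A ^ q)
  have j2 := i2.const_mul (B / (A + B) / B ^ q)
  have j0 := i0.const_mul (1 / (A + B) ^ q)
  have Fi : Integrable F := by rw [Fe]; exact (j1.add j2).sub j0
  have FI : ∫ x, F x ≤ 0 := by
    have e : ∫ x, F x = (A / (A + B) / A ^ q) * QQ N q (fun x => u₀ x - HH (u₀ x)) +
        (B / (A + B) / B ^ q) * QQ N q (fun x => HH (u₀ x)) - (1 / (A + B) ^ q) * QQ N q u₀ := by
      rw [QQ_eq_int hq hu.1.1, QQ_eq_int hq hv.1.1, QQ_eq_int hq hw.1.1, Fe]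
      refine (integral_sub (j1.add j2) j0).trans ?_
      rw [integral_const_mul]
      congr 1
      refine (integral_add j1 j2).trans ?_
      rw [integral_const_mul, integral_const_mul]
    rw [e, ← Aq, ← Bq, div_mul_cancel₀ _ (by positivity), div_mul_cancel₀ _ (by positivity), ← add_div, div_self (by positivity),
      one_div, inv_mul_eq_div, sub_nonpos, one_le_div Cp]
    exact Cq
  have Fz := (integral_eq_zero_iff_of_nonneg F0 Fi).1 (le_antisymm FI (integral_nonneg F0))
  refine ⟨2 * (2 * (B / (A + B)) - 1) / (1 - (2 * (B / (A + B)) - 1) ^ 2), ?_⟩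
  · filter_upwards [Fz] with x hx
    rw [hF] at hx
    simp only [Pi.zero_apply] at hx
    have h2 := (pw_convex hq1 Ap Bp (abs_nonneg (u₀ x - HH (u₀ x))) (abs_nonneg (HH (u₀ x)))).2
    rw [(HH_split (u₀ x)).1] at h2
    have h3 := (HH_split (u₀ x)).2.2.2 _ (h2 (by linarith))
    exact HH_lin (by positivity) (by rw [div_lt_one (by positivity)]; linarith) h3

/-- any maximizer of `D_α` is (a.e.) a multiple of a
characteristic function of a ball, with the stated constraint on the coefficient. -/
theorem Dalpha_maximizer_form (N : ℕ) (hN : 2 ≤ N) (q : ℝ) (hq1 : 1 < q)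
    (hq2 : q ≤ (N : ℝ) / ((N : ℝ) - 1)) (α a b : ℝ) (hα : 0 < α) (ha : 0 < a)
    (hb : 0 < b) (u₀ : Euc N → ℝ) (hu₀ : MemBV N u₀)
    (hcon : tv N u₀ ^ a + nrm1 N u₀ ^ b = 1)
    (hmax : nrm1 N u₀ + α * nrmq N q u₀ ^ q =
      sSup { r | ∃ u : Euc N → ℝ, MemBV N u ∧ tv N u ^ a + nrm1 N u ^ b = 1 ∧
        r = nrm1 N u + α * nrmq N q u ^ q }) :
    ∃ lam : ℝ, lam ≠ 0 ∧ ∃ R : ℝ, 0 < R ∧ ∃ x₀ : Euc N,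
      u₀ =ᵐ[volume] (Metric.ball x₀ R).indicator (fun _ => lam) ∧
      (|lam| * R ^ (N-1) * omegaS N) ^ a + (|lam| * R ^ N * omegaS N / N) ^ b = 1 := by
  have hq : 0 < q := by linarith
  obtain ⟨hs, ht, hC⟩ := main_cmp hN hq1 hα ha hb hu₀ hcon hmax
  have hth := theta_le hN hq2
  obtain ⟨lam, hl⟩ := two_valued hN hq1 hth hu₀ hs ht hC
  have z : ¬ (u₀ =ᵐ[volume] 0) := fun h => by
    rw [tv_of_zero hu₀ h] at ht; exact lt_irrefl _ ht
  have lam0 : lam ≠ 0 := by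
    intro h
    apply z
    filter_upwards [hl] with x hx
    rcases hx with hx | hx
    · exact hx
    · rw [hx, h]; rfl
  obtain ⟨g, hg, hgu⟩ := hu₀.1.1
  obtain ⟨A, hA⟩ : ∃ A : Set (Euc N), A = g ⁻¹' {lam} := ⟨_, rfl⟩
  have mA : MeasurableSet A := by
    rw [hA]; exact hg.measurable (measurableSet_singleton _)
  have uA : u₀ =ᵐ[volume] fun x => lam * chi A x := by
    filter_upwards [hl, hgu] with x hx hgx
    by_cases h : x ∈ A
    · have : g x = lam := by rw [hA] at h; exact h
      simp [chi, h, hgx, this]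
    · have : g x ≠ lam := by rw [hA] at h; exact h
      rw [← hgx] at this
      simp only [chi, h, not_false_eq_true, Set.indicator_of_notMem, mul_zero]
      exact hx.resolve_right this
  have Au : (fun x => lam⁻¹ * u₀ x) =ᵐ[volume] chi A := by
    filter_upwards [uA] with x hx
    rw [hx, inv_mul_cancel_left₀ lam0]
  have bA : MemBV N (chi A) := (memBV_const_mul hu₀ lam⁻¹).congr Au
  have tA : tv N u₀ = |lam| * tv N (chi A) := by
    rw [tv_congr uA, tv_const_mul bA lam0]
  have lp : 0 < |lam| := abs_pos.2 lam0
  have QA : ∀ p : ℝ, 0 < p → QQ N p u₀ = |lam| ^ p * (volume A).toReal := by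
    intro p hp
    rw [QQ_eq_int hp hu₀.1.1, ← QQ_chi hp mA, QQ_eq_int hp bA.1.1, ← integral_const_mul]
    refine integral_congr_ae ?_
    filter_upwards [uA] with x hx
    rw [hx, abs_mul, mul_rpow (abs_nonneg _) (abs_nonneg _)]
  have sA : nrm1 N u₀ = |lam| * (volume A).toReal := by
    rw [nrm1_QQ, QA 1 one_pos, rpow_one]
  have Vp : 0 < (volume A).toReal := by
    rw [sA] at hs
    exact pos_of_mul_pos_right hs lp.le
  have Vt : volume A ≠ ⊤ := fun h => by simp [h] at Vp
  have V0 : volume A ≠ 0 := fun h => by simp [h] at Vp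
  have bp := beta_pos N
  have hN0 : N ≠ 0 := by omega
  have NR : (0 : ℝ) < N := by positivity
  obtain ⟨R, hR⟩ : ∃ R : ℝ, R = ((volume A).toReal / beta N) ^ (N : ℝ)⁻¹ := ⟨_, rfl⟩
  have Rp : 0 < R := by rw [hR]; positivity
  have RN : R ^ N * beta N = (volume A).toReal := by
    rw [hR, rpow_inv_natCast_pow (by positivity) hN0]; field_simp
  have hV : volume A = ENNReal.ofReal (R ^ N * beta N) := by
    rw [RN, ENNReal.ofReal_toReal Vt]
  obtain ⟨B1, B2⟩ := ball_tv_pos hN Rp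
  have cb := hC _ (ball_BV Rp) B1 B2
  have vb : (volume (Metric.ball (0 : Euc N) R)).toReal = (volume A).toReal := by
    rw [ball_vol _ Rp, hV]
  rw [QA q hq, sA, tA, nrm1_QQ, QQ_chi hq Metric.isOpen_ball.measurableSet,
    QQ_chi one_pos Metric.isOpen_ball.measurableSet, vb, mul_div_cancel_right₀ _ Vp.ne', mul_div_assoc,
    mul_rpow lp.le (div_nonneg (tv_nonneg bA) B2.le), ← mul_assoc (|lam| ^ _), ← rpow_add lp,
    sub_add_cancel, mul_comm (|lam| ^ q) (volume A).toReal, ← mul_assoc] at cb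
  have c2 : (tv N (chi A) / tv N (chi (Metric.ball (0 : Euc N) R))) ^ ((q - 1) * (N : ℝ)) ≤ 1 := by
    have : 0 < (volume A).toReal * |lam| ^ q := by positivity
    exact le_of_mul_le_mul_left (by rwa [mul_one]) this
  have th0 : 0 < (q - 1) * (N : ℝ) := mul_pos (by linarith) NR
  have c3 : tv N (chi A) ≤ tv N (chi (Metric.ball (0 : Euc N) R)) := by
    by_contra h
    push Not at h
    have := one_lt_rpow ((one_lt_div B2).2 h) th0
    linarith
  have c4 := c3.trans (ball_tv_le Rp)
  obtain ⟨x₀, hx⟩ := rigidity hN mA Rp hV bA c4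
  have c5 := iso mA V0 Vt bA
  have e5 : (beta N / (volume A).toReal) ^ (N : ℝ)⁻¹ = R⁻¹ := by
    rw [hR, ← inv_rpow (by positivity), inv_div]
  rw [e5] at c5
  have e6 : tv N (chi A) = N / R * (R ^ N * beta N) := by
    refine le_antisymm c4 (le_trans (le_of_eq ?_) c5)
    rw [RN]; ring
  refine ⟨lam, lam0, R, Rp, x₀, ?_, ?_⟩
  · have hi := indicator_ae_eq_of_ae_eq_set (f := fun _ : Euc N => lam) hx
    refine uA.trans (EventuallyEq.trans (Eventually.of_forall fun x => ?_) hi)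
    by_cases h : x ∈ A <;> simp [chi, h]
  · rw [← hcon, tA, sA, e6, ← RN]
    have ho : omegaS N = N * beta N := rfl
    rw [ho]
    have hp : R ^ N = R ^ (N - 1) * R := by rw [← pow_succ]; congr 1; omega
    congr 2
    · rw [hp]; field_simp
    · field_simp
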